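/- arXiv:1408.5764 — 2 statements merged into one kernel-verified Lean document; each statement's English description precedes it below -/
import Mathlib

section
/- (Super Cartier isomorphism, evaluated form.) Let k be a perfect field of characteristic p > 2 and V = V₀ ⊕ V₁ a finite-dimensional superspace with fixed homogeneous bases {v₁,…,v_s} of V₀ and {y₁,…,y_t} of V₁. Then there is a unique map θ: Ω(V) → Ω(V) which is additive, Frobenius-semilinear (θ(λz) = λ^p·θ(z) for λ ∈ k), multiplicative (θ(zw) = θ(z)θ(w) and θ(1) = 1), and satisfies θ(v_i⊗1) = v_i^p⊗1, θ(1⊗v_i) = v_i^{p−1}⊗v_i, θ(y_j⊗1) = y_j⊗γ_{p−1}(y_j), and θ(1⊗γ_{p^e}(y_j)) = 1⊗γ_{p^{e+1}}(y_j) for all i, j and all e ≥ 0. Moreover θ takes values in ker(d), and the induced map Ω(V) → H^•(Ω(V),d) := ker(d)/im(d) is bijective; for every n ≥ 0 it maps Ω_n(V) bijectively onto H^•(Ω_{pn}(V),d), and H^•(Ω_m(V),d) = 0 whenever p does not divide m. -/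
open Finset

set_option synthInstance.maxHeartbeats 1000000
set_option maxHeartbeats 4000000

namespace Stmt8

variable (k : Type) [Field k] (s t : ℕ)

/-- index of a monomial `x^a · u^b ⊗ x^c · γ^e` of `Ω(V) = 𝐒(V) ⊗ 𝐀(V)`, for
`V = V₀ ⊕ V₁` with basis `x₁, …, x_s` of `V₀` and `y₁, …, y_t` of `V₁`: here `a` records the
exponents of the `xᵢ ⊗ 1` (in `S(V₀)`), `b` records which `yⱼ ⊗ 1` occur (in `Λ(V₁)`),
`c` records which `1 ⊗ xᵢ` occur (in `Λ(V₀)`) and `e` records the divided powers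
`1 ⊗ γ_{eⱼ}(yⱼ)` (in `Γ(V₁)`) -/
abbrev Mon : Type := (Fin s → ℕ) × (Fin t → Bool) × (Fin s → Bool) × (Fin t → ℕ)

/-- the superspace `Ω(V) = 𝐒(V) ⊗ 𝐀(V) = (S(V₀) ⊗ Λ(V₁)) ⊗ (Λ(V₀) ⊗ Γ(V₁))`, modelled on
its basis of monomials -/
def Omega : Type := Mon s t →₀ k

noncomputable instance : AddCommGroup (Omega k s t) :=
  inferInstanceAs (AddCommGroup (Mon s t →₀ k))

noncomputable instance : Module k (Omega k s t) :=
  inferInstanceAs (Module k (Mon s t →₀ k))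

/-- the number of `true` values of a Boolean vector -/
def cnt {u : ℕ} (b : Fin u → Bool) : ℕ := (univ.filter fun i => b i = true).card

/-- the cohomological degree of a monomial: the degree of its `𝐀(V)`-part -/
def cdeg (m : Mon s t) : ℕ := cnt m.2.2.1 + ∑ j, m.2.2.2 j

/-- the total degree of a monomial -/
def tdeg (m : Mon s t) : ℕ := ((∑ i, m.1 i) + cnt m.2.1) + cdeg s t m

/-- the parity (number of odd tensor factors) of the `𝐒(V)`-part of a monomial -/
def parS (m : Mon s t) : ℕ := cnt m.2.1

/-- the parity (number of odd tensor factors) of the `𝐀(V)`-part of a monomial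
(`1 ⊗ xᵢ` is even since `xᵢ ∈ V₀`, and `γ_{eⱼ}(yⱼ)` has parity `eⱼ`) -/
def parA (m : Mon s t) : ℕ := ∑ j, m.2.2.2 j

/-- the merge of two monomial indices -/
def merge (m₁ m₂ : Mon s t) : Mon s t :=
  (m₁.1 + m₂.1, fun j => m₁.2.1 j || m₂.2.1 j, fun i => m₁.2.2.1 i || m₂.2.2.1 i,
    m₁.2.2.2 + m₂.2.2.2)

/-- the number of `(i, i')` with `i` occurring in `b`, `i'` occurring in `b'` and `i' < i`:
the Koszul sign for merging two increasing exterior monomials is `(-1)` to this count -/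
def invCount {u : ℕ} (b b' : Fin u → Bool) : ℕ :=
  ((univ ×ˢ univ).filter fun q : Fin u × Fin u =>
    b q.1 = true ∧ b' q.2 = true ∧ q.2 < q.1).card

/-- the structure constant for the product of two monomials of `Ω(V)`: it vanishes if an odd
exterior generator is repeated, and otherwise consists of the Koszul sign
`(-1)^{|𝐀-part of m₁|·|𝐒-part of m₂|}` from the definition of the product of
`Ω(V) = 𝐒(V) ⊗ 𝐀(V)`, exterior reordering signs in `Λ(V₁)` and `Λ(V₀)`, the sign
`(-1)^{deg·deg}` for moving the `Γ(V₁)`-part of `m₁` past the `Λ(V₀)`-part of `m₂` in the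
degree-twisted product of `𝐀(V) = Λ(V₀) ⊗ᵍ Γ(V₁)`, and divided-power binomial
coefficients -/
def mulCoef (m₁ m₂ : Mon s t) : k :=
  if (∃ j, m₁.2.1 j = true ∧ m₂.2.1 j = true) ∨
      (∃ i, m₁.2.2.1 i = true ∧ m₂.2.2.1 i = true) then 0
  else
    (-1 : k) ^ (parA s t m₁ * parS s t m₂ + invCount m₁.2.1 m₂.2.1 +
        invCount m₁.2.2.1 m₂.2.2.1 + parA s t m₁ * cnt m₂.2.2.1) *
      ∏ j, ((m₁.2.2.2 j + m₂.2.2.2 j).choose (m₁.2.2.2 j) : k)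

/-- the multiplication of `Ω(V)` -/
noncomputable def mulOmega (x y : Omega k s t) : Omega k s t :=
  x.sum fun m₁ c₁ => y.sum fun m₂ c₂ =>
    Finsupp.single (merge s t m₁ m₂) (c₁ * c₂ * mulCoef k s t m₁ m₂)

noncomputable instance : Mul (Omega k s t) := ⟨mulOmega k s t⟩

/-- the unit monomial -/
def unitMon : Mon s t := (0, fun _ => false, fun _ => false, 0)

noncomputable instance : One (Omega k s t) := ⟨Finsupp.single (unitMon s t) 1⟩

/-- the bigraded piece `Ω_n^i(V) = 𝐒^{n-i}(V) ⊗ 𝐀^i(V)` (total degree `n`, cohomological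
degree `i`) -/
noncomputable def OmegaNI (n i : ℕ) : Submodule k (Omega k s t) :=
  Finsupp.supported k k {m | tdeg s t m = n ∧ cdeg s t m = i}

/-- the total-degree-`n` piece `Ω_n(V)` -/
noncomputable def OmegaTot (n : ℕ) : Submodule k (Omega k s t) :=
  Finsupp.supported k k {m | tdeg s t m = n}

/-- the cohomological-degree-`i` piece `Ω^i(V)` -/
noncomputable def OmegaCoh (i : ℕ) : Submodule k (Omega k s t) :=
  Finsupp.supported k k {m | cdeg s t m = i}

/-- the subspace `1 ⊗ 𝐀(V)` of `Ω(V)` -/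
noncomputable def Apart : Submodule k (Omega k s t) :=
  Finsupp.supported k k {m | m.1 = 0 ∧ m.2.1 = fun _ => false}

/-- the subspace `𝐒(V) ⊗ 1` of `Ω(V)` -/
noncomputable def Spart : Submodule k (Omega k s t) :=
  Finsupp.supported k k {m | m.2.2.1 = (fun _ => false) ∧ m.2.2.2 = 0}

/-- the monomial `xᵢ ⊗ 1` -/
def XS (i : Fin s) : Mon s t := (Pi.single i 1, fun _ => false, fun _ => false, 0)

/-- the monomial `yⱼ ⊗ 1` -/
def US (j : Fin t) : Mon s t := (0, fun j' => decide (j' = j), fun _ => false, 0)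

/-- the monomial `1 ⊗ xᵢ` -/
def XA (i : Fin s) : Mon s t := (0, fun _ => false, fun i' => decide (i' = i), 0)

/-- the monomial `1 ⊗ γ_e(yⱼ)` -/
def GA (j : Fin t) (e : ℕ) : Mon s t := (0, fun _ => false, fun _ => false, Pi.single j e)

/-- the element `v ⊗ 1` of `Ω(V)`, for `v ∈ V` with even coordinates `v0` and odd
coordinates `v1` -/
noncomputable def vS (v0 : Fin s → k) (v1 : Fin t → k) : Omega k s t :=
  (∑ i, Finsupp.single (XS s t i) (v0 i)) + ∑ j, Finsupp.single (US s t j) (v1 j)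

/-- the element `1 ⊗ v` of `Ω(V)` -/
noncomputable def vA (v0 : Fin s → k) (v1 : Fin t → k) : Omega k s t :=
  (∑ i, Finsupp.single (XA s t i) (v0 i)) + ∑ j, Finsupp.single (GA s t j 1) (v1 j)

/-- the element `1 ⊗ γ_N(y)` of `Ω(V)` for an arbitrary odd vector `y` with coordinates `w`:
`γ_N(∑ wⱼ yⱼ) = ∑_{e, ∑e = N} (∏ wⱼ^{eⱼ}) γ^e(y)` -/
noncomputable def gammaA (w : Fin t → k) (N : ℕ) : Omega k s t :=
  ∑ e ∈ Finset.Nat.antidiagonalTuple t N,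
    Finsupp.single ((0, fun _ => false, fun _ => false, e) : Mon s t) (∏ j, w j ^ e j)

/-- the de Rham differential `d` of `Ω(V)`: the unique `k`-linear map of cohomological
degree `+1` with `d(v ⊗ 1) = 1 ⊗ v`, `d(1 ⊗ a) = 0`, satisfying the Leibniz rule; it
preserves total degree and squares to zero -/
def IsDeRham (dd : Omega k s t →ₗ[k] Omega k s t) : Prop :=
  (∀ n i : ℕ, ∀ x ∈ OmegaNI k s t n i, dd x ∈ OmegaNI k s t n (i + 1)) ∧
  (∀ v0 v1, dd (vS k s t v0 v1) = vA k s t v0 v1) ∧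
  (∀ x ∈ Apart k s t, dd x = 0) ∧
  (∀ (i : ℕ) (z : Omega k s t), z ∈ OmegaCoh k s t i →
    ∀ w, dd (z * w) = dd z * w + ((-1 : k) ^ i) • (z * dd w)) ∧
  (∀ x, dd (dd x) = 0)

/-- the Koszul differential `κ` of `Ω(V)`: the unique `k`-linear map of cohomological
degree `-1` with `κ(s ⊗ 1) = 0`, `κ(1 ⊗ v) = v ⊗ 1` for `v ∈ V₀`,
`κ(1 ⊗ γ_N(y)) = (y ⊗ 1)·(1 ⊗ γ_{N-1}(y))` for `y ∈ V₁`, satisfying the Leibniz rule; it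
preserves total degree and squares to zero -/
def IsKoszul (κ : Omega k s t →ₗ[k] Omega k s t) : Prop :=
  (∀ n i : ℕ, ∀ x ∈ OmegaNI k s t n (i + 1), κ x ∈ OmegaNI k s t n i) ∧
  (∀ n : ℕ, ∀ x ∈ OmegaNI k s t n 0, κ x = 0) ∧
  (∀ x ∈ Spart k s t, κ x = 0) ∧
  (∀ v0 : Fin s → k, κ (vA k s t v0 0) = vS k s t v0 0) ∧
  (∀ (w : Fin t → k) (N : ℕ), 1 ≤ N →
    κ (gammaA k s t w N) = vS k s t 0 w * gammaA k s t w (N - 1)) ∧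
  (∀ (i : ℕ) (z : Omega k s t), z ∈ OmegaCoh k s t i →
    ∀ y, κ (z * y) = κ z * y + ((-1 : k) ^ i) • (z * κ y)) ∧
  (∀ x, κ (κ x) = 0)


variable (p : ℕ)

/-- the defining properties of the map `θ` of the super Cartier isomorphism: it is additive,
Frobenius-semilinear, multiplicative, and takes the prescribed values on the generators
`xᵢ ⊗ 1`, `1 ⊗ xᵢ`, `yⱼ ⊗ 1` and `1 ⊗ γ_{p^e}(yⱼ)` -/
def IsTheta (θ : Omega k s t → Omega k s t) : Prop :=
  (∀ z w, θ (z + w) = θ z + θ w) ∧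
  (∀ (c : k) (z : Omega k s t), θ (c • z) = (c ^ p) • θ z) ∧
  (∀ z w, θ (z * w) = θ z * θ w) ∧
  (θ 1 = 1) ∧
  -- θ(xᵢ ⊗ 1) = xᵢ^p ⊗ 1
  (∀ i : Fin s, θ (Finsupp.single (XS s t i) 1) =
    Finsupp.single ((Pi.single i p, fun _ => false, fun _ => false, 0) : Mon s t) 1) ∧
  -- θ(1 ⊗ xᵢ) = xᵢ^{p-1} ⊗ xᵢ
  (∀ i : Fin s, θ (Finsupp.single (XA s t i) 1) =
    Finsupp.single
      ((Pi.single i (p - 1), fun _ => false, fun i' => decide (i' = i), 0) : Mon s t) 1) ∧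
  -- θ(yⱼ ⊗ 1) = yⱼ ⊗ γ_{p-1}(yⱼ)
  (∀ j : Fin t, θ (Finsupp.single (US s t j) 1) =
    Finsupp.single
      ((0, fun j' => decide (j' = j), fun _ => false, Pi.single j (p - 1)) : Mon s t) 1) ∧
  -- θ(1 ⊗ γ_{p^e}(yⱼ)) = 1 ⊗ γ_{p^{e+1}}(yⱼ)
  (∀ (j : Fin t) (e : ℕ), θ (Finsupp.single (GA s t j (p ^ e)) 1) =
    Finsupp.single (GA s t j (p ^ (e + 1))) 1)

section Helpers

variable {k : Type} [Field k] {s t : ℕ}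

/-- basis monomial -/
noncomputable def mon (m : Mon s t) : Omega k s t := Finsupp.single m (1 : k)

/-- identification with finitely supported functions -/
def toF : Omega k s t ≃ₗ[k] (Mon s t →₀ k) where
  toFun x := x
  invFun x := x
  map_add' _ _ := rfl
  map_smul' _ _ := rfl
  left_inv _ := rfl
  right_inv _ := rfl

lemma single_eq (m : Mon s t) (c : k) :
    (Finsupp.single m c : Omega k s t) = c • (mon m : Omega k s t) := by
  apply (toF (k := k) (s := s) (t := t)).injective
  rw [map_smul]
  change Finsupp.single m c = c • Finsupp.single m (1 : k)
  simp

lemma omega_ind {P : Omega k s t → Prop} (h0 : P 0) (hadd : ∀ z w, P z → P w → P (z + w))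
    (hs : ∀ (c : k) m, P (c • mon m)) : ∀ z, P z := by
  intro z
  refine Finsupp.induction_linear (motive := P) z h0 hadd ?_
  intro m c
  have := hs c m
  rwa [← single_eq] at this

/-- linear map given on monomials -/
noncomputable def lin (f : Mon s t → Omega k s t) : Omega k s t →ₗ[k] Omega k s t :=
  (Finsupp.linearCombination k f).comp (toF (k := k) (s := s) (t := t)).toLinearMap

@[simp] lemma lin_mon (f : Mon s t → Omega k s t) (m : Mon s t) : lin f (mon m) = f m := by
  change Finsupp.linearCombination k f (Finsupp.single m 1) = f m
  simp

lemma lin_ext {M : Type*} [AddCommGroup M] [Module k M] {f g : Omega k s t →ₗ[k] M}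
    (h : ∀ m, f (mon m) = g (mon m)) : ∀ z, f z = g z := by
  refine omega_ind (by simp) ?_ ?_
  · intro z w hz hw; simp [hz, hw]
  · intro c m; simp [h]

/-- multiplication as a bilinear map -/
noncomputable def mulB : Omega k s t →ₗ[k] Omega k s t →ₗ[k] Omega k s t :=
  (Finsupp.linearCombination k (fun m₁ : Mon s t =>
    lin (fun m₂ => mulCoef k s t m₁ m₂ • (mon (merge s t m₁ m₂) : Omega k s t)))).comp
      (toF (k := k) (s := s) (t := t)).toLinearMap

lemma mul_eq (z w : Omega k s t) : z * w = mulB z w := by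
  change mulOmega k s t z w = _
  unfold mulOmega mulB
  rw [LinearMap.comp_apply]
  change _ = (Finsupp.linearCombination k (M := Omega k s t →ₗ[k] Omega k s t) _ (toF z)) w
  rw [Finsupp.linearCombination_apply]
  simp only [Finsupp.sum]
  rw [LinearMap.sum_apply]
  refine Finset.sum_congr rfl fun m₁ _ => ?_
  rw [LinearMap.smul_apply]
  unfold lin
  rw [LinearMap.comp_apply]
  change _ = _ • Finsupp.linearCombination k _ (toF w)
  rw [Finsupp.linearCombination_apply]
  simp only [Finsupp.sum]
  rw [Finset.smul_sum]
  refine Finset.sum_congr rfl fun m₂ _ => ?_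
  rw [single_eq, smul_smul, smul_smul]
  rfl

lemma mon_mul_mon (m₁ m₂ : Mon s t) :
    (mon m₁ * mon m₂ : Omega k s t) = mulCoef k s t m₁ m₂ • mon (merge s t m₁ m₂) := by
  rw [mul_eq]
  unfold mulB
  rw [LinearMap.comp_apply]
  change (Finsupp.linearCombination k (M := Omega k s t →ₗ[k] Omega k s t) _
    (Finsupp.single m₁ 1)) (mon m₂) = _
  rw [Finsupp.linearCombination_single]
  simp

lemma o_mul_add (x y z : Omega k s t) : x * (y + z) = x * y + x * z := by simp [mul_eq]
lemma o_add_mul (x y z : Omega k s t) : (x + y) * z = x * z + y * z := by simp [mul_eq]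
lemma o_mul_smul (c : k) (y z : Omega k s t) : y * (c • z) = c • (y * z) := by simp [mul_eq]
lemma o_smul_mul (c : k) (y z : Omega k s t) : (c • y) * z = c • (y * z) := by simp [mul_eq]
lemma o_mul_zero (x : Omega k s t) : x * 0 = 0 := by simp [mul_eq]
lemma o_zero_mul (x : Omega k s t) : 0 * x = 0 := by simp [mul_eq]
lemma o_mul_neg (x y : Omega k s t) : x * (-y) = -(x * y) := by simp [mul_eq]
lemma o_neg_mul (x y : Omega k s t) : (-x) * y = -(x * y) := by simp [mul_eq]

lemma one_eq : (1 : Omega k s t) = mon (unitMon s t) := rfl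

/-- sign of the number of true entries -/
def sg {u : ℕ} (b : Fin u → Bool) : k := ∏ i, if b i = true then -1 else 1

/-- sign of the number of true entries to the left -/
def sl {u : ℕ} (j : Fin u) (b : Fin u → Bool) : k :=
  ∏ i, if b i = true ∧ i < j then -1 else 1

lemma negone_card {ι : Type*} (S : Finset ι) (P : ι → Prop) [DecidablePred P] :
    ((-1 : k)) ^ (S.filter P).card = ∏ i ∈ S, if P i then (-1 : k) else 1 := by
  rw [Finset.prod_ite]; simp

lemma sg_eq {u : ℕ} (b : Fin u → Bool) : (-1 : k) ^ cnt b = sg b := by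
  unfold cnt sg; rw [negone_card]

lemma sl_eq {u : ℕ} (j : Fin u) (b : Fin u → Bool) :
    (-1 : k) ^ invCount (fun j' => decide (j' = j)) b = sl j b := by
  unfold invCount sl
  rw [negone_card, Finset.prod_product]
  rw [Finset.prod_eq_single j]
  · simp
  · intro i _ hi
    simp [hi]
  · simp

lemma inv_zero {u : ℕ} (b : Fin u → Bool) : invCount (fun _ => false) b = 0 := by
  simp [invCount]

lemma sg_sq {u : ℕ} (b : Fin u → Bool) : (sg b * sg b : k) = 1 := by
  rw [← sg_eq, ← mul_pow]; simp

lemma sl_sq {u : ℕ} (j : Fin u) (b : Fin u → Bool) : (sl j b * sl j b : k) = 1 := by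
  rw [← sl_eq, ← mul_pow]; simp

lemma sg_true {u : ℕ} (b : Fin u → Bool) (i : Fin u) (h : b i = false) :
    (sg (Function.update b i true) : k) = - sg b := by
  unfold sg
  rw [← Finset.mul_prod_erase _ _ (Finset.mem_univ i),
    ← Finset.mul_prod_erase _ (fun x => if b x = true then (-1 : k) else 1) (Finset.mem_univ i)]
  simp only [Function.update_self, h]
  rw [Finset.prod_congr rfl (g := fun x => if b x = true then (-1 : k) else 1)]
  · simp
  · intro x hx
    rw [Function.update_of_ne (Finset.ne_of_mem_erase hx)]

lemma sl_true {u : ℕ} (j : Fin u) (b : Fin u → Bool) (i : Fin u) (h : b i = false) :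
    (sl j (Function.update b i true) : k) = (if i < j then -1 else 1) * sl j b := by
  unfold sl
  rw [← Finset.mul_prod_erase _ _ (Finset.mem_univ i),
    ← Finset.mul_prod_erase _ (fun x => if b x = true ∧ x < j then (-1 : k) else 1)
      (Finset.mem_univ i)]
  simp only [Function.update_self, h]
  rw [Finset.prod_congr rfl (g := fun x => if b x = true ∧ x < j then (-1 : k) else 1)]
  · simp
  · intro x hx
    rw [Function.update_of_ne (Finset.ne_of_mem_erase hx)]

lemma upd_ft {u : ℕ} (b : Fin u → Bool) (i : Fin u) (h : b i = true) :
    Function.update (Function.update b i false) i true = b := by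
  simp [← h]

lemma upd_tf {u : ℕ} (b : Fin u → Bool) (i : Fin u) (h : b i = false) :
    Function.update (Function.update b i true) i false = b := by
  simp [← h]

lemma sg_false {u : ℕ} (b : Fin u → Bool) (i : Fin u) (h : b i = true) :
    (sg (Function.update b i false) : k) = - sg b := by
  have := sg_true (k := k) (Function.update b i false) i (by simp)
  rw [upd_ft b i h] at this
  rw [this]; simp

lemma sl_false {u : ℕ} (j : Fin u) (b : Fin u → Bool) (i : Fin u) (h : b i = true) :
    (sl j (Function.update b i false) : k) = (if i < j then -1 else 1) * sl j b := by
  have := sl_true (k := k) j (Function.update b i false) i (by simp)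
  rw [upd_ft b i h] at this
  rw [this]; split_ifs <;> simp

lemma or_upd {u : ℕ} (b : Fin u → Bool) (i : Fin u) :
    (fun j => decide (j = i) || b j) = Function.update b i true := by
  funext j
  by_cases h : j = i
  · subst h; simp
  · simp [h]

lemma single_add_upd {u : ℕ} (a : Fin u → ℕ) (i : Fin u) (n : ℕ) :
    Pi.single i n + a = Function.update a i (a i + n) := by
  funext j
  by_cases h : j = i
  · subst h; simp [add_comm]
  · simp [h]

lemma XS_mul (i : Fin s) (a : Fin s → ℕ) (b : Fin t → Bool) (c : Fin s → Bool) (e : Fin t → ℕ) :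
    (mon (XS s t i) * mon (a, b, c, e) : Omega k s t) =
      mon (Function.update a i (a i + 1), b, c, e) := by
  rw [mon_mul_mon]
  have h1 : mulCoef k s t (XS s t i) (a, b, c, e) = 1 := by
    simp [mulCoef, XS, inv_zero, parA]
  have h2 : merge s t (XS s t i) (a, b, c, e) = (Function.update a i (a i + 1), b, c, e) := by
    simp [merge, XS, single_add_upd]
  rw [h1, h2, one_smul]

lemma US_mul (j : Fin t) (a : Fin s → ℕ) (b : Fin t → Bool) (c : Fin s → Bool) (e : Fin t → ℕ) :
    (mon (US s t j) * mon (a, b, c, e) : Omega k s t) =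
      if b j = true then 0 else
      (sl j b : k) • mon (a, Function.update b j true, c, e) := by
  rw [mon_mul_mon]
  have h2 : merge s t (US s t j) (a, b, c, e) = (a, Function.update b j true, c, e) := by
    simp [merge, US, or_upd]
  rw [h2]
  split_ifs with h
  · have h1 : mulCoef k s t (US s t j) (a, b, c, e) = 0 := by
      simp [mulCoef, US, inv_zero, parA, h]
    simp [h1]
  · have h1 : mulCoef k s t (US s t j) (a, b, c, e) = sl j b := by
      simp [mulCoef, US, inv_zero, parA, h, sl_eq]
    rw [h1]

lemma XA_mul (i : Fin s) (a : Fin s → ℕ) (b : Fin t → Bool) (c : Fin s → Bool) (e : Fin t → ℕ) :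
    (mon (XA s t i) * mon (a, b, c, e) : Omega k s t) =
      if c i = true then 0 else
      (sl i c : k) • mon (a, b, Function.update c i true, e) := by
  rw [mon_mul_mon]
  have h2 : merge s t (XA s t i) (a, b, c, e) = (a, b, Function.update c i true, e) := by
    simp [merge, XA, or_upd]
  rw [h2]
  split_ifs with h
  · have h1 : mulCoef k s t (XA s t i) (a, b, c, e) = 0 := by
      simp [mulCoef, XA, inv_zero, parA, h]
    simp [h1]
  · have h1 : mulCoef k s t (XA s t i) (a, b, c, e) = sl i c := by
      simp [mulCoef, XA, inv_zero, parA, h, sl_eq]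
    rw [h1]

lemma GA_mul (j : Fin t) (n : ℕ) (a : Fin s → ℕ) (b : Fin t → Bool) (c : Fin s → Bool)
    (e : Fin t → ℕ) :
    (mon (GA s t j n) * mon (a, b, c, e) : Omega k s t) =
      ((sg b * sg c) ^ n * ((e j + n).choose n : k)) •
        mon (a, b, c, Function.update e j (e j + n)) := by
  rw [mon_mul_mon]
  have h2 : merge s t (GA s t j n) (a, b, c, e) = (a, b, c, Function.update e j (e j + n)) := by
    simp [merge, GA, single_add_upd]
  rw [h2]
  have h3 : ∏ x, (((Pi.single j n : Fin t → ℕ) x + e x).choose ((Pi.single j n : Fin t → ℕ) x) : k)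
      = ((e j + n).choose n : k) := by
    rw [Finset.prod_eq_single j]
    · simp [add_comm]
    · intro x _ hx; simp [hx]
    · simp
  have h1 : mulCoef k s t (GA s t j n) (a, b, c, e) =
      (sg b * sg c) ^ n * ((e j + n).choose n : k) := by
    simp only [mulCoef, GA, inv_zero, parA, parS]
    rw [h3]
    simp [← sg_eq]
    left
    rw [← pow_add, ← pow_mul]; ring_nf
  rw [h1]
/-- contraction in the direction of an even variable -/
noncomputable def Hx (i : Fin s) : Omega k s t →ₗ[k] Omega k s t :=
  lin fun m => if m.2.2.1 i = true then
    (sl i m.2.2.1 : k) • mon (Function.update m.1 i (m.1 i + 1), m.2.1,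
      Function.update m.2.2.1 i false, m.2.2.2) else 0

/-- contraction in the direction of an odd variable -/
noncomputable def Hy (j : Fin t) : Omega k s t →ₗ[k] Omega k s t :=
  lin fun m => if m.2.1 j = true ∨ m.2.2.2 j = 0 then 0 else
    (sg m.2.2.1 * sg m.2.1 * sl j m.2.1 : k) • mon (m.1, Function.update m.2.1 j true,
      m.2.2.1, Function.update m.2.2.2 j (m.2.2.2 j - 1))

lemma Hx_mon (i : Fin s) (a : Fin s → ℕ) (b : Fin t → Bool) (c : Fin s → Bool) (e : Fin t → ℕ) :
    (Hx i (mon (a, b, c, e)) : Omega k s t) = if c i = true then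
    (sl i c : k) • mon (Function.update a i (a i + 1), b, Function.update c i false, e) else 0 := by
  unfold Hx; rw [lin_mon]

lemma Hy_mon (j : Fin t) (a : Fin s → ℕ) (b : Fin t → Bool) (c : Fin s → Bool) (e : Fin t → ℕ) :
    (Hy j (mon (a, b, c, e)) : Omega k s t) = if b j = true ∨ e j = 0 then 0 else
    (sg c * sg b * sl j b : k) • mon (a, Function.update b j true,
      c, Function.update e j (e j - 1)) := by
  unfold Hy; rw [lin_mon]

/-- left multiplication -/
noncomputable def L (z : Omega k s t) : Omega k s t →ₗ[k] Omega k s t := mulB z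
lemma L_apply (z w : Omega k s t) : L z w = z * w := (mul_eq z w).symm

lemma Hx_XS (i i' : Fin s) (w : Omega k s t) :
    Hx i (mon (XS s t i') * w) = mon (XS s t i') * Hx i w := by
  simp only [← L_apply]
  refine lin_ext (f := (Hx i).comp (L (mon (XS s t i')))) (g := (L (mon (XS s t i'))).comp (Hx i))
    ?_ w
  rintro ⟨a, b, c, e⟩
  simp only [LinearMap.comp_apply, L_apply, XS_mul, Hx_mon]
  split_ifs with h
  · rw [o_mul_smul, XS_mul]
    by_cases hi : i = i'
    · subst hi; simp
    · rw [Function.update_comm hi, Function.update_of_ne hi, Function.update_of_ne (Ne.symm hi)]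
  · rw [o_mul_zero]

lemma Hx_US (i : Fin s) (j : Fin t) (w : Omega k s t) :
    Hx i (mon (US s t j) * w) = mon (US s t j) * Hx i w := by
  simp only [← L_apply]
  refine lin_ext (f := (Hx i).comp (L (mon (US s t j)))) (g := (L (mon (US s t j))).comp (Hx i))
    ?_ w
  rintro ⟨a, b, c, e⟩
  simp only [LinearMap.comp_apply, L_apply, US_mul, Hx_mon]
  split_ifs with h h' <;> simp [o_mul_smul, o_mul_zero, US_mul, Hx_mon, h, *]
  rw [smul_comm]

lemma Hx_XA (i i' : Fin s) (w : Omega k s t) :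
    Hx i (mon (XA s t i') * w) = (if i = i' then mon (XS s t i') * w else 0)
      - mon (XA s t i') * Hx i w := by
  simp only [← L_apply]
  refine lin_ext (f := (Hx i).comp (L (mon (XA s t i'))))
    (g := (if i = i' then L (mon (XS s t i')) else 0) - (L (mon (XA s t i'))).comp (Hx i))
    ?_ w |>.trans (by split_ifs <;> rfl)
  rintro ⟨a, b, c, e⟩
  rw [LinearMap.sub_apply]
  simp only [LinearMap.comp_apply, L_apply, XA_mul, Hx_mon]
  by_cases hi : i = i'
  · subst hi
    rw [if_pos rfl, L_apply, XS_mul]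
    by_cases h : c i = true
    · simp only [h, if_true, map_zero, o_mul_smul, XA_mul, Function.update_self]
      rw [if_neg (by simp), sl_false _ _ _ h, upd_ft _ _ h, smul_smul]
      simp [sl_sq]
    · have h' : c i = false := by simpa using h
      rw [if_neg h, if_neg h, o_mul_zero, map_smul, Hx_mon, if_pos (by simp)]
      rw [sl_true _ _ _ h', upd_tf _ _ h', smul_smul]
      simp [sl_sq]
  · rw [if_neg hi]
    by_cases h : c i = true
    · by_cases h2 : c i' = true
      · simp [h, h2, o_mul_smul, XA_mul, Function.update_of_ne (Ne.symm hi)]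
      · have h' : c i' = false := by simpa using h2
        rw [if_neg h2, if_pos h, map_smul, Hx_mon, o_mul_smul, XA_mul,
          if_pos (by rwa [Function.update_of_ne hi]),
          if_neg (by rwa [Function.update_of_ne (Ne.symm hi)]),
          Function.update_comm hi, smul_smul, smul_smul,
          sl_true _ _ _ h', sl_false _ _ _ h, LinearMap.zero_apply, zero_sub, ← neg_smul]
        congr 1
        rcases lt_or_gt_of_ne hi with h3 | h3
        · simp [h3, not_lt_of_gt h3]; ring
        · simp [h3, not_lt_of_gt h3]; ring
    · by_cases h2 : c i' = true
      · simp [h, h2, o_mul_zero]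
      · simp [h, h2, o_mul_zero, Hx_mon, Function.update_of_ne hi]

lemma Hx_GA (i : Fin s) (j : Fin t) (w : Omega k s t) :
    Hx i (mon (GA s t j 1) * w) = - (mon (GA s t j 1) * Hx i w) := by
  simp only [← L_apply]
  refine lin_ext (f := (Hx i).comp (L (mon (GA s t j 1))))
    (g := - (L (mon (GA s t j 1))).comp (Hx i)) ?_ w
  rintro ⟨a, b, c, e⟩
  rw [LinearMap.neg_apply]
  simp only [LinearMap.comp_apply, L_apply, GA_mul, Hx_mon, map_smul]
  split_ifs with h
  · rw [o_mul_smul, GA_mul, sg_false _ _ h, smul_smul, smul_smul, ← neg_smul]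
    congr 1; ring
  · simp [o_mul_zero]

lemma Hy_XS (j : Fin t) (i' : Fin s) (w : Omega k s t) :
    Hy j (mon (XS s t i') * w) = mon (XS s t i') * Hy j w := by
  simp only [← L_apply]
  refine lin_ext (f := (Hy j).comp (L (mon (XS s t i')))) (g := (L (mon (XS s t i'))).comp (Hy j))
    ?_ w
  rintro ⟨a, b, c, e⟩
  simp only [LinearMap.comp_apply, L_apply, XS_mul, Hy_mon]
  split_ifs with h
  · rw [o_mul_zero]
  · rw [o_mul_smul, XS_mul]

lemma Hy_US (j j' : Fin t) (w : Omega k s t) :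
    Hy j (mon (US s t j') * w) = mon (US s t j') * Hy j w := by
  simp only [← L_apply]
  refine lin_ext (f := (Hy j).comp (L (mon (US s t j')))) (g := (L (mon (US s t j'))).comp (Hy j))
    ?_ w
  rintro ⟨a, b, c, e⟩
  simp only [LinearMap.comp_apply, L_apply, US_mul, Hy_mon]
  by_cases he : e j = 0
  · by_cases h2 : b j' = true
    · simp [he, h2, o_mul_zero]
    · simp [he, h2, o_mul_zero, Hy_mon]
  by_cases hi : j = j'
  · subst hi
    by_cases h : b j = true
    · simp [h, o_mul_zero]
    · simp [h, he, o_mul_smul, US_mul, Hy_mon]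
  · by_cases h : b j = true
    · by_cases h2 : b j' = true
      · simp [h, h2, o_mul_zero]
      · simp [h, h2, o_mul_zero, Hy_mon, Function.update_of_ne hi]
    · have h' : b j = false := by simpa using h
      by_cases h2 : b j' = true
      · simp [h, h2, he, o_mul_smul, US_mul, Function.update_of_ne (Ne.symm hi)]
      · have h2' : b j' = false := by simpa using h2
        rw [if_neg h2, if_neg (by simp [h, he]), map_smul, Hy_mon,
          if_neg (by simp [Function.update_of_ne hi, h, he]), o_mul_smul, US_mul,
          if_neg (by rwa [Function.update_of_ne (Ne.symm hi)])]
        rw [Function.update_comm hi, smul_smul, smul_smul,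
          sl_true _ _ _ h', sl_true _ _ _ h2', sg_true _ _ h2']
        congr 1
        rcases lt_or_gt_of_ne hi with h3 | h3
        · simp [h3, not_lt_of_gt h3]; ring
        · simp [h3, not_lt_of_gt h3]; ring

lemma Hy_XA (j : Fin t) (i : Fin s) (w : Omega k s t) :
    Hy j (mon (XA s t i) * w) = - (mon (XA s t i) * Hy j w) := by
  simp only [← L_apply]
  refine lin_ext (f := (Hy j).comp (L (mon (XA s t i)))) (g := -(L (mon (XA s t i))).comp (Hy j))
    ?_ w
  rintro ⟨a, b, c, e⟩
  rw [LinearMap.neg_apply]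
  simp only [LinearMap.comp_apply, L_apply, XA_mul, Hy_mon]
  by_cases h2 : c i = true
  · split_ifs <;> simp [o_mul_zero, o_mul_smul, XA_mul, h2]
  · have h2' : c i = false := by simpa using h2
    split_ifs with h
    · simp [o_mul_zero, Hy_mon, h]
    · rw [map_smul, Hy_mon, if_neg h, o_mul_smul, XA_mul, if_neg h2, sg_true _ _ h2',
        smul_smul, smul_smul, ← neg_smul]
      congr 1; ring

lemma Hy_GA (j j' : Fin t) (w : Omega k s t) :
    Hy j (mon (GA s t j' 1) * w) = (if j = j' then mon (US s t j') * w else 0)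
      - mon (GA s t j' 1) * Hy j w := by
  simp only [← L_apply]
  refine lin_ext (f := (Hy j).comp (L (mon (GA s t j' 1))))
    (g := (if j = j' then L (mon (US s t j')) else 0) - (L (mon (GA s t j' 1))).comp (Hy j))
    ?_ w |>.trans (by split_ifs <;> rfl)
  rintro ⟨a, b, c, e⟩
  rw [LinearMap.sub_apply]
  simp only [LinearMap.comp_apply, L_apply, GA_mul, Hy_mon, map_smul]
  by_cases h : b j = true
  · by_cases hi : j = j'
    · subst hi
      rw [if_pos rfl, L_apply, US_mul]
      simp [h, o_mul_zero]
    · simp [h, hi, o_mul_zero]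
  have h' : b j = false := by simpa using h
  by_cases hi : j = j'
  · subst hi
    rw [if_pos rfl, L_apply, US_mul, if_neg h]
    rw [if_neg (by simp [h])]
    have hsq : (sg b * sg b : k) = 1 := sg_sq b
    have hsq' : (sg c * sg c : k) = 1 := sg_sq c
    by_cases he : e j = 0
    · rw [if_pos (Or.inr he), o_mul_zero, smul_smul]
      simp [he]
      rw [← he, Function.update_eq_self]
      congr 1
      linear_combination sl j b * hsq' * (sg b * sg b) + sl j b * hsq
    · obtain ⟨n, hn⟩ := Nat.exists_eq_succ_of_ne_zero he
      rw [if_neg (by simp [h, he]), o_mul_smul, GA_mul, smul_smul, smul_smul, sg_true _ _ h']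
      simp [hn]
      have hn' : Function.update e j (n + 1) = e := by
        rw [← Nat.succ_eq_add_one, ← hn, Function.update_eq_self]
      rw [hn', ← add_smul]
      congr 1
      linear_combination sl j b * hsq' * (sg b * sg b) + sl j b * hsq
  · rw [if_neg hi, LinearMap.zero_apply, zero_sub, Function.update_of_ne hi]
    split_ifs with h3
    · simp [o_mul_zero]
    · rw [o_mul_smul, GA_mul, Function.update_of_ne (Ne.symm hi), smul_smul, smul_smul,
        Function.update_comm hi, sg_true _ _ h', ← neg_smul]
      congr 1; ring
lemma mon_mem_coh (m : Mon s t) : (mon m : Omega k s t) ∈ OmegaCoh k s t (cdeg s t m) := by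
  unfold OmegaCoh mon
  exact Finsupp.single_mem_supported k (1 : k) (by simp)

lemma vS_x (i : Fin s) : vS k s t (Pi.single i 1) 0 = mon (XS s t i) := by
  have h : ∑ x, Finsupp.single (XS s t x) ((Pi.single i 1 : Fin s → k) x) =
      Finsupp.single (XS s t i) (1 : k) := by
    rw [Finset.sum_eq_single i]
    · simp
    · intro b _ hb; simp [hb]
    · simp
  unfold vS mon
  rw [h]
  simp
  rfl

lemma vA_x (i : Fin s) : vA k s t (Pi.single i 1) 0 = mon (XA s t i) := by
  have h : ∑ x, Finsupp.single (XA s t x) ((Pi.single i 1 : Fin s → k) x) =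
      Finsupp.single (XA s t i) (1 : k) := by
    rw [Finset.sum_eq_single i]
    · simp
    · intro b _ hb; simp [hb]
    · simp
  unfold vA mon
  rw [h]
  simp
  rfl

lemma vS_y (i : Fin t) : vS k s t 0 (Pi.single i 1) = mon (US s t i) := by
  have h : ∑ x, Finsupp.single (US s t x) ((Pi.single i 1 : Fin t → k) x) =
      Finsupp.single (US s t i) (1 : k) := by
    rw [Finset.sum_eq_single i]
    · simp
    · intro b _ hb; simp [hb]
    · simp
  unfold vS mon
  rw [h]
  simp
  rfl

lemma vA_y (i : Fin t) : vA k s t 0 (Pi.single i 1) = mon (GA s t i 1) := by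
  have h : ∑ x, Finsupp.single (GA s t x 1) ((Pi.single i 1 : Fin t → k) x) =
      Finsupp.single (GA s t i 1) (1 : k) := by
    rw [Finset.sum_eq_single i]
    · simp
    · intro b _ hb; simp [hb]
    · simp
  unfold vA mon
  rw [h]
  simp
  rfl

lemma cnt_false {u : ℕ} : cnt (fun _ : Fin u => false) = 0 := by simp [cnt]

section deRham

variable {d : Omega k s t →ₗ[k] Omega k s t}

lemma d_mon_mul (hd : IsDeRham k s t d) (m : Mon s t) (w : Omega k s t) :
    d (mon m * w) = d (mon m) * w + ((-1 : k) ^ cdeg s t m) • (mon m * d w) :=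
  hd.2.2.2.1 _ _ (mon_mem_coh m) w

lemma d_A (hd : IsDeRham k s t d) (c : Fin s → Bool) (e : Fin t → ℕ) :
    d (mon ((0 : Fin s → ℕ), (fun _ => false), c, e)) = 0 := by
  apply hd.2.2.1
  unfold Apart mon
  exact Finsupp.single_mem_supported k (1 : k) (by simp)

lemma d_XS_mul (hd : IsDeRham k s t d) (i : Fin s) (w : Omega k s t) :
    d (mon (XS s t i) * w) = mon (XA s t i) * w + mon (XS s t i) * d w := by
  rw [d_mon_mul hd, ← vS_x, hd.2.1, vA_x]
  simp [cdeg, XS, cnt_false]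

lemma d_US_mul (hd : IsDeRham k s t d) (j : Fin t) (w : Omega k s t) :
    d (mon (US s t j) * w) = mon (GA s t j 1) * w + mon (US s t j) * d w := by
  rw [d_mon_mul hd, ← vS_y, hd.2.1, vA_y]
  simp [cdeg, US, cnt_false]

lemma dd (hd : IsDeRham k s t d) (w : Omega k s t) : d (d w) = 0 := hd.2.2.2.2 w

end deRham

lemma fun_ind {u : ℕ} {α : Type} (z : α) {P : (Fin u → α) → Prop} (h0 : P fun _ => z)
    (hs : ∀ f i x, f i = z → P f → P (Function.update f i x)) : ∀ f, P f := by
  classical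
  intro f
  have : ∀ S : Finset (Fin u), P (fun i => if i ∈ S then f i else z) := by
    intro S
    induction S using Finset.induction_on with
    | empty => simpa using h0
    | insert a S ha ih =>
      have := hs _ a (f a) (by simp [ha]) ih
      convert this using 1
      funext i
      by_cases hi : i = a
      · subst hi; simp
      · simp [hi]
  simpa using this univ

lemma bool_ind {u : ℕ} {P : (Fin u → Bool) → Prop} (h0 : P fun _ => false)
    (hs : ∀ f i, f i = false → P f → P (Function.update f i true)) : ∀ f, P f := by
  refine fun_ind false h0 ?_
  intro f i x hf hP
  cases x
  · rwa [← hf, Function.update_eq_self]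
  · exact hs f i hf hP

lemma nat_ind {u : ℕ} {P : (Fin u → ℕ) → Prop} (h0 : P 0)
    (hs : ∀ f i, P f → P (Function.update f i (f i + 1))) : ∀ f, P f := by
  refine fun_ind 0 h0 ?_
  intro f i x hf hP
  induction x with
  | zero => rwa [← hf, Function.update_eq_self]
  | succ n ih =>
    have := hs _ i ih
    simpa using this

/-- induction over monomials, peeling off the symmetric part -/
lemma mon_ind {P : Mon s t → Prop} (h0 : ∀ c e, P (0, (fun _ => false), c, e))
    (hx : ∀ a b c e i, P (a, b, c, e) → P (Function.update a i (a i + 1), b, c, e))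
    (hy : ∀ a b c e j, b j = false → P (a, b, c, e) → P (a, Function.update b j true, c, e)) :
    ∀ m, P m := by
  rintro ⟨a, b, c, e⟩
  revert a
  refine nat_ind ?_ (fun f i h => hx _ _ _ _ _ h)
  revert b
  exact bool_ind (h0 c e) (fun f i hf h => hy _ _ _ _ _ hf h)

/-- weight of an even variable -/
def wx (i : Fin s) (m : Mon s t) : ℕ := m.1 i + if m.2.2.1 i = true then 1 else 0
/-- weight of an odd variable -/
def wy (j : Fin t) (m : Mon s t) : ℕ := m.2.2.2 j + if m.2.1 j = true then 1 else 0

section deRham2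

variable {d : Omega k s t →ₗ[k] Omega k s t}

lemma mon_true (hd : IsDeRham k s t d) (a : Fin s → ℕ) (b : Fin t → Bool) (c : Fin s → Bool) (e : Fin t → ℕ) (j : Fin t)
    (h : b j = false) : (mon (a, Function.update b j true, c, e) : Omega k s t) =
      (sl j b : k) • (mon (US s t j) * mon (a, b, c, e)) := by
  rw [US_mul, if_neg (by simp [h]), smul_smul, sl_sq, one_smul]

lemma Kx (hd : IsDeRham k s t d) (i : Fin s) (m : Mon s t) :
    d (Hx i (mon m)) + Hx i (d (mon m)) = (wx i m : k) • mon m := by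
  revert m
  refine mon_ind ?_ ?_ ?_
  · intro c e
    rw [d_A hd, map_zero, add_zero, Hx_mon]
    split_ifs with h
    · rw [← XS_mul, map_smul, d_XS_mul hd, d_A hd, o_mul_zero, add_zero, XA_mul]
      rw [if_neg (by simp), smul_smul, sl_false _ _ _ h, upd_ft _ _ h]
      simp [sl_sq, wx, h]
    · simp [wx, h]
  · intro a b c e i' ih
    rw [← XS_mul, Hx_XS, d_XS_mul hd, d_XS_mul hd, map_add, Hx_XS, Hx_XA]
    have h2 := congrArg (fun z => mon (XS s t i') * z) ih
    simp only [o_mul_add, o_mul_smul] at h2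
    have h3 : (wx i (Function.update a i' (a i' + 1), b, c, e) : k) =
        (wx i (a, b, c, e) : k) + if i = i' then 1 else 0 := by
      by_cases h : i = i'
      · subst h; simp [wx]; ring
      · simp [wx, h]
    rw [XS_mul] at *
    rw [h3, add_smul, ← h2]
    by_cases h : i = i'
    · simp [h]; abel
    · simp [h]; abel
  · intro a b c e j hj ih
    rw [mon_true hd _ _ _ _ _ hj]
    simp only [map_smul]
    rw [← smul_add, smul_comm]
    congr 1
    rw [Hx_US, d_US_mul hd, d_US_mul hd, map_add, Hx_US, Hx_GA]
    have h2 := congrArg (fun z => mon (US s t j) * z) ih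
    simp only [o_mul_add, o_mul_smul] at h2
    have h3 : wx i (a, Function.update b j true, c, e) = wx i (a, b, c, e) := rfl
    rw [h3, ← h2]
    abel

lemma Ky (hd : IsDeRham k s t d) (j : Fin t) (m : Mon s t) :
    d (Hy j (mon m)) + Hy j (d (mon m)) = (wy j m : k) • mon m := by
  revert m
  refine mon_ind ?_ ?_ ?_
  · intro c e
    rw [d_A hd, map_zero, add_zero, Hy_mon]
    by_cases he : e j = 0
    · simp [wy, he]
    · rw [if_neg (by simp [he])]
      obtain ⟨n, hn⟩ := Nat.exists_eq_succ_of_ne_zero he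
      have hn' : Function.update e j (n + 1) = e := by
        rw [← Nat.succ_eq_add_one, ← hn, Function.update_eq_self]
      rw [mon_true hd _ _ _ _ _ rfl, map_smul, map_smul, d_US_mul hd, d_A hd, o_mul_zero,
        add_zero, GA_mul, smul_smul, smul_smul]
      simp [hn, hn', wy]
      congr 1
      have h1 := sg_sq (k := k) (fun _ : Fin t => false)
      have h2 := sg_sq (k := k) c
      have h3 := sl_sq (k := k) j (fun _ : Fin t => false)
      generalize (sg (fun _ : Fin t => false) : k) = A at *
      generalize (sg c : k) = B at *
      generalize (sl j (fun _ : Fin t => false) : k) = C at *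
      linear_combination (n + 1 : k) * (B * B * C * C * h1 + C * C * h2 + h3)
  · intro a b c e i' ih
    rw [← XS_mul, Hy_XS, d_XS_mul hd, d_XS_mul hd, map_add, Hy_XS, Hy_XA]
    have h2 := congrArg (fun z => mon (XS s t i') * z) ih
    simp only [o_mul_add, o_mul_smul] at h2
    have h3 : wy j (Function.update a i' (a i' + 1), b, c, e) = wy j (a, b, c, e) := rfl
    rw [h3, ← h2]
    abel
  · intro a b c e j' hj ih
    rw [mon_true hd _ _ _ _ _ hj]
    simp only [map_smul]
    rw [← smul_add, smul_comm]
    congr 1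
    rw [Hy_US, d_US_mul hd, d_US_mul hd, map_add, Hy_US, Hy_GA]
    have h2 := congrArg (fun z => mon (US s t j') * z) ih
    simp only [o_mul_add, o_mul_smul] at h2
    have h3 : (wy j (a, Function.update b j' true, c, e) : k) =
        (wy j (a, b, c, e) : k) + if j = j' then 1 else 0 := by
      by_cases h : j = j'
      · subst h; simp [wy, hj]
      · simp [wy, h]
    rw [h3, add_smul, ← h2]
    by_cases h : j = j'
    · simp [h]; abel
    · simp [h]; abel

end deRham2
/-- the index map of the Cartier map -/
def Fm (p : ℕ) (m : Mon s t) : Mon s t :=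
  (fun i => p * m.1 i + (if m.2.2.1 i = true then p - 1 else 0), m.2.1, m.2.2.1,
    fun j => p * m.2.2.2 j + (if m.2.1 j = true then p - 1 else 0))

lemma Fm_inj {p : ℕ} (hp : 0 < p) : Function.Injective (Fm p : Mon s t → Mon s t) := by
  rintro ⟨a, b, c, e⟩ ⟨a', b', c', e'⟩ h
  simp only [Fm, Prod.mk.injEq] at h
  obtain ⟨h1, h2, h3, h4⟩ := h
  subst h2; subst h3
  have : a = a' := by
    funext i
    have := congrFun h1 i
    simp at this
    omega
  subst this
  have : e = e' := by
    funext i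
    have := congrFun h4 i
    simp at this
    omega
  subst this
  rfl

lemma cnt_sum {u : ℕ} (b : Fin u → Bool) : cnt b = ∑ i, if b i = true then 1 else 0 := by
  unfold cnt; rw [Finset.card_filter]

lemma tdeg_Fm {p : ℕ} (hp : 0 < p) (m : Mon s t) : tdeg s t (Fm p m) = p * tdeg s t m := by
  obtain ⟨q, rfl⟩ : ∃ q, p = q + 1 := ⟨p - 1, by omega⟩
  obtain ⟨a, b, c, e⟩ := m
  have h : ∀ (u : ℕ) (b : Fin u → Bool), (∑ i, if b i = true then q else 0) = q * cnt b := by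
    intro u b
    rw [cnt_sum, Finset.mul_sum]; simp
  simp only [tdeg, cdeg, Fm, Finset.sum_add_distrib, ← Finset.mul_sum, Nat.add_sub_cancel, h]
  ring

lemma mem_range_Fm {p : ℕ} (hp : 0 < p) (m : Mon s t) (hx : ∀ i, p ∣ wx i m)
    (hy : ∀ j, p ∣ wy j m) : ∃ m', Fm p m' = m := by
  obtain ⟨a, b, c, e⟩ := m
  refine ⟨(fun i => a i / p, b, c, fun j => e j / p), ?_⟩
  have key : ∀ (x : ℕ) (β : Bool), p ∣ x + (if β = true then 1 else 0) →
      p * (x / p) + (if β = true then p - 1 else 0) = x := by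
    intro x β h
    cases β
    · simp at h ⊢; exact Nat.mul_div_cancel' h
    · simp at h ⊢
      obtain ⟨q, hq⟩ := h
      obtain ⟨q', rfl⟩ : ∃ q', q = q' + 1 := ⟨q - 1, by rcases q with _ | q <;> simp_all⟩
      have hx : x = (p - 1) + p * q' := by
        have : p * (q' + 1) = p * q' + p := by ring
        omega
      rw [hx, Nat.add_mul_div_left _ _ hp, Nat.div_eq_of_lt (by omega)]
      simp; ring
  simp only [Fm, Prod.mk.injEq, true_and]
  exact ⟨funext fun i => key _ _ (hx i), funext fun j => key _ _ (hy j)⟩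

lemma wx_Fm {p : ℕ} (hp : 0 < p) (m : Mon s t) (i : Fin s) : p ∣ wx i (Fm p m) := by
  simp only [wx, Fm]
  by_cases h : m.2.2.1 i = true
  · exact ⟨m.1 i + 1, by simp only [mul_add, h, if_true]; omega⟩
  · simp [h]

lemma wy_Fm {p : ℕ} (hp : 0 < p) (m : Mon s t) (i : Fin t) : p ∣ wy i (Fm p m) := by
  simp only [wy, Fm]
  by_cases h : m.2.1 i = true
  · exact ⟨m.2.2.2 i + 1, by simp only [mul_add, h, if_true]; omega⟩
  · simp [h]

section Frob

variable {p : ℕ} [hpf : Fact p.Prime] [CharP k p]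

lemma cast_pow_p (n : ℕ) : (n : k) ^ p = n := by
  have := map_natCast (frobenius k p) n
  rwa [frobenius_def] at this

/-- the Cartier map -/
noncomputable def th (p : ℕ) [Fact p.Prime] [CharP k p] (z : Omega k s t) : Omega k s t :=
  Finsupp.mapDomain (Fm p) (Finsupp.mapRange (fun c : k => c ^ p)
    (zero_pow (Fact.out : p.Prime).ne_zero) (toF z))

lemma th_add (z w : Omega k s t) : th p (z + w) = th p z + th p w := by
  unfold th
  rw [map_add, Finsupp.mapRange_add, Finsupp.mapDomain_add]
  · rfl
  · intro x y
    exact add_pow_char x y p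

lemma th_smul_mon (c : k) (m : Mon s t) : th p (c • (mon m : Omega k s t)) = (c ^ p) • mon (Fm p m) := by
  rw [← single_eq, ← single_eq]
  change Finsupp.mapDomain _ (Finsupp.mapRange _ _ (Finsupp.single m c)) = _
  rw [Finsupp.mapRange_single, Finsupp.mapDomain_single]

lemma th_mon (m : Mon s t) : (th p (mon m) : Omega k s t) = mon (Fm p m) := by
  have := th_smul_mon (p := p) (1 : k) m
  simpa using this

lemma th_zero : th p (0 : Omega k s t) = 0 := by
  have := th_add (p := p) (0 : Omega k s t) 0
  simpa using this

lemma th_smul (c : k) (z : Omega k s t) : th p (c • z) = (c ^ p) • th p z := by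
  revert z
  refine omega_ind ?_ ?_ ?_
  · simp [th_zero]
  · intro z w hz hw; simp [th_add, hz, hw]
  · intro c' m; rw [smul_smul, th_smul_mon, th_smul_mon, smul_smul, mul_pow]

lemma th_coeff (z : Omega k s t) (m : Mon s t) : toF (th p z) (Fm p m) = (toF z m) ^ p := by
  have := Finsupp.mapDomain_apply (Fm_inj (s := s) (t := t) (p := p) hpf.out.pos)
    (Finsupp.mapRange (fun c : k => c ^ p) (zero_pow (Fact.out : p.Prime).ne_zero) (toF z)) m
  rw [Finsupp.mapRange_apply] at this
  exact this

lemma choose_Fm (e₁ e₂ : ℕ) (x y : Bool) (h : ¬ (x = true ∧ y = true)) :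
    (((p * e₁ + (if x = true then p - 1 else 0)) +
      (p * e₂ + (if y = true then p - 1 else 0))).choose
        (p * e₁ + (if x = true then p - 1 else 0)) : k) = ((e₁ + e₂).choose e₁ : k) := by
  have hp := hpf.out.two_le
  rw [CharP.cast_eq_iff_mod_eq k p]
  refine (Choose.choose_modEq_choose_mod_mul_choose_div_nat (p := p)).trans ?_
  have h1 : ∀ e : ℕ, (p * e + (p - 1)) / p = e := by
    intro e
    rw [Nat.mul_add_div (by omega), Nat.div_eq_of_lt (by omega)]; simp
  have h2 : ∀ e : ℕ, (p * e + (p - 1)) % p = p - 1 := by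
    intro e
    rw [Nat.mul_add_mod, Nat.mod_eq_of_lt (by omega)]
  have h3 : p * e₁ + (p - 1) + p * e₂ = p * (e₁ + e₂) + (p - 1) := by ring
  have h4 : p * e₁ + (p * e₂ + (p - 1)) = p * (e₁ + e₂) + (p - 1) := by ring
  cases x <;> cases y
  · simp [← mul_add, show 0 < p by omega]; rfl
  · simp [h4, h1, h2, show 0 < p by omega]; rfl
  · simp [h3, h1, h2, show 0 < p by omega]; rfl
  · simp at h

lemma parA_Fm (hp2 : 2 < p) (m : Mon s t) :
    (-1 : k) ^ parA s t (Fm p m) = (-1) ^ parA s t m := by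
  have ho : Odd p := hpf.out.odd_of_ne_two (by omega)
  unfold parA
  rw [← Finset.prod_pow_eq_pow_sum, ← Finset.prod_pow_eq_pow_sum]
  refine Finset.prod_congr rfl fun j _ => ?_
  simp only [Fm]
  rw [pow_add, pow_mul, ho.neg_one_pow]
  split_ifs
  · rw [(hpf.out.even_sub_one (by omega)).neg_one_pow, mul_one]
  · simp

lemma th_mul_mon (hp2 : 2 < p) (m₁ m₂ : Mon s t) :
    (th p (mon m₁ * mon m₂) : Omega k s t) = th p (mon m₁) * th p (mon m₂) := by
  have ho : Odd p := hpf.out.odd_of_ne_two (by omega)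
  rw [mon_mul_mon, th_smul_mon, th_mon, th_mon, mon_mul_mon]
  by_cases h : (∃ j, m₁.2.1 j = true ∧ m₂.2.1 j = true) ∨
      (∃ i, m₁.2.2.1 i = true ∧ m₂.2.2.1 i = true)
  · have h1 : mulCoef k s t m₁ m₂ = 0 := by unfold mulCoef; rw [if_pos h]
    have h2 : mulCoef k s t (Fm p m₁) (Fm p m₂) = 0 := by
      unfold mulCoef; rw [if_pos (by simpa [Fm] using h)]
    rw [h1, h2, zero_pow hpf.out.ne_zero, zero_smul, zero_smul]
  · have hb : ∀ j, ¬ (m₁.2.1 j = true ∧ m₂.2.1 j = true) := fun j hj => h (Or.inl ⟨j, hj⟩)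
    have hc : ∀ j, ¬ (m₁.2.2.1 j = true ∧ m₂.2.2.1 j = true) := fun j hj => h (Or.inr ⟨j, hj⟩)
    have hm : Fm p (merge s t m₁ m₂) = merge s t (Fm p m₁) (Fm p m₂) := by
      simp only [Fm, merge, Prod.mk.injEq, true_and]
      constructor
      · funext i
        have := hc i
        revert this
        simp only [Pi.add_apply, mul_add]
        rcases Bool.eq_false_or_eq_true (m₁.2.2.1 i) with h1 | h1 <;>
          rcases Bool.eq_false_or_eq_true (m₂.2.2.1 i) with h2 | h2 <;> simp [h1, h2] <;> omega
      · funext i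
        have := hb i
        revert this
        simp only [Pi.add_apply, mul_add]
        rcases Bool.eq_false_or_eq_true (m₁.2.1 i) with h1 | h1 <;>
          rcases Bool.eq_false_or_eq_true (m₂.2.1 i) with h2 | h2 <;> simp [h1, h2] <;> omega
    rw [hm]
    congr 1
    unfold mulCoef
    rw [if_neg h, if_neg (by simpa [Fm] using h), mul_pow, ← Finset.prod_pow]
    congr 1
    · rw [← pow_mul, mul_comm _ p, pow_mul, ho.neg_one_pow]
      simp only [pow_add, pow_mul, parA_Fm hp2]
      rfl
    · refine Finset.prod_congr rfl fun j _ => ?_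
      rw [cast_pow_p]
      simp only [Fm]
      rw [choose_Fm _ _ _ _ (hb j)]

lemma th_mul (hp2 : 2 < p) (z w : Omega k s t) : th p (z * w) = th p z * th p w := by
  revert z
  refine omega_ind ?_ ?_ ?_
  · simp [o_zero_mul, th_zero]
  · intro z z' h h'; simp only [o_add_mul, th_add, h, h']
  · intro c m
    revert w
    refine omega_ind ?_ ?_ ?_
    · simp [o_mul_zero, th_zero]
    · intro z z' h h'; simp only [o_mul_add, th_add, h, h']
    · intro c' m'
      simp only [o_mul_smul, o_smul_mul, th_smul, th_mul_mon hp2]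

lemma isTheta_th (hp2 : 2 < p) : IsTheta k s t p (th p) := by
  have ext4 : ∀ (a a' : Fin s → ℕ) (b : Fin t → Bool) (c : Fin s → Bool) (e e' : Fin t → ℕ),
      a = a' → e = e' → (mon (a, b, c, e) : Omega k s t) = mon (a', b, c, e') := by
    intro a a' b c e e' h h'; rw [h, h']
  refine ⟨th_add, th_smul, th_mul hp2, ?_, ?_, ?_, ?_, ?_⟩
  · rw [one_eq, th_mon]
    simp [Fm, unitMon]; rfl
  · intro i
    refine (th_mon _).trans (ext4 _ _ _ _ _ _ ?_ ?_)
    · funext x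
      by_cases h : x = i
      · subst h; simp [XS]
      · simp [XS, h]
    · funext x; simp [XS]
  · intro i
    refine (th_mon _).trans (ext4 _ _ _ _ _ _ ?_ ?_)
    · funext x
      by_cases h : x = i
      · subst h; simp [XA]
      · simp [XA, h]
    · funext x; simp [XA]
  · intro i
    refine (th_mon _).trans (ext4 _ _ _ _ _ _ ?_ ?_)
    · funext x; simp [US]
    · funext x
      by_cases h : x = i
      · subst h; simp [US]
      · simp [US, h]
  · intro i e
    refine (th_mon _).trans (ext4 _ _ _ _ _ _ ?_ ?_)
    · funext x; simp [GA]
    · funext x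
      by_cases h : x = i
      · subst h; simp [GA, pow_succ, mul_comm]
      · simp [GA, h]

end Frob

lemma gen_ind1 {P : Omega k s t → Prop} (h1 : P 1) (hs : ∀ (c : k) z, P z → P (c • z))
    (hXS : ∀ i z, P z → P (mon (XS s t i) * z)) (hUS : ∀ i z, P z → P (mon (US s t i) * z))
    (hXA : ∀ i z, P z → P (mon (XA s t i) * z))
    (hGA : ∀ i n z, P z → P (mon (GA s t i n) * z)) : ∀ m, P (mon m) := by
  refine mon_ind ?_ ?_ ?_
  · intro c e
    revert c
    refine bool_ind ?_ ?_
    · revert e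
      refine fun_ind 0 h1 ?_
      intro f j n hf h
      have h2 := hs ((sg (fun _ : Fin t => false) * sg (fun _ : Fin s => false)) ^ n : k) _
        (hGA j n _ h)
      rw [GA_mul, smul_smul, ← mul_assoc, ← mul_pow] at h2
      have h3 : (sg (fun _ : Fin t => false) * sg (fun _ : Fin s => false)) *
        (sg (fun _ : Fin t => false) * sg (fun _ : Fin s => false)) = (1 : k) := by
        simp [sg]
      rw [h3] at h2
      simpa [hf] using h2
    · intro c i hc h
      have h2 := hs (sl i c : k) _ (hXA i _ h)
      rw [XA_mul, if_neg (by simp [hc]), smul_smul, sl_sq, one_smul] at h2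
      exact h2
  · intro a b c e i h
    have h2 := hXS i _ h
    rwa [XS_mul] at h2
  · intro a b c e j hb h
    have h2 := hs (sl j b : k) _ (hUS j _ h)
    rw [US_mul, if_neg (by simp [hb]), smul_smul, sl_sq, one_smul] at h2
    exact h2

lemma GA_GA (j : Fin t) (n m : ℕ) : (mon (GA s t j n) * mon (GA s t j m) : Omega k s t) =
    ((m + n).choose n : k) • mon (GA s t j (m + n)) := by
  have : mon (GA s t j m) =
    (mon ((0 : Fin s → ℕ), (fun _ => false), (fun _ => false), Pi.single j m) : Omega k s t) := rfl
  rw [this, GA_mul]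
  simp [sg, GA, Pi.single]

lemma exists_choose {p : ℕ} (hp : p.Prime) (n : ℕ) (hn : 0 < n) :
    (∃ e, n = p ^ e) ∨ ∃ a, 0 < a ∧ a < n ∧ ¬ p ∣ n.choose a := by
  haveI : Fact p.Prime := ⟨hp⟩
  induction n using Nat.strong_induction_on with
  | _ n ih =>
    by_cases h : p ∣ n
    · obtain ⟨m, rfl⟩ := h
      have hm : 0 < m := Nat.pos_of_mul_pos_left hn
      rcases ih m (by nlinarith [hp.two_le]) hm with ⟨e, rfl⟩ | ⟨a, ha, ham, hd⟩
      · exact Or.inl ⟨e + 1, by rw [pow_succ]; ring⟩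
      · right
        refine ⟨p * a, Nat.mul_pos hp.pos ha, Nat.mul_lt_mul_of_pos_left ham hp.pos, ?_⟩
        have := Choose.choose_modEq_choose_mod_mul_choose_div_nat (p := p) (n := p * m) (k := p * a)
        simp [hp.pos] at this
        rwa [this.dvd_iff dvd_rfl]
    · by_cases h1 : n = 1
      · exact Or.inl ⟨0, by simpa using h1⟩
      · right
        exact ⟨1, by omega, by omega, by simpa using h⟩

lemma gen_ind2 {p : ℕ} [hpf : Fact p.Prime] [CharP k p] {P : Omega k s t → Prop} (h1 : P 1)
    (hs : ∀ (c : k) z, P z → P (c • z)) (hm : ∀ z w, P z → P w → P (z * w))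
    (hXS : ∀ i, P (mon (XS s t i))) (hUS : ∀ i, P (mon (US s t i)))
    (hXA : ∀ i, P (mon (XA s t i)))
    (hGA : ∀ i e, P (mon (GA s t i (p ^ e)))) : ∀ m, P (mon m) := by
  have hG : ∀ j n, P (mon (GA s t j n)) := by
    intro j n
    induction n using Nat.strong_induction_on with
    | _ n ih =>
      rcases Nat.eq_zero_or_pos n with rfl | hn
      · have : (1 : Omega k s t) = mon (GA s t j 0) := by
          rw [one_eq]; simp [GA, unitMon]
        rwa [← this]
      · rcases exists_choose hpf.out n hn with ⟨e, rfl⟩ | ⟨a, ha, han, hd⟩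
        · exact hGA j e
        · have h2 := hs (((n.choose a : ℕ) : k)⁻¹) _ (hm _ _ (ih a han) (ih (n - a) (by omega)))
          rw [GA_GA, Nat.sub_add_cancel han.le, smul_smul, inv_mul_cancel₀, one_smul] at h2
          · exact h2
          · rwa [Ne, CharP.cast_eq_zero_iff k p]
  exact gen_ind1 h1 hs (fun i z hz => hm _ _ (hXS i) hz) (fun i z hz => hm _ _ (hUS i) hz)
    (fun i z hz => hm _ _ (hXA i) hz) (fun i n z hz => hm _ _ (hG i n) hz)

lemma theta_unique {p : ℕ} [hpf : Fact p.Prime] [CharP k p] {f g : Omega k s t → Omega k s t}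
    (hf : IsTheta k s t p f) (hg : IsTheta k s t p g) : f = g := by
  obtain ⟨f1, f2, f3, f4, f5, f6, f7, f8⟩ := hf
  obtain ⟨g1, g2, g3, g4, g5, g6, g7, g8⟩ := hg
  have hm : ∀ m, f (mon m) = g (mon m) := by
    refine gen_ind2 (p := p) (P := fun z => f z = g z) (f4.trans g4.symm) ?_ ?_
      (fun i => (f5 i).trans (g5 i).symm) (fun i => (f7 i).trans (g7 i).symm)
      (fun i => (f6 i).trans (g6 i).symm) (fun i e => (f8 i e).trans (g8 i e).symm)
    · intro c z h; rw [f2, g2, h]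
    · intro z w h h'; rw [f3, g3, h, h']
  funext z
  revert z
  refine omega_ind ?_ ?_ ?_
  · have h1 := f1 0 0
    have h2 := g1 0 0
    simp at h1 h2
    rw [h1, h2]
  · intro z w h h'; rw [f1, g1, h, h']
  · intro c m; rw [f2, g2, hm]
section Coh

variable {p : ℕ} [hpf : Fact p.Prime] [CharP k p]
variable {d : Omega k s t →ₗ[k] Omega k s t}

lemma d_xpow (hd : IsDeRham k s t d) (i : Fin s) (n : ℕ) :
    d (mon (Pi.single i n, (fun _ => false), (fun _ => false), 0)) =
      (n : k) • mon (Pi.single i (n - 1), (fun _ => false), (fun i' => decide (i' = i)), 0) := by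
  have hup : ∀ n : ℕ, Function.update (Pi.single i n : Fin s → ℕ) i (n + 1) = Pi.single i (n + 1) := by
    intro n; simp [Pi.single]
  have hsl : (sl i (fun _ : Fin s => false) : k) = 1 := by simp [sl]
  have hXA : ∀ n : ℕ, (mon (XA s t i) *
      mon (Pi.single i n, (fun _ => false), (fun _ => false), 0) : Omega k s t) =
      mon (Pi.single i n, (fun _ => false), (fun i' => decide (i' = i)), 0) := by
    intro n
    rw [XA_mul, if_neg (by simp), hsl, one_smul, ← or_upd]
    simp
  induction n with
  | zero =>
    simp only [Pi.single_zero, Nat.cast_zero, zero_smul]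
    exact d_A hd _ _
  | succ n ih =>
    have h1 : (mon (Pi.single i (n + 1), (fun _ => false), (fun _ => false), 0) : Omega k s t) =
        mon (XS s t i) * mon (Pi.single i n, (fun _ => false), (fun _ => false), 0) := by
      rw [XS_mul]; simp [hup]
    rw [h1, d_XS_mul hd, ih, hXA, o_mul_smul, XS_mul]
    rcases n with _ | n
    · simp
    · simp only [Pi.single_eq_same, Nat.add_sub_cancel, hup]
      rw [Nat.cast_succ (n + 1), add_smul, one_smul, add_comm]

lemma d_th_gen (hd : IsDeRham k s t d) (w : Omega k s t) (m : Mon s t) (hm : d (mon m) = 0) (hw : d w = 0) :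
    d (mon m * w) = 0 := by
  rw [d_mon_mul hd, hm, hw, o_zero_mul, o_mul_zero]; simp

lemma d_Fm (hd : IsDeRham k s t d) (hp2 : 2 < p) (m : Mon s t) : d (mon (Fm p m)) = 0 := by
  rw [← th_mon (k := k)]
  obtain ⟨g1, g2, g3, g4, g5, g6, g7, g8⟩ := isTheta_th (k := k) (s := s) (t := t) hp2
  have hp0 : (p : k) = 0 := CharP.cast_eq_zero k p
  revert m
  refine gen_ind1 (P := fun z => d (th p z) = 0) ?_ ?_ ?_ ?_ ?_ ?_
  · rw [g4, one_eq]; exact d_A hd _ _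
  · intro c z h; rw [g2, map_smul, h, smul_zero]
  · intro i z h
    rw [g3]
    refine (congrArg (fun y => d (y * th p z)) (g5 i)).trans (d_th_gen hd _ _ ?_ h)
    rw [d_xpow hd, hp0, zero_smul]
  · intro i z h
    rw [g3]
    refine (congrArg (fun y => d (y * th p z)) (g7 i)).trans (d_th_gen hd _ _ ?_ h)
    have h1 : (mon (0, (fun j' => decide (j' = i)), (fun _ => false), Pi.single i (p - 1))
        : Omega k s t) = mon (US s t i) * mon (GA s t i (p - 1)) := by
      unfold GA
      rw [US_mul, if_neg (by simp), ← or_upd]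
      simp [sl]
    have h2 : d (mon (GA s t i (p - 1))) = 0 := d_A hd _ _
    rw [h1, d_US_mul hd, h2, o_mul_zero, add_zero, GA_GA, Nat.sub_add_cancel (by omega)]
    simp [hp0]
  · intro i z h
    rw [g3]
    refine (congrArg (fun y => d (y * th p z)) (g6 i)).trans (d_th_gen hd _ _ ?_ h)
    have h1 : (mon (Pi.single i (p - 1), (fun _ => false), (fun i' => decide (i' = i)), 0)
        : Omega k s t) = mon (XA s t i) *
          mon (Pi.single i (p - 1), (fun _ => false), (fun _ => false), 0) := by
      rw [XA_mul, if_neg (by simp), ← or_upd]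
      simp [sl]
    have h2 : d (mon (XA s t i)) = 0 := d_A hd _ _
    rw [h1, d_mon_mul hd, h2, o_zero_mul, d_xpow hd, o_mul_smul, XA_mul]
    simp
  · intro j n z h
    rw [g3, th_mon]
    refine d_th_gen hd _ _ ?_ h
    have h1 : (Fm p (GA s t j n)).1 = 0 := by funext x; simp [Fm, GA]
    have h2 : (Fm p (GA s t j n)).2.1 = fun _ => false := rfl
    have h3 : Fm p (GA s t j n) = (0, (fun _ => false), (Fm p (GA s t j n)).2.2) := by
      rw [← h1, ← h2]
    rw [h3]
    exact d_A hd _ _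

/-- diagonal operators -/
noncomputable def diag (f : Mon s t → k) : Omega k s t →ₗ[k] Omega k s t := lin fun m => f m • mon m

lemma diag_coeff (f : Mon s t → k) (z : Omega k s t) (m : Mon s t) :
    toF (diag f z) m = f m * toF z m := by
  revert z
  refine omega_ind ?_ ?_ ?_
  · simp
  · intro z w h h'; simp only [map_add, Finsupp.add_apply, h, h', mul_add]
  · intro c m'
    have : ∀ c : k, toF (c • (mon m' : Omega k s t)) = Finsupp.single m' c := by
      intro c; rw [← single_eq]; rfl
    rw [map_smul, diag, lin_mon, smul_smul, this, this]
    by_cases h : m' = m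
    · subst h; simp [mul_comm]
    · simp [Finsupp.single_apply, h]

lemma o_ext {z w : Omega k s t} (h : ∀ m, toF z m = toF w m) : z = w :=
  toF.injective (Finsupp.ext h)

lemma Kx' (hd : IsDeRham k s t d) (i : Fin s) (z : Omega k s t) :
    d (Hx i z) + Hx i (d z) = diag (fun m => (wx i m : k)) z := by
  refine lin_ext (f := d.comp (Hx i) + (Hx i).comp d) ?_ z
  intro m
  rw [LinearMap.add_apply, LinearMap.comp_apply, LinearMap.comp_apply, Kx hd, diag, lin_mon]

lemma Ky' (hd : IsDeRham k s t d) (i : Fin t) (z : Omega k s t) :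
    d (Hy i z) + Hy i (d z) = diag (fun m => (wy i m : k)) z := by
  refine lin_ext (f := d.comp (Hy i) + (Hy i).comp d) ?_ z
  intro m
  rw [LinearMap.add_apply, LinearMap.comp_apply, LinearMap.comp_apply, Ky hd, diag, lin_mon]

/-- unified weights -/
def wt (v : Fin s ⊕ Fin t) (m : Mon s t) : ℕ := Sum.elim (fun i => wx i m) (fun j => wy j m) v

lemma exists_H (hd : IsDeRham k s t d) (v : Fin s ⊕ Fin t) : ∃ H : Omega k s t →ₗ[k] Omega k s t, ∀ z,
    d (H z) + H (d z) = diag (fun m => (wt v m : k)) z := by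
  rcases v with i | j
  · exact ⟨Hx i, Kx' hd i⟩
  · exact ⟨Hy j, Ky' hd j⟩

lemma range_iff (m : Mon s t) : (∀ v, (wt v m : k) = 0) ↔ ∃ m', Fm p m' = m := by
  have hp := hpf.out.pos
  constructor
  · intro h
    refine mem_range_Fm hp m (fun i => ?_) (fun j => ?_)
    · exact (CharP.cast_eq_zero_iff k p _).1 (h (Sum.inl i))
    · exact (CharP.cast_eq_zero_iff k p _).1 (h (Sum.inr j))
  · rintro ⟨m', rfl⟩ (i | j)
    · exact (CharP.cast_eq_zero_iff k p _).2 (wx_Fm hp m' i)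
    · exact (CharP.cast_eq_zero_iff k p _).2 (wy_Fm hp m' j)

lemma range_coeff (hd : IsDeRham k s t d) (hp2 : 2 < p) (z : Omega k s t) (m : Mon s t) : toF (d z) (Fm p m) = 0 := by
  revert z
  refine omega_ind ?_ ?_ ?_
  · simp
  · intro z w h h'; simp only [map_add, Finsupp.add_apply, h, h', add_zero]
  intro c m'
  rw [map_smul, map_smul, Finsupp.smul_apply]
  by_cases h : ∀ v, (wt v m' : k) = 0
  · obtain ⟨m'', rfl⟩ := (range_iff (p := p) m').1 h
    rw [d_Fm hd hp2]; simp
  · push Not at h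
    obtain ⟨v, hv⟩ := h
    obtain ⟨H, hH⟩ := exists_H hd v
    have h1 := hH (d (mon m'))
    rw [dd hd, map_zero, add_zero] at h1
    have h2 := congrArg d (hH (mon m'))
    rw [map_add, dd hd, zero_add, h1] at h2
    have h3 := congrArg (fun z => toF z (Fm p m)) h2
    simp only [diag_coeff] at h3
    rw [(range_iff (p := p) (Fm p m)).2 ⟨m, rfl⟩ v, zero_mul, diag, lin_mon, map_smul, map_smul,
      Finsupp.smul_apply, smul_eq_mul] at h3
    have h4 := (mul_eq_zero.1 h3.symm).resolve_left hv
    rw [h4, smul_zero]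

/-- diagonal operators which are null-homotopic on cocycles -/
def Nul (d : Omega k s t →ₗ[k] Omega k s t) (f : Mon s t → k) : Prop :=
  ∀ u, d u = 0 → diag f u ∈ LinearMap.range d

lemma diag_mul (f g : Mon s t → k) (u : Omega k s t) : diag (f * g) u = diag f (diag g u) := by
  apply o_ext; intro m; simp [diag_coeff, mul_assoc]

lemma diag_add (f g : Mon s t → k) (u : Omega k s t) : diag (f + g) u = diag f u + diag g u := by
  apply o_ext; intro m; simp [diag_coeff, add_mul]

lemma diag_sub (f g : Mon s t → k) (u : Omega k s t) : diag (f - g) u = diag f u - diag g u := by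
  apply o_ext; intro m; simp [diag_coeff, sub_mul]

lemma Nul_mul (hd : IsDeRham k s t d) {f g : Mon s t → k} (hf : Nul d f) (hg : Nul d g) : Nul d (f * g) := by
  intro u hu
  rw [diag_mul]
  apply hf
  obtain ⟨y, hy⟩ := hg u hu
  rw [← hy, dd hd]

lemma Nul_wt (hd : IsDeRham k s t d) (v : Fin s ⊕ Fin t) : Nul d (fun m => (wt v m : k)) := by
  obtain ⟨H, hH⟩ := exists_H hd v
  intro u hu
  rw [← hH, hu, map_zero, add_zero]
  exact ⟨_, rfl⟩

lemma Nul_pow (hd : IsDeRham k s t d) {f : Mon s t → k} (hf : Nul d f) (n : ℕ) : Nul d (f ^ (n + 1)) := by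
  induction n with
  | zero => simpa using hf
  | succ n ih => rw [pow_succ]; exact Nul_mul hd ih hf

lemma Nul_prod (hd : IsDeRham k s t d) (S : Finset (Fin s ⊕ Fin t)) (n : ℕ) :
    Nul d (1 - ∏ v ∈ S, (1 - (fun m => (wt v m : k)) ^ (n + 1))) := by
  classical
  induction S using Finset.induction_on with
  | empty =>
    intro u _
    have : diag (1 - 1 : Mon s t → k) u = 0 := by
      apply o_ext; intro m; simp [diag_coeff]
    simp only [Finset.prod_empty, this]
    exact Submodule.zero_mem _
  | insert v S hv ih =>
    have h1 := Nul_pow hd (Nul_wt hd v) n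
    rw [Finset.prod_insert hv]
    generalize (∏ v ∈ S, (1 - (fun m => (wt v m : k)) ^ (n + 1)) : Mon s t → k) = g at *
    generalize ((fun m => (wt v m : k)) ^ (n + 1) : Mon s t → k) = f at *
    have h2 : 1 - (1 - f) * g = f + (1 - g) - f * (1 - g) := by ring
    rw [h2]
    intro u hu
    rw [diag_sub, diag_add]
    exact Submodule.sub_mem _ (Submodule.add_mem _ (h1 u hu) (ih u hu)) (Nul_mul hd h1 ih u hu)

/-- the cocycle is cohomologous to the part supported on the image of the index map -/
lemma cohom (hd : IsDeRham k s t d) [ExpChar k p] [PerfectRing k p] (hp2 : 2 < p) (u : Omega k s t) (hu : d u = 0) :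
    ∃ z : Omega k s t, (∀ m, toF u (Fm p m) = (toF z m) ^ p) ∧ th p z - u ∈ LinearMap.range d := by
  classical
  have hinj := Fm_inj (s := s) (t := t) (p := p) hpf.out.pos
  let z : Omega k s t := Finsupp.mapRange (frobeniusEquiv k p).symm (map_zero _)
    (Finsupp.comapDomain (Fm p) (toF u) hinj.injOn)
  have hz : ∀ m, toF u (Fm p m) = (toF z m) ^ p := by
    intro m
    have : toF z m = (frobeniusEquiv k p).symm (toF u (Fm p m)) := rfl
    rw [this, ← frobenius_def, frobenius_apply_frobeniusEquiv_symm]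
  refine ⟨z, hz, ?_⟩
  obtain ⟨q, hq⟩ : ∃ q, p = q + 2 := ⟨p - 2, by omega⟩
  have h1 := Nul_prod hd univ q u hu
  have h2 : th p z - u =
      - diag (1 - ∏ v, (1 - (fun m => (wt v m : k)) ^ (q + 1))) u := by
    apply o_ext
    intro m
    rw [map_sub, map_neg, Finsupp.sub_apply, Finsupp.neg_apply, diag_coeff]
    simp only [Pi.sub_apply, Pi.one_apply, Finset.prod_apply, Pi.pow_apply]
    by_cases h : ∃ m', Fm p m' = m
    · obtain ⟨m', rfl⟩ := h
      have h3 := (range_iff (k := k) (p := p) (Fm p m')).2 ⟨m', rfl⟩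
      rw [th_coeff, ← hz]
      simp [h3]
    · have h3 : ¬ ∀ v, (wt v m : k) = 0 := fun h' => h ((range_iff (p := p) m).1 h')
      push Not at h3
      obtain ⟨v, hv⟩ := h3
      have h4 : (wt v m : k) ^ (q + 1) = 1 := by
        have h5 := cast_pow_p (k := k) (p := p) (wt v m)
        have h6 : (wt v m : k) * ((wt v m : k) ^ (q + 1) - 1) = 0 := by
          have h7 : (wt v m : k) ^ p = (wt v m : k) ^ (q + 1) * (wt v m : k) := by
            rw [← pow_succ, hq]
          linear_combination h5 - h7
        exact sub_eq_zero.1 ((mul_eq_zero.1 h6).resolve_left hv)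
      rw [Finset.prod_eq_zero (Finset.mem_univ v) (by rw [h4, sub_self])]
      have h8 : toF (th p z) m = 0 := by
        have := Finsupp.mapDomain_notin_range (f := Fm p) (Finsupp.mapRange (fun c : k => c ^ p)
          (zero_pow (Fact.out : p.Prime).ne_zero) (toF z)) m (by rintro ⟨m', hm'⟩; exact h ⟨m', hm'⟩)
        exact this
      rw [h8]; ring
  rw [h2]
  exact Submodule.neg_mem _ h1

end Coh

lemma mem_tot (n : ℕ) (z : Omega k s t) :
    z ∈ OmegaTot k s t n ↔ ∀ m, toF z m ≠ 0 → tdeg s t m = n := by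
  unfold OmegaTot
  refine (Finsupp.mem_supported k (s := {m | tdeg s t m = n}) (toF z)).trans ?_
  simp [Set.subset_def]

end Helpers

/-- the super Cartier isomorphism, evaluated form. -/
theorem statement8 (k : Type) [Field k] (p : ℕ) [Fact p.Prime] [CharP k p] [ExpChar k p]
    [PerfectRing k p] (hp2 : 2 < p) (s t : ℕ)
    (d : Omega k s t →ₗ[k] Omega k s t) (hd : IsDeRham k s t d) :
    -- there is a unique map `θ` with the prescribed properties
    (∃! θ : Omega k s t → Omega k s t, IsTheta k s t p θ) ∧
    -- moreover, any such `θ` takes values in `ker d`, multiplies total degrees by `p`,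
    -- and induces a bijection `Ω(V) → H^•(Ω(V), d)` mapping `Ω_n(V)` bijectively onto
    -- `H^•(Ω_{pn}(V), d)`, while `H^•(Ω_M(V), d) = 0` when `p ∤ M`
    (∀ θ : Omega k s t → Omega k s t, IsTheta k s t p θ →
      (∀ z, d (θ z) = 0) ∧
      (∀ n : ℕ, ∀ z ∈ OmegaTot k s t n, θ z ∈ OmegaTot k s t (p * n)) ∧
      (∀ z w : Omega k s t, θ z - θ w ∈ LinearMap.range d → z = w) ∧
      (∀ u : Omega k s t, d u = 0 → ∃ z, θ z - u ∈ LinearMap.range d) ∧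
      (∀ n : ℕ, ∀ u ∈ OmegaTot k s t (p * n), d u = 0 →
        ∃ z ∈ OmegaTot k s t n, θ z - u ∈ LinearMap.range d) ∧
      (∀ M : ℕ, ¬ p ∣ M → ∀ u ∈ OmegaTot k s t M, d u = 0 → u ∈ LinearMap.range d)) := by
  have hp := hp2
  have hpp : p.Prime := Fact.out
  have hth := isTheta_th (k := k) (s := s) (t := t) hp2
  refine ⟨⟨th p, hth, fun g hg => theta_unique hg hth⟩, ?_⟩
  intro θ hθ
  obtain rfl : θ = th p := theta_unique hθ hth
  have hdeg : ∀ n : ℕ, ∀ u ∈ OmegaTot k s t (p * n), d u = 0 →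
        ∃ z ∈ OmegaTot k s t n, th p z - u ∈ LinearMap.range d := by
    intro n u hun hu
    obtain ⟨z, hz, hr⟩ := cohom hd hp2 u hu
    refine ⟨z, ?_, hr⟩
    rw [mem_tot] at hun ⊢
    intro m hm
    have h1 := hun (Fm p m) (by rw [hz]; exact pow_ne_zero _ hm)
    rw [tdeg_Fm hpp.pos] at h1
    exact Nat.eq_of_mul_eq_mul_left hpp.pos h1
  refine ⟨?_, ?_, ?_, ?_, hdeg, ?_⟩
  · refine omega_ind ?_ ?_ ?_
    · simp [th_zero]
    · intro z w h h'; rw [th_add, map_add, h, h', add_zero]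
    · intro c m; rw [th_smul_mon, map_smul, d_Fm hd hp2, smul_zero]
  · intro n z hz
    rw [mem_tot] at hz ⊢
    intro m hm
    by_cases h : ∃ m', Fm p m' = m
    · obtain ⟨m', rfl⟩ := h
      rw [th_coeff] at hm
      rw [tdeg_Fm hpp.pos, hz m' (fun h0 => hm (by rw [h0, zero_pow hpp.ne_zero]))]
    · exfalso
      apply hm
      exact Finsupp.mapDomain_notin_range (f := Fm p) (Finsupp.mapRange (fun c : k => c ^ p)
          (zero_pow (Fact.out : p.Prime).ne_zero) (toF z)) m
          (by rintro ⟨m', hm'⟩; exact h ⟨m', hm'⟩)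
  · rintro z w ⟨y, hy⟩
    apply o_ext
    intro m
    have h1 := range_coeff hd hp2 y m
    rw [hy, map_sub, Finsupp.sub_apply, th_coeff, th_coeff, sub_eq_zero] at h1
    exact frobenius_inj k p h1
  · intro u hu
    obtain ⟨z, _, hr⟩ := cohom hd hp2 u hu
    exact ⟨z, hr⟩
  · intro M hM u huM hu
    obtain ⟨z, hz, hr⟩ := cohom hd hp2 u hu
    have hz0 : z = 0 := by
      apply o_ext
      intro m
      by_contra hm
      rw [mem_tot] at huM
      have h1 := huM (Fm p m) (by rw [hz]; exact pow_ne_zero _ hm)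
      rw [tdeg_Fm hpp.pos] at h1
      exact hM ⟨_, h1.symm⟩
    rw [hz0, th_zero, zero_sub] at hr
    exact (Submodule.neg_mem_iff _).1 hr

end Stmt8
end

section
/- Let k be a perfect field of characteristic p > 2 and V = V₀ ⊕ V₁ a finite-dimensional superspace with fixed homogeneous bases {v₁,…,v_s} of V₀ and {y₁,…,y_t} of V₁, and let θ: Ω(V) → Ω(V) be the unique additive, Frobenius-semilinear, multiplicative map with θ(v_i⊗1) = v_i^p⊗1, θ(1⊗v_i) = v_i^{p−1}⊗v_i, θ(y_j⊗1) = y_j⊗γ_{p−1}(y_j), θ(1⊗γ_{p^e}(y_j)) = 1⊗γ_{p^{e+1}}(y_j). Define K_n^i(V) := ker(κ: Ω_n^i → Ω_n^{i−1}) and K_n(V) := ⊕_i K_n^i(V). Then for every n ≥ 0: the de Rham differential d restricts to a differential on K_{pn}(V); θ maps K_n(V) into ker(d) ∩ K_{pn}(V); the induced map K_n(V) → H^•(K_{pn}(V),d) is bijective; and the inclusion K_{pn}(V) ⊆ Ω_{pn}(V) induces an injection H^•(K_{pn}(V),d) → H^•(Ω_{pn}(V),d). -/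
open Finset

set_option synthInstance.maxHeartbeats 1000000
set_option maxHeartbeats 4000000

namespace Stmt9

variable (k : Type) [Field k] (s t : ℕ)

/-- index of a monomial `x^a · u^b ⊗ x^c · γ^e` of `Ω(V) = 𝐒(V) ⊗ 𝐀(V)`, for
`V = V₀ ⊕ V₁` with basis `x₁, …, x_s` of `V₀` and `y₁, …, y_t` of `V₁`: here `a` records the
exponents of the `xᵢ ⊗ 1` (in `S(V₀)`), `b` records which `yⱼ ⊗ 1` occur (in `Λ(V₁)`),
`c` records which `1 ⊗ xᵢ` occur (in `Λ(V₀)`) and `e` records the divided powers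
`1 ⊗ γ_{eⱼ}(yⱼ)` (in `Γ(V₁)`) -/
abbrev Mon : Type := (Fin s → ℕ) × (Fin t → Bool) × (Fin s → Bool) × (Fin t → ℕ)

/-- the superspace `Ω(V) = 𝐒(V) ⊗ 𝐀(V) = (S(V₀) ⊗ Λ(V₁)) ⊗ (Λ(V₀) ⊗ Γ(V₁))`, modelled on
its basis of monomials -/
def Omega : Type := Mon s t →₀ k

noncomputable instance : AddCommGroup (Omega k s t) :=
  inferInstanceAs (AddCommGroup (Mon s t →₀ k))

noncomputable instance : Module k (Omega k s t) :=
  inferInstanceAs (Module k (Mon s t →₀ k))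

/-- the number of `true` values of a Boolean vector -/
def cnt {u : ℕ} (b : Fin u → Bool) : ℕ := (univ.filter fun i => b i = true).card

/-- the cohomological degree of a monomial: the degree of its `𝐀(V)`-part -/
def cdeg (m : Mon s t) : ℕ := cnt m.2.2.1 + ∑ j, m.2.2.2 j

/-- the total degree of a monomial -/
def tdeg (m : Mon s t) : ℕ := ((∑ i, m.1 i) + cnt m.2.1) + cdeg s t m

/-- the parity (number of odd tensor factors) of the `𝐒(V)`-part of a monomial -/
def parS (m : Mon s t) : ℕ := cnt m.2.1

/-- the parity (number of odd tensor factors) of the `𝐀(V)`-part of a monomial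
(`1 ⊗ xᵢ` is even since `xᵢ ∈ V₀`, and `γ_{eⱼ}(yⱼ)` has parity `eⱼ`) -/
def parA (m : Mon s t) : ℕ := ∑ j, m.2.2.2 j

/-- the merge of two monomial indices -/
def merge (m₁ m₂ : Mon s t) : Mon s t :=
  (m₁.1 + m₂.1, fun j => m₁.2.1 j || m₂.2.1 j, fun i => m₁.2.2.1 i || m₂.2.2.1 i,
    m₁.2.2.2 + m₂.2.2.2)

/-- the number of `(i, i')` with `i` occurring in `b`, `i'` occurring in `b'` and `i' < i`:
the Koszul sign for merging two increasing exterior monomials is `(-1)` to this count -/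
def invCount {u : ℕ} (b b' : Fin u → Bool) : ℕ :=
  ((univ ×ˢ univ).filter fun q : Fin u × Fin u =>
    b q.1 = true ∧ b' q.2 = true ∧ q.2 < q.1).card

/-- the structure constant for the product of two monomials of `Ω(V)`: it vanishes if an odd
exterior generator is repeated, and otherwise consists of the Koszul sign
`(-1)^{|𝐀-part of m₁|·|𝐒-part of m₂|}` from the definition of the product of
`Ω(V) = 𝐒(V) ⊗ 𝐀(V)`, exterior reordering signs in `Λ(V₁)` and `Λ(V₀)`, the sign
`(-1)^{deg·deg}` for moving the `Γ(V₁)`-part of `m₁` past the `Λ(V₀)`-part of `m₂` in the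
degree-twisted product of `𝐀(V) = Λ(V₀) ⊗ᵍ Γ(V₁)`, and divided-power binomial
coefficients -/
def mulCoef (m₁ m₂ : Mon s t) : k :=
  if (∃ j, m₁.2.1 j = true ∧ m₂.2.1 j = true) ∨
      (∃ i, m₁.2.2.1 i = true ∧ m₂.2.2.1 i = true) then 0
  else
    (-1 : k) ^ (parA s t m₁ * parS s t m₂ + invCount m₁.2.1 m₂.2.1 +
        invCount m₁.2.2.1 m₂.2.2.1 + parA s t m₁ * cnt m₂.2.2.1) *
      ∏ j, ((m₁.2.2.2 j + m₂.2.2.2 j).choose (m₁.2.2.2 j) : k)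

/-- the multiplication of `Ω(V)` -/
noncomputable def mulOmega (x y : Omega k s t) : Omega k s t :=
  x.sum fun m₁ c₁ => y.sum fun m₂ c₂ =>
    Finsupp.single (merge s t m₁ m₂) (c₁ * c₂ * mulCoef k s t m₁ m₂)

noncomputable instance : Mul (Omega k s t) := ⟨mulOmega k s t⟩

/-- the unit monomial -/
def unitMon : Mon s t := (0, fun _ => false, fun _ => false, 0)

noncomputable instance : One (Omega k s t) := ⟨Finsupp.single (unitMon s t) 1⟩

/-- the bigraded piece `Ω_n^i(V) = 𝐒^{n-i}(V) ⊗ 𝐀^i(V)` (total degree `n`, cohomological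
degree `i`) -/
noncomputable def OmegaNI (n i : ℕ) : Submodule k (Omega k s t) :=
  Finsupp.supported k k {m | tdeg s t m = n ∧ cdeg s t m = i}

/-- the total-degree-`n` piece `Ω_n(V)` -/
noncomputable def OmegaTot (n : ℕ) : Submodule k (Omega k s t) :=
  Finsupp.supported k k {m | tdeg s t m = n}

/-- the cohomological-degree-`i` piece `Ω^i(V)` -/
noncomputable def OmegaCoh (i : ℕ) : Submodule k (Omega k s t) :=
  Finsupp.supported k k {m | cdeg s t m = i}

/-- the subspace `1 ⊗ 𝐀(V)` of `Ω(V)` -/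
noncomputable def Apart : Submodule k (Omega k s t) :=
  Finsupp.supported k k {m | m.1 = 0 ∧ m.2.1 = fun _ => false}

/-- the subspace `𝐒(V) ⊗ 1` of `Ω(V)` -/
noncomputable def Spart : Submodule k (Omega k s t) :=
  Finsupp.supported k k {m | m.2.2.1 = (fun _ => false) ∧ m.2.2.2 = 0}

/-- the monomial `xᵢ ⊗ 1` -/
def XS (i : Fin s) : Mon s t := (Pi.single i 1, fun _ => false, fun _ => false, 0)

/-- the monomial `yⱼ ⊗ 1` -/
def US (j : Fin t) : Mon s t := (0, fun j' => decide (j' = j), fun _ => false, 0)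

/-- the monomial `1 ⊗ xᵢ` -/
def XA (i : Fin s) : Mon s t := (0, fun _ => false, fun i' => decide (i' = i), 0)

/-- the monomial `1 ⊗ γ_e(yⱼ)` -/
def GA (j : Fin t) (e : ℕ) : Mon s t := (0, fun _ => false, fun _ => false, Pi.single j e)

/-- the element `v ⊗ 1` of `Ω(V)`, for `v ∈ V` with even coordinates `v0` and odd
coordinates `v1` -/
noncomputable def vS (v0 : Fin s → k) (v1 : Fin t → k) : Omega k s t :=
  (∑ i, Finsupp.single (XS s t i) (v0 i)) + ∑ j, Finsupp.single (US s t j) (v1 j)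

/-- the element `1 ⊗ v` of `Ω(V)` -/
noncomputable def vA (v0 : Fin s → k) (v1 : Fin t → k) : Omega k s t :=
  (∑ i, Finsupp.single (XA s t i) (v0 i)) + ∑ j, Finsupp.single (GA s t j 1) (v1 j)

/-- the element `1 ⊗ γ_N(y)` of `Ω(V)` for an arbitrary odd vector `y` with coordinates `w`:
`γ_N(∑ wⱼ yⱼ) = ∑_{e, ∑e = N} (∏ wⱼ^{eⱼ}) γ^e(y)` -/
noncomputable def gammaA (w : Fin t → k) (N : ℕ) : Omega k s t :=
  ∑ e ∈ Finset.Nat.antidiagonalTuple t N,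
    Finsupp.single ((0, fun _ => false, fun _ => false, e) : Mon s t) (∏ j, w j ^ e j)

/-- the de Rham differential `d` of `Ω(V)`: the unique `k`-linear map of cohomological
degree `+1` with `d(v ⊗ 1) = 1 ⊗ v`, `d(1 ⊗ a) = 0`, satisfying the Leibniz rule; it
preserves total degree and squares to zero -/
def IsDeRham (dd : Omega k s t →ₗ[k] Omega k s t) : Prop :=
  (∀ n i : ℕ, ∀ x ∈ OmegaNI k s t n i, dd x ∈ OmegaNI k s t n (i + 1)) ∧
  (∀ v0 v1, dd (vS k s t v0 v1) = vA k s t v0 v1) ∧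
  (∀ x ∈ Apart k s t, dd x = 0) ∧
  (∀ (i : ℕ) (z : Omega k s t), z ∈ OmegaCoh k s t i →
    ∀ w, dd (z * w) = dd z * w + ((-1 : k) ^ i) • (z * dd w)) ∧
  (∀ x, dd (dd x) = 0)

/-- the Koszul differential `κ` of `Ω(V)`: the unique `k`-linear map of cohomological
degree `-1` with `κ(s ⊗ 1) = 0`, `κ(1 ⊗ v) = v ⊗ 1` for `v ∈ V₀`,
`κ(1 ⊗ γ_N(y)) = (y ⊗ 1)·(1 ⊗ γ_{N-1}(y))` for `y ∈ V₁`, satisfying the Leibniz rule; it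
preserves total degree and squares to zero -/
def IsKoszul (κ : Omega k s t →ₗ[k] Omega k s t) : Prop :=
  (∀ n i : ℕ, ∀ x ∈ OmegaNI k s t n (i + 1), κ x ∈ OmegaNI k s t n i) ∧
  (∀ n : ℕ, ∀ x ∈ OmegaNI k s t n 0, κ x = 0) ∧
  (∀ x ∈ Spart k s t, κ x = 0) ∧
  (∀ v0 : Fin s → k, κ (vA k s t v0 0) = vS k s t v0 0) ∧
  (∀ (w : Fin t → k) (N : ℕ), 1 ≤ N →
    κ (gammaA k s t w N) = vS k s t 0 w * gammaA k s t w (N - 1)) ∧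
  (∀ (i : ℕ) (z : Omega k s t), z ∈ OmegaCoh k s t i →
    ∀ y, κ (z * y) = κ z * y + ((-1 : k) ^ i) • (z * κ y)) ∧
  (∀ x, κ (κ x) = 0)


variable (p : ℕ)

/-- the defining properties of the map `θ` of the super Cartier isomorphism -/
def IsTheta (θ : Omega k s t → Omega k s t) : Prop :=
  (∀ z w, θ (z + w) = θ z + θ w) ∧
  (∀ (c : k) (z : Omega k s t), θ (c • z) = (c ^ p) • θ z) ∧
  (∀ z w, θ (z * w) = θ z * θ w) ∧
  (θ 1 = 1) ∧
  (∀ i : Fin s, θ (Finsupp.single (XS s t i) 1) =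
    Finsupp.single ((Pi.single i p, fun _ => false, fun _ => false, 0) : Mon s t) 1) ∧
  (∀ i : Fin s, θ (Finsupp.single (XA s t i) 1) =
    Finsupp.single
      ((Pi.single i (p - 1), fun _ => false, fun i' => decide (i' = i), 0) : Mon s t) 1) ∧
  (∀ j : Fin t, θ (Finsupp.single (US s t j) 1) =
    Finsupp.single
      ((0, fun j' => decide (j' = j), fun _ => false, Pi.single j (p - 1)) : Mon s t) 1) ∧
  (∀ (j : Fin t) (e : ℕ), θ (Finsupp.single (GA s t j (p ^ e)) 1) =
    Finsupp.single (GA s t j (p ^ (e + 1))) 1)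

/-- the Koszul kernel subcomplex: `K_n(V) = ⊕ᵢ K_n^i(V)` where
`K_n^i(V) = ker(κ : Ω_n^i(V) → Ω_n^{i-1}(V))` -/
noncomputable def Ksub (κ : Omega k s t →ₗ[k] Omega k s t) (n : ℕ) :
    Submodule k (Omega k s t) :=
  ⨆ i : ℕ, (OmegaNI k s t n i ⊓ LinearMap.ker κ)

section aux
variable {k s t}

/-- basis vector -/
noncomputable def bs (m : Mon s t) : Omega k s t := Finsupp.single m (1 : k)

/-- linear map from values on the monomials -/
noncomputable def lin (f : Mon s t → Omega k s t) : Omega k s t →ₗ[k] Omega k s t :=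
  (Finsupp.linearCombination k f : (Mon s t →₀ k) →ₗ[k] Omega k s t)

theorem lin_bs (f : Mon s t → Omega k s t) (m : Mon s t) : lin f (bs m) = f m := by
  have := Finsupp.linearCombination_single k (v := f) (1 : k) m
  rw [one_smul] at this
  exact this

theorem single_eq (m : Mon s t) (c : k) :
    (Finsupp.single m c : Omega k s t) = c • (bs m : Omega k s t) := by
  have := Finsupp.smul_single_one m c
  exact this.symm

theorem omega_ind {P : Omega k s t → Prop} (h0 : P 0) (ha : ∀ x y, P x → P y → P (x + y))
    (hs : ∀ (c : k) m, P (c • bs m)) (x : Omega k s t) : P x := by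
  refine Finsupp.induction_linear (motive := P) x h0 ha ?_
  intro m c
  have := hs c m
  rw [← single_eq] at this
  exact this

theorem lin_ext {f g : Omega k s t →ₗ[k] Omega k s t} (h : ∀ m, f (bs m) = g (bs m)) : f = g := by
  ext x
  induction x using omega_ind with
  | h0 => simp
  | ha x y hx hy => rw [map_add, map_add, hx, hy]
  | hs c m => rw [map_smul, map_smul, h]

theorem bs_mul (m : Mon s t) (y : Omega k s t) :
    bs m * y = lin (fun m' => mulCoef k s t m m' • bs (merge s t m m')) y := by
  change Finsupp.sum (N := Omega k s t) (Finsupp.single m (1 : k)) (fun m₁ c₁ =>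
    Finsupp.sum (N := Omega k s t) y fun m₂ c₂ =>
      Finsupp.single (merge s t m₁ m₂) (c₁ * c₂ * mulCoef k s t m₁ m₂)) = _
  refine (Finsupp.sum_single_index (N := Omega k s t) (a := (m : Mon s t)) (b := (1 : k)) ?_).trans ?_
  · simp only [zero_mul, Finsupp.single_zero]
    exact Finset.sum_eq_zero fun _ _ => rfl
  · refine Eq.trans ?_ (Finsupp.linearCombination_apply k (M := Omega k s t) y).symm
    refine Finset.sum_congr rfl ?_
    intro m' _
    have := single_eq (k := k) (merge s t m m') (1 * y.toFun m' * mulCoef k s t m m')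
    refine this.trans ?_
    rw [one_mul, mul_smul]; rfl

theorem bs_mul_bs (m m' : Mon s t) :
    (bs m * bs m' : Omega k s t) = mulCoef k s t m m' • bs (merge s t m m') := by
  rw [bs_mul, lin_bs]

theorem bs_mul_zero (m : Mon s t) : (bs m * 0 : Omega k s t) = 0 := by rw [bs_mul, map_zero]
theorem bs_mul_smul (m : Mon s t) (c : k) (y : Omega k s t) : bs m * (c • y) = c • (bs m * y) := by
  rw [bs_mul, bs_mul, map_smul]
theorem bs_mul_sum {ι : Type} (m : Mon s t) (S : Finset ι) (y : ι → Omega k s t) :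
    bs m * (∑ i ∈ S, y i) = ∑ i ∈ S, bs m * y i := by
  simp only [bs_mul, map_sum]

/-- weights -/
def wt (m : Mon s t) : Fin s ⊕ Fin t → ℕ :=
  Sum.elim (fun i => m.1 i + (m.2.2.1 i).toNat) (fun j => m.2.2.2 j + (m.2.1 j).toNat)

/-- flags -/
def fl (m : Mon s t) : Fin s ⊕ Fin t → Bool :=
  Sum.elim (fun i => m.2.2.1 i) (fun j => m.2.1 j)

/-- monomial from weights and flags -/
def mk (w : Fin s ⊕ Fin t → ℕ) (f : Fin s ⊕ Fin t → Bool) : Mon s t :=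
  (fun i => w (.inl i) - (f (.inl i)).toNat, fun j => f (.inr j), fun i => f (.inl i),
    fun j => w (.inr j) - (f (.inr j)).toNat)

/-- validity -/
def Val (w : Fin s ⊕ Fin t → ℕ) (f : Fin s ⊕ Fin t → Bool) : Prop := ∀ l, (f l).toNat ≤ w l

theorem val_wt (m : Mon s t) : Val (wt m) (fl m) := by
  rintro (l | l) <;> simp [wt, fl]

theorem fl_mk (w : Fin s ⊕ Fin t → ℕ) (f) : fl (mk w f) = f := by
  ext (l | l) <;> simp [fl, mk]

theorem wt_mk {w : Fin s ⊕ Fin t → ℕ} {f} (h : Val w f) : wt (mk w f) = w := by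
  ext (l | l)
  · have := h (.inl l); simp [wt, mk]; omega
  · have := h (.inr l); simp [wt, mk]; omega

theorem mk_wt (m : Mon s t) : mk (wt m) (fl m) = m := by
  obtain ⟨a, b, c, e⟩ := m
  simp [wt, mk, fl]

theorem mon_ext {m m' : Mon s t} (h1 : wt m = wt m') (h2 : fl m = fl m') : m = m' := by
  rw [← mk_wt m, ← mk_wt m', h1, h2]

theorem cnt_eq {u : ℕ} (b : Fin u → Bool) : cnt b = ∑ i, (b i).toNat := by
  rw [cnt, Finset.card_filter]
  apply Finset.sum_congr rfl
  intro i _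
  cases b i <;> simp

theorem tdeg_eq (m : Mon s t) : tdeg s t m = ∑ l, wt m l := by
  rw [Fintype.sum_sum_type]
  simp only [tdeg, cdeg, wt, Sum.elim_inl, Sum.elim_inr, cnt_eq, Finset.sum_add_distrib]
  ring

/-- toggling -/
def tog (l : Fin s ⊕ Fin t) (m : Mon s t) : Mon s t :=
  mk (wt m) (Function.update (fl m) l (!fl m l))

theorem val_upd {w : Fin s ⊕ Fin t → ℕ} {f} (h : Val w f) {l} (hl : 0 < w l) (v : Bool) :
    Val w (Function.update f l v) := by
  intro l'
  by_cases e : l' = l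
  · subst e; simp; cases v <;> simp; omega
  · simp [e]; exact h l'

theorem wt_tog {l} {m : Mon s t} (h : 0 < wt m l) : wt (tog l m) = wt m :=
  wt_mk (val_upd (val_wt m) h _)

theorem fl_tog (l) (m : Mon s t) : fl (tog l m) = Function.update (fl m) l (!fl m l) := fl_mk _ _

/-- the order of variables -/
def bef : Fin s ⊕ Fin t → Fin s ⊕ Fin t → Prop
  | .inl i, .inl i' => i < i'
  | .inl _, .inr _ => True
  | .inr _, .inl _ => False
  | .inr j, .inr j' => j' < j

theorem bef_total {l l' : Fin s ⊕ Fin t} (h : l ≠ l') : (bef l l' ∧ ¬ bef l' l) ∨ (bef l' l ∧ ¬ bef l l') := by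
  rcases l with l | l <;> rcases l' with l' | l' <;> simp [bef] at h ⊢ <;> omega

theorem bef_irrefl (l : Fin s ⊕ Fin t) : ¬ bef l l := by
  rcases l with l | l <;> simp [bef]

open Classical in
/-- sign -/
noncomputable def sgn (k : Type) [Field k] (f : Fin s ⊕ Fin t → Bool) (l : Fin s ⊕ Fin t) : k :=
  ∏ l', if bef l' l ∧ f l' = true then -1 else 1

theorem sgn_congr {f g : Fin s ⊕ Fin t → Bool} {l} (h : ∀ l', bef l' l → f l' = g l') :
    sgn k f l = sgn k g l := by
  unfold sgn
  apply Finset.prod_congr rfl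
  intro l' _
  by_cases hb : bef l' l
  · rw [h l' hb]
  · simp [hb]

theorem sgn_upd_not {f : Fin s ⊕ Fin t → Bool} {l l'} (h : ¬ bef l' l) (v) :
    sgn k (Function.update f l' v) l = sgn k f l := by
  apply sgn_congr
  intro x hx
  rw [Function.update_of_ne]
  rintro rfl
  exact h hx

theorem sgn_upd {f : Fin s ⊕ Fin t → Bool} {l l'} (h : bef l' l) (v) (hv : v = !f l') :
    sgn k (Function.update f l' v) l = - sgn k f l := by
  classical
  unfold sgn
  rw [← Finset.mul_prod_erase univ _ (Finset.mem_univ l'),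
    ← Finset.mul_prod_erase univ (fun x => if bef x l ∧ f x = true then (-1 : k) else 1) (Finset.mem_univ l')]
  have : ∏ x ∈ univ.erase l', (if bef x l ∧ Function.update f l' v x = true then (-1 : k) else 1)
      = ∏ x ∈ univ.erase l', if bef x l ∧ f x = true then (-1 : k) else 1 := by
    apply Finset.prod_congr rfl
    intro x hx
    rw [Function.update_of_ne (Finset.ne_of_mem_erase hx)]
  rw [this]
  subst hv
  cases hf : f l' <;> simp [h]

theorem sgn_pm (f : Fin s ⊕ Fin t → Bool) (l) : sgn k f l = 1 ∨ sgn k f l = -1 := by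
  unfold sgn
  apply Finset.prod_induction _ (fun x : k => x = 1 ∨ x = -1)
  · rintro a b (rfl | rfl) (rfl | rfl) <;> simp
  · simp
  · intro x _
    split_ifs <;> simp

theorem sgn_sq (f : Fin s ⊕ Fin t → Bool) (l) : sgn k f l * sgn k f l = 1 := by
  rcases sgn_pm (k := k) f l with h | h <;> simp [h]

/-- elementary toggling operator on monomials -/
noncomputable def Am (l : Fin s ⊕ Fin t) (v : Bool) (m : Mon s t) : Omega k s t :=
  if 0 < wt m l ∧ fl m l = v then sgn k (fl m) l • bs (tog l m) else 0

/-- elementary toggling operator -/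
noncomputable def A (l : Fin s ⊕ Fin t) (v : Bool) : Omega k s t →ₗ[k] Omega k s t := lin (Am l v)

theorem A_bs (l : Fin s ⊕ Fin t) (v : Bool) (m : Mon s t) :
    A l v (bs m : Omega k s t) = if 0 < wt m l ∧ fl m l = v then sgn k (fl m) l • bs (tog l m) else 0 :=
  lin_bs _ _

theorem tog_tog {l} {m : Mon s t} (h : 0 < wt m l) : tog l (tog l m) = m := by
  apply mon_ext
  · rw [wt_tog (by rwa [wt_tog h]), wt_tog h]
  · simp [fl_tog]

theorem tog_comm {l l'} (hl : l ≠ l') {m : Mon s t} (h : 0 < wt m l) (h' : 0 < wt m l') :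
    tog l (tog l' m) = tog l' (tog l m) := by
  apply mon_ext
  · rw [wt_tog (by rwa [wt_tog h']), wt_tog h', wt_tog (by rwa [wt_tog h]), wt_tog h]
  · simp [fl_tog, hl, hl.symm]
    rw [Function.update_comm hl]

theorem A_same (l : Fin s ⊕ Fin t) (v : Bool) (m : Mon s t) :
    A l v (A l (!v) (bs m)) + A l (!v) (A l v (bs m)) = if 0 < wt m l then (bs m : Omega k s t) else 0 := by
  by_cases h : 0 < wt m l
  · by_cases hv : fl m l = v
    · simp only [A_bs, h, hv, true_and, if_true, map_smul]
      have : fl (tog l m) l = !v := by simp [fl_tog, hv]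
      simp [wt_tog h, this, h, tog_tog h, smul_smul]
      rw [fl_tog, sgn_upd_not (bef_irrefl l), sgn_sq, one_smul]
    · have hv' : fl m l = !v := by cases v <;> simpa using hv
      simp only [A_bs, h, hv', true_and, if_true, map_smul]
      have : fl (tog l m) l = v := by simp [fl_tog, hv']
      simp [wt_tog h, this, h, tog_tog h, smul_smul]
      rw [fl_tog, sgn_upd_not (bef_irrefl l), sgn_sq, one_smul]
  · simp [A_bs, h]

theorem A_anti {l l' : Fin s ⊕ Fin t} (hl : l ≠ l') (v v' : Bool) (m : Mon s t) :
    A l v (A l' v' (bs m : Omega k s t)) + A l' v' (A l v (bs m)) = 0 := by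
  by_cases h : 0 < wt m l ∧ fl m l = v
  · by_cases h' : 0 < wt m l' ∧ fl m l' = v'
    · have e1 : fl (tog l' m) l = v := by simp [fl_tog, hl, h.2]
      have e2 : fl (tog l m) l' = v' := by simp [fl_tog, hl.symm, h'.2]
      simp only [A_bs, h, h', map_smul, and_self, if_true, wt_tog h.1, wt_tog h'.1, e1, e2, smul_smul]
      rw [tog_comm hl h.1 h'.1, ← add_smul, fl_tog, fl_tog]
      rcases bef_total hl with ⟨h1, h2⟩ | ⟨h1, h2⟩
      · rw [sgn_upd_not h2, sgn_upd h1 _ rfl, mul_comm, mul_neg, add_neg_cancel, zero_smul]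
      · rw [sgn_upd_not h2, sgn_upd h1 _ rfl, mul_comm, neg_mul, neg_add_cancel, zero_smul]
    · have e2 : ¬ (0 < wt (tog l m) l' ∧ fl (tog l m) l' = v') := by
        rw [wt_tog h.1, fl_tog, Function.update_of_ne hl.symm]; exact h'
      simp only [A_bs, h, h', map_smul, and_self, if_true, if_false, e2, map_zero, smul_zero, add_zero]
  · by_cases h' : 0 < wt m l' ∧ fl m l' = v'
    · have e2 : ¬ (0 < wt (tog l' m) l ∧ fl (tog l' m) l = v) := by
        rw [wt_tog h'.1, fl_tog, Function.update_of_ne hl]; exact h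
      simp only [A_bs, h, h', map_smul, and_self, if_true, if_false, e2, map_zero, smul_zero, add_zero]
    · simp only [A_bs, h, h', if_false, map_zero, add_zero]

theorem A_sq (l : Fin s ⊕ Fin t) (v : Bool) (m : Mon s t) :
    A l v (A l v (bs m : Omega k s t)) = 0 := by
  by_cases h : 0 < wt m l ∧ fl m l = v
  · have e1 : fl (tog l m) l = !v := by simp [fl_tog, h.2]
    simp [A_bs, h, e1]
  · simp [A_bs, h]

/-- the flag value on which the Koszul differential acts -/
def dnv : Fin s ⊕ Fin t → Bool := Sum.elim (fun _ => true) (fun _ => false)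

/-- explicit Koszul differential -/
noncomputable def kap : Omega k s t →ₗ[k] Omega k s t := ∑ l, A l (dnv l)

/-- explicit de Rham differential -/
noncomputable def dR : Omega k s t →ₗ[k] Omega k s t :=
  lin fun m => ∑ l, (wt m l : k) • A l (!dnv l) (bs m)

theorem dR_bs (m : Mon s t) :
    dR (bs m : Omega k s t) = ∑ l, (wt m l : k) • A l (!dnv l) (bs m) := lin_bs _ _

/-- multidegree part -/
noncomputable def OmW (k : Type) [Field k] (w : Fin s ⊕ Fin t → ℕ) : Submodule k (Omega k s t) :=
  Submodule.span k (bs '' {m | wt m = w})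

theorem bs_mem (m : Mon s t) : (bs m : Omega k s t) ∈ OmW k (wt m) :=
  Submodule.subset_span ⟨m, rfl, rfl⟩

theorem eq_on_OmW {w : Fin s ⊕ Fin t → ℕ} {f g : Omega k s t →ₗ[k] Omega k s t}
    (h : ∀ m, wt m = w → f (bs m) = g (bs m)) {x} (hx : x ∈ OmW k w) : f x = g x := by
  refine LinearMap.eqOn_span (f := f) (g := g) ?_ hx
  rintro _ ⟨m, hm, rfl⟩
  exact h m hm

theorem pres_OmW {w : Fin s ⊕ Fin t → ℕ} {f : Omega k s t →ₗ[k] Omega k s t}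
    (h : ∀ m, wt m = w → f (bs m) ∈ OmW k w) {x} (hx : x ∈ OmW k w) : f x ∈ OmW k w := by
  have : OmW k w ≤ (OmW k w).comap f := by
    conv_lhs => unfold OmW
    rw [Submodule.span_le]
    rintro _ ⟨m, hm, rfl⟩
    exact h m hm
  exact this hx

theorem A_mem (l v) {w : Fin s ⊕ Fin t → ℕ} {x : Omega k s t} (hx : x ∈ OmW k w) : A l v x ∈ OmW k w := by
  refine pres_OmW ?_ hx
  rintro m rfl
  rw [A_bs]
  split_ifs with h
  · have := bs_mem (k := k) (tog l m)
    rw [wt_tog h.1] at this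
    exact Submodule.smul_mem _ _ this
  · exact zero_mem _

theorem dR_W {w : Fin s ⊕ Fin t → ℕ} {x : Omega k s t} (hx : x ∈ OmW k w) :
    dR x = ∑ l, (w l : k) • A l (!dnv l) x := by
  have := eq_on_OmW (f := dR) (g := ∑ l, (w l : k) • A l (!dnv l)) (w := w) (k := k) ?_ hx
  · rw [this]; simp [LinearMap.sum_apply]
  · rintro m rfl
    rw [dR_bs]; simp [LinearMap.sum_apply]

theorem dR_mem {w : Fin s ⊕ Fin t → ℕ} {x : Omega k s t} (hx : x ∈ OmW k w) : dR x ∈ OmW k w := by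
  rw [dR_W hx]
  exact Submodule.sum_mem _ fun l _ => Submodule.smul_mem _ _ (A_mem _ _ hx)

theorem kap_apply (x : Omega k s t) : kap x = ∑ l, A l (dnv l) x := by
  simp [kap, LinearMap.sum_apply]

theorem kap_mem {w : Fin s ⊕ Fin t → ℕ} {x : Omega k s t} (hx : x ∈ OmW k w) : kap x ∈ OmW k w := by
  rw [kap_apply]
  exact Submodule.sum_mem _ fun l _ => (A_mem _ _ hx)

theorem dR_kl (l) (m : Mon s t) :
    dR (A l (dnv l) (bs m : Omega k s t)) + A l (dnv l) (dR (bs m)) = (wt m l : k) • bs m := by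
  rw [dR_W (A_mem _ _ (bs_mem m)), dR_bs, map_sum, ← Finset.sum_add_distrib]
  rw [Finset.sum_eq_single l]
  · rw [map_smul, ← smul_add, add_comm, A_same]
    split_ifs with h
    · rfl
    · have : wt m l = 0 := by omega
      simp [this]
  · intro l' _ hl
    rw [map_smul, ← smul_add, A_anti hl, smul_zero]
  · simp

theorem dR_kap (m : Mon s t) :
    dR (kap (bs m : Omega k s t)) + kap (dR (bs m)) = (tdeg s t m : k) • bs m := by
  rw [kap_apply, kap_apply, map_sum, ← Finset.sum_add_distrib, tdeg_eq, Nat.cast_sum, Finset.sum_smul]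
  exact Finset.sum_congr rfl fun l _ => dR_kl l m

theorem kap_kl (l) (m : Mon s t) :
    kap (A l (dnv l) (bs m : Omega k s t)) + A l (dnv l) (kap (bs m)) = 0 := by
  rw [kap_apply, kap_apply, map_sum, ← Finset.sum_add_distrib]
  apply Finset.sum_eq_zero
  intro l' _
  by_cases h : l' = l
  · subst h; rw [A_sq, add_zero]
  · exact A_anti h _ _ _

open Classical in
/-- homotopy -/
noncomputable def hom (k : Type) [Field k] (p : ℕ) (w : Fin s ⊕ Fin t → ℕ) : Omega k s t →ₗ[k] Omega k s t :=
  if h : ∃ l, ¬ p ∣ w l then ((w h.choose : k)⁻¹) • A h.choose (dnv h.choose) else 0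

/-- homotopy -/
noncomputable def Ho (k : Type) [Field k] (s t p : ℕ) : Omega k s t →ₗ[k] Omega k s t :=
  lin fun m => hom k p (wt m) (bs m)

open Classical in
/-- projection -/
noncomputable def pr (k : Type) [Field k] (s t p : ℕ) : Omega k s t →ₗ[k] Omega k s t :=
  lin fun m => if ∀ l, p ∣ wt m l then bs m else 0

theorem Ho_W (p : ℕ) {w : Fin s ⊕ Fin t → ℕ} {x : Omega k s t} (hx : x ∈ OmW k w) :
    Ho k s t p x = hom k p w x := by
  refine eq_on_OmW ?_ hx
  rintro m rfl
  exact lin_bs _ _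

open Classical in
theorem pr_W (p : ℕ) {w : Fin s ⊕ Fin t → ℕ} {x : Omega k s t} (hx : x ∈ OmW k w) :
    pr k s t p x = if ∀ l, p ∣ w l then x else 0 := by
  have := eq_on_OmW (f := pr k s t p) (g := if ∀ l, p ∣ w l then LinearMap.id else 0) ?_ hx
  · rw [this]; split_ifs <;> rfl
  · rintro m rfl
    refine (lin_bs _ _).trans ?_
    split_ifs <;> rfl

theorem Ho_mem (p : ℕ) {w : Fin s ⊕ Fin t → ℕ} {x : Omega k s t} (hx : x ∈ OmW k w) :
    Ho k s t p x ∈ OmW k w := by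
  rw [Ho_W p hx]
  unfold hom
  split_ifs
  · exact Submodule.smul_mem _ _ (A_mem _ _ hx)
  · exact zero_mem _

theorem pr_mem (p : ℕ) {w : Fin s ⊕ Fin t → ℕ} {x : Omega k s t} (hx : x ∈ OmW k w) :
    pr k s t p x ∈ OmW k w := by
  classical
  rw [pr_W p hx]
  split_ifs
  · exact hx
  · exact zero_mem _

theorem Ho_homotopy (p : ℕ) [CharP k p] (x : Omega k s t) :
    dR (Ho k s t p x) + Ho k s t p (dR x) = x - pr k s t p x := by
  classical
  have : dR ∘ₗ Ho k s t p + Ho k s t p ∘ₗ dR = LinearMap.id - pr k s t p := by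
    apply lin_ext
    intro m
    simp only [LinearMap.add_apply, LinearMap.comp_apply, LinearMap.sub_apply, LinearMap.id_apply]
    rw [Ho_W p (bs_mem m), Ho_W p (dR_mem (bs_mem m)), pr_W p (bs_mem m)]
    unfold hom
    by_cases h : ∃ l, ¬ p ∣ wt m l
    · rw [dif_pos h]
      have h' : ¬ ∀ l, p ∣ wt m l := by push Not; exact h
      rw [if_neg h', sub_zero, LinearMap.smul_apply, LinearMap.smul_apply, map_smul, ← smul_add, dR_kl,
        smul_smul, inv_mul_cancel₀, one_smul]
      intro h0
      exact h.choose_spec ((CharP.cast_eq_zero_iff k p _).1 h0)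
    · rw [dif_neg h]
      push Not at h
      rw [if_pos h]
      simp
  exact LinearMap.congr_fun this x

theorem Ho_kap (p : ℕ) (x : Omega k s t) :
    kap (Ho k s t p x) + Ho k s t p (kap x) = 0 := by
  have : kap ∘ₗ Ho k s t p + Ho k s t p ∘ₗ kap = 0 := by
    apply lin_ext
    intro m
    simp only [LinearMap.add_apply, LinearMap.comp_apply, LinearMap.zero_apply]
    rw [Ho_W p (bs_mem m), Ho_W p (kap_mem (bs_mem m))]
    unfold hom
    split_ifs with h
    · rw [LinearMap.smul_apply, LinearMap.smul_apply, map_smul, ← smul_add, kap_kl, smul_zero]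
    · simp
  exact LinearMap.congr_fun this x

theorem pr_kap (p : ℕ) (x : Omega k s t) : kap (pr k s t p x) = pr k s t p (kap x) := by
  classical
  have : kap ∘ₗ pr k s t p = pr k s t p ∘ₗ kap := by
    apply lin_ext
    intro m
    simp only [LinearMap.comp_apply]
    rw [pr_W p (bs_mem m), pr_W p (kap_mem (bs_mem m))]
    split_ifs with h <;> simp
  exact LinearMap.congr_fun this x

theorem pr_dR (p : ℕ) [CharP k p] (x : Omega k s t) : pr k s t p (dR x) = 0 := by
  classical
  have : pr k s t p ∘ₗ dR = 0 := by
    apply lin_ext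
    intro m
    simp only [LinearMap.comp_apply, LinearMap.zero_apply]
    rw [pr_W p (dR_mem (bs_mem m))]
    split_ifs with h
    · rw [dR_bs]
      apply Finset.sum_eq_zero
      intro l _
      rw [(CharP.cast_eq_zero_iff k p _).2 (h l), zero_smul]
    · rfl
  exact LinearMap.congr_fun this x

theorem Tot_iff (n : ℕ) (x : Omega k s t) :
    x ∈ OmegaTot k s t n ↔ ∀ m, x.toFun m ≠ 0 → tdeg s t m = n := by
  unfold OmegaTot
  refine (Finsupp.mem_supported (M := k) k x).trans ?_
  constructor
  · intro h m hm
    exact h (Finset.mem_coe.2 ((Finsupp.mem_support_toFun x m).2 hm))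
  · intro h m hm
    exact h m ((Finsupp.mem_support_toFun x m).1 (Finset.mem_coe.1 hm))

theorem Tot_span (n : ℕ) :
    OmegaTot k s t n = Submodule.span k (bs '' {m | tdeg s t m = n}) :=
  Finsupp.supported_eq_span_single k _

theorem OmW_le_Tot (m : Mon s t) : OmW k (wt m) ≤ OmegaTot k s t (tdeg s t m) := by
  rw [Tot_span]
  apply Submodule.span_mono
  apply Set.image_mono
  intro m' hm'
  simp only [Set.mem_ofPred_eq] at hm' ⊢
  rw [tdeg_eq, tdeg_eq, hm']

theorem pres_Tot {f : Omega k s t →ₗ[k] Omega k s t} (h : ∀ m, f (bs m) ∈ OmW k (wt m)) {n : ℕ} {x}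
    (hx : x ∈ OmegaTot k s t n) : f x ∈ OmegaTot k s t n := by
  have : OmegaTot k s t n ≤ (OmegaTot k s t n).comap f := by
    conv_lhs => rw [Tot_span]
    rw [Submodule.span_le]
    rintro _ ⟨m, hm, rfl⟩
    have := OmW_le_Tot m (h m)
    rwa [hm] at this
  exact this hx

theorem dR_kap_Tot {n : ℕ} {x} (hx : x ∈ OmegaTot k s t n) : dR (kap x) + kap (dR x) = (n : k) • x := by
  rw [Tot_span] at hx
  have := LinearMap.eqOn_span (f := dR ∘ₗ kap + kap ∘ₗ dR) (g := (n : k) • (LinearMap.id : Omega k s t →ₗ[k] _)) ?_ hx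
  · exact this
  · rintro _ ⟨m, hm, rfl⟩
    simp only [LinearMap.add_apply, LinearMap.comp_apply, LinearMap.smul_apply, LinearMap.id_apply, dR_kap]
    rw [hm]

/-- the map on monomials underlying theta -/
def Ph (p : ℕ) (m : Mon s t) : Mon s t := mk (fun l => p * wt m l) (fl m)

theorem val_Ph {p : ℕ} (hp : 0 < p) (m : Mon s t) : Val (fun l => p * wt m l) (fl m) := by
  intro l
  have := val_wt m l
  nlinarith

theorem wt_Ph {p : ℕ} (hp : 0 < p) (m : Mon s t) : wt (Ph p m) = fun l => p * wt m l :=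
  wt_mk (val_Ph hp m)

theorem fl_Ph (p : ℕ) (m : Mon s t) : fl (Ph p m) = fl m := fl_mk _ _

theorem Ph_inj {p : ℕ} (hp : 0 < p) {m m' : Mon s t} (h : Ph p m = Ph p m') : m = m' := by
  apply mon_ext
  · have := congrArg wt h
    rw [wt_Ph hp, wt_Ph hp] at this
    funext l
    have := congrFun this l
    exact Nat.eq_of_mul_eq_mul_left hp this
  · have := congrArg fl h
    rwa [fl_Ph, fl_Ph] at this

theorem tdeg_Ph {p : ℕ} (hp : 0 < p) (m : Mon s t) : tdeg s t (Ph p m) = p * tdeg s t m := by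
  rw [tdeg_eq, tdeg_eq, wt_Ph hp, Finset.mul_sum]

theorem Ph_tog {p : ℕ} (hp : 0 < p) (l) {m : Mon s t} (h : 0 < wt m l) : tog l (Ph p m) = Ph p (tog l m) := by
  have h' : 0 < wt (Ph p m) l := by rw [wt_Ph hp]; positivity
  apply mon_ext
  · rw [wt_tog h', wt_Ph hp, wt_Ph hp, wt_tog h]
  · rw [fl_tog, fl_Ph, fl_Ph, fl_tog]

theorem Ph_surj {p : ℕ} (hp : 0 < p) {m : Mon s t} (h : ∀ l, p ∣ wt m l) : ∃ m', Ph p m' = m := by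
  have hv : Val (fun l => wt m l / p) (fl m) := by
    intro l
    obtain ⟨c, hc⟩ := h l
    have := val_wt m l
    rw [hc] at this
    simp only [hc, Nat.mul_div_cancel_left _ hp]
    cases hf : fl m l
    · simp
    · rw [hf] at this
      simp at this ⊢
      rcases Nat.eq_zero_or_pos c with rfl | hc
      · simp at this
      · exact hc
  refine ⟨mk (fun l => wt m l / p) (fl m), ?_⟩
  apply mon_ext
  · rw [wt_Ph hp, wt_mk hv]
    funext l
    exact Nat.mul_div_cancel' (h l)
  · rw [fl_Ph, fl_mk]

theorem toFun_add (x y : Omega k s t) (m) : (x + y).toFun m = x.toFun m + y.toFun m := rfl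
theorem toFun_smul (c : k) (y : Omega k s t) (m) : (c • y).toFun m = c * y.toFun m := rfl
theorem toFun_zero (m) : (0 : Omega k s t).toFun m = 0 := rfl
open Classical in
theorem toFun_bs (m m') : (bs m : Omega k s t).toFun m' = if m = m' then 1 else 0 :=
  (Finsupp.single_apply (a := m) (a' := m') (b := (1 : k)))
theorem om_ext {x y : Omega k s t} (h : ∀ m, x.toFun m = y.toFun m) : x = y :=
  Finsupp.ext h

section theta
set_option linter.unusedSectionVars false
variable {p : ℕ} [Fact p.Prime] [CharP k p] {θ : Omega k s t → Omega k s t}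

theorem th_coef (ha : ∀ z w, θ (z + w) = θ z + θ w)
    (hs : ∀ (c : k) (z : Omega k s t), θ (c • z) = (c ^ p) • θ z)
    (hb : ∀ m, θ (bs m) = bs (Ph p m)) (z : Omega k s t) (m) : (θ z).toFun (Ph p m) = (z.toFun m) ^ p := by
  have hp : 0 < p := (Fact.out : p.Prime).pos
  have h0 : θ 0 = 0 := by have := ha 0 0; simpa using this
  induction z using omega_ind with
  | h0 => rw [h0, toFun_zero, toFun_zero, zero_pow hp.ne']
  | ha x y hx hy => rw [ha, toFun_add, toFun_add, hx, hy, add_pow_char]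
  | hs c m' =>
    classical
    rw [hs, hb, toFun_smul, toFun_smul, toFun_bs, toFun_bs, mul_pow]
    by_cases h : m' = m
    · simp [h]
    · rw [if_neg h, if_neg (fun h' => h (Ph_inj hp h')), zero_pow hp.ne']

theorem th_kap (ha : ∀ z w, θ (z + w) = θ z + θ w)
    (hs : ∀ (c : k) (z : Omega k s t), θ (c • z) = (c ^ p) • θ z)
    (hb : ∀ m, θ (bs m) = bs (Ph p m)) (z : Omega k s t) : kap (θ z) = θ (kap z) := by
  have hp : 0 < p := (Fact.out : p.Prime).pos
  have h0 : θ 0 = 0 := by have := ha 0 0; simpa using this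
  have hsum : ∀ f : Fin s ⊕ Fin t → Omega k s t, θ (∑ l, f l) = ∑ l, θ (f l) := by
    intro f
    let θ' : Omega k s t →+ Omega k s t := ⟨⟨θ, h0⟩, ha⟩
    exact map_sum θ' f _
  induction z using omega_ind with
  | h0 => rw [h0, map_zero, h0]
  | ha x y hx hy => rw [ha, map_add, map_add, hx, hy, ha]
  | hs c m =>
    rw [hs, hb, map_smul, map_smul, hs, kap_apply, kap_apply, hsum]
    congr 1
    apply Finset.sum_congr rfl
    intro l _
    rw [A_bs, A_bs, fl_Ph, wt_Ph hp]
    by_cases h : 0 < wt m l ∧ fl m l = dnv l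
    · have h' : 0 < p * wt m l ∧ fl m l = dnv l := ⟨Nat.mul_pos hp h.1, h.2⟩
      rw [if_pos h, if_pos h', hs, hb, Ph_tog hp l h.1]
      congr 1
      rcases sgn_pm (k := k) (fl m) l with e | e
      · rw [e, one_pow]
      · rw [e, neg_one_pow_char]
    · have h' : ¬ (0 < p * wt m l ∧ fl m l = dnv l) := fun h' => h ⟨pos_of_mul_pos_right h'.1 (Nat.zero_le _), h'.2⟩
      rw [if_neg h, if_neg h', h0]

theorem th_dR (ha : ∀ z w, θ (z + w) = θ z + θ w)
    (hs : ∀ (c : k) (z : Omega k s t), θ (c • z) = (c ^ p) • θ z)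
    (hb : ∀ m, θ (bs m) = bs (Ph p m)) (z : Omega k s t) : dR (θ z) = 0 := by
  have hp : 0 < p := (Fact.out : p.Prime).pos
  have h0 : θ 0 = 0 := by have := ha 0 0; simpa using this
  induction z using omega_ind with
  | h0 => rw [h0, map_zero]
  | ha x y hx hy => rw [ha, map_add, hx, hy, add_zero]
  | hs c m =>
    rw [hs, hb, map_smul, dR_bs, wt_Ph hp]
    simp

theorem th_pr (ha : ∀ z w, θ (z + w) = θ z + θ w)
    (hs : ∀ (c : k) (z : Omega k s t), θ (c • z) = (c ^ p) • θ z)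
    (hb : ∀ m, θ (bs m) = bs (Ph p m)) (z : Omega k s t) : pr k s t p (θ z) = θ z := by
  have hp : 0 < p := (Fact.out : p.Prime).pos
  have h0 : θ 0 = 0 := by have := ha 0 0; simpa using this
  induction z using omega_ind with
  | h0 => rw [h0, map_zero]
  | ha x y hx hy => rw [ha, map_add, hx, hy]
  | hs c m =>
    classical
    rw [hs, hb, map_smul, pr_W p (bs_mem _), if_pos]
    intro l
    rw [wt_Ph hp]
    exact dvd_mul_right _ _

theorem th_Tot (ha : ∀ z w, θ (z + w) = θ z + θ w)
    (hs : ∀ (c : k) (z : Omega k s t), θ (c • z) = (c ^ p) • θ z)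
    (hb : ∀ m, θ (bs m) = bs (Ph p m)) {n} {z : Omega k s t} (hz : z ∈ OmegaTot k s t n) :
    θ z ∈ OmegaTot k s t (p * n) := by
  have hp : 0 < p := (Fact.out : p.Prime).pos
  have h0 : θ 0 = 0 := by have := ha 0 0; simpa using this
  rw [Tot_span] at hz
  induction hz using Submodule.span_induction with
  | mem x hx =>
    obtain ⟨m, hm, rfl⟩ := hx
    rw [hb, Tot_span]
    apply Submodule.subset_span
    refine ⟨_, ?_, rfl⟩
    have hm : tdeg s t m = n := hm
    change tdeg s t (Ph p m) = p * n
    rw [tdeg_Ph hp, hm]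
  | zero => rw [h0]; exact zero_mem _
  | add x y _ _ hx hy => rw [ha]; exact add_mem hx hy
  | smul c x _ hx => rw [hs]; exact Submodule.smul_mem _ _ hx

theorem th_surj [ExpChar k p] [PerfectRing k p] (ha : ∀ z w, θ (z + w) = θ z + θ w)
    (hs : ∀ (c : k) (z : Omega k s t), θ (c • z) = (c ^ p) • θ z)
    (hb : ∀ m, θ (bs m) = bs (Ph p m)) (u : Omega k s t) : ∃ z, θ z = pr k s t p u := by
  have hp : 0 < p := (Fact.out : p.Prime).pos
  have h0 : θ 0 = 0 := by have := ha 0 0; simpa using this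
  induction u using omega_ind with
  | h0 => exact ⟨0, by rw [h0, map_zero]⟩
  | ha x y hx hy =>
    obtain ⟨z, hz⟩ := hx
    obtain ⟨w, hw⟩ := hy
    exact ⟨z + w, by rw [ha, map_add, hz, hw]⟩
  | hs c m =>
    classical
    rw [map_smul, pr_W p (bs_mem _)]
    split_ifs with h
    · obtain ⟨m', rfl⟩ := Ph_surj hp h
      obtain ⟨c', hc'⟩ := (PerfectRing.bijective_frobenius (R := k) (p := p)).2 c
      refine ⟨c' • bs m', ?_⟩
      rw [hs, hb, ← hc']
    · exact ⟨0, by rw [h0, smul_zero]⟩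

theorem main_aux [ExpChar k p] [PerfectRing k p] (ha : ∀ z w, θ (z + w) = θ z + θ w)
    (hs : ∀ (c : k) (z : Omega k s t), θ (c • z) = (c ^ p) • θ z)
    (hb : ∀ m, θ (bs m) = bs (Ph p m))
    (K : ℕ → Submodule k (Omega k s t))
    (hK : ∀ n x, x ∈ K n ↔ x ∈ OmegaTot k s t n ∧ kap x = 0) (n : ℕ) :
      (∀ x ∈ K (p * n), dR x ∈ K (p * n)) ∧
      (∀ z ∈ K n, θ z ∈ K (p * n) ∧ dR (θ z) = 0) ∧
      (∀ z ∈ K n, ∀ w ∈ K n, (∃ y ∈ K (p * n), θ z - θ w = dR y) → z = w) ∧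
      (∀ u ∈ K (p * n), dR u = 0 → ∃ z ∈ K n, ∃ y ∈ K (p * n), θ z - u = dR y) ∧
      (∀ u ∈ K (p * n), dR u = 0 → u ∈ LinearMap.range (dR : Omega k s t →ₗ[k] _) →
        ∃ y ∈ K (p * n), u = dR y) := by
  have hp : 0 < p := (Fact.out : p.Prime).pos
  have h0 : θ 0 = 0 := by have := ha 0 0; simpa using this
  have hsub : ∀ z w, θ (z - w) = θ z - θ w := by
    intro z w
    have := ha (z - w) w
    rw [sub_add_cancel] at this
    rw [this, add_sub_cancel_right]
  have hinj : ∀ z, θ z = 0 → z = 0 := by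
    intro z hz
    apply om_ext
    intro m
    have := th_coef ha hs hb z m
    rw [hz, toFun_zero] at this
    rw [toFun_zero]
    exact (pow_eq_zero_iff hp.ne').1 this.symm
  have hH : ∀ u ∈ K (p * n), Ho k s t p u ∈ K (p * n) := by
    intro u hu
    rw [hK] at hu ⊢
    refine ⟨pres_Tot (fun m => Ho_mem p (bs_mem m)) hu.1, ?_⟩
    have := Ho_kap p u
    rwa [hu.2, map_zero, add_zero] at this
  have hHd : ∀ u : Omega k s t, dR u = 0 → dR (Ho k s t p u) = u - pr k s t p u := by
    intro u hu
    have := Ho_homotopy p u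
    rwa [hu, map_zero, add_zero] at this
  refine ⟨?_, ?_, ?_, ?_, ?_⟩
  · intro x hx
    rw [hK] at hx ⊢
    refine ⟨pres_Tot (fun m => dR_mem (bs_mem m)) hx.1, ?_⟩
    have := dR_kap_Tot hx.1
    rw [hx.2, map_zero, zero_add] at this
    rw [this]; simp
  · intro z hz
    rw [hK] at hz ⊢
    refine ⟨⟨th_Tot ha hs hb hz.1, ?_⟩, th_dR ha hs hb z⟩
    rw [th_kap ha hs hb, hz.2, h0]
  · rintro z hz w hw ⟨y, hy, h⟩
    rw [← hsub] at h
    have := th_pr ha hs hb (z - w)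
    rw [h, pr_dR, ← h] at this
    exact sub_eq_zero.1 (hinj _ this.symm)
  · intro u hu hdu
    obtain ⟨z, hz⟩ := th_surj ha hs hb u
    refine ⟨z, ?_, - Ho k s t p u, neg_mem (hH u hu), ?_⟩
    · have hu' := hu
      rw [hK] at hu' ⊢
      constructor
      · rw [Tot_iff]
        intro m hm
        have h1 := th_coef ha hs hb z m
        rw [hz] at h1
        have h2 : pr k s t p u ∈ OmegaTot k s t (p * n) := pres_Tot (fun m => pr_mem p (bs_mem m)) hu'.1
        have h3 := (Tot_iff _ _).1 h2 (Ph p m) (by rw [h1]; exact pow_ne_zero _ hm)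
        rw [tdeg_Ph hp] at h3
        exact Nat.eq_of_mul_eq_mul_left hp h3
      · apply hinj
        rw [← th_kap ha hs hb, hz, pr_kap, hu'.2, map_zero]
    · rw [map_neg, hHd u hdu, hz]; abel
  · rintro u hu hdu ⟨y, hy⟩
    refine ⟨_, hH u hu, ?_⟩
    rw [hHd u hdu, ← hy, pr_dR, sub_zero]
end theta


theorem mul_XN (i : Fin s) (N : ℕ) {w : Fin s ⊕ Fin t → ℕ} {f} (h : Val w f) :
    (bs ((Pi.single i N, fun _ => false, fun _ => false, 0) : Mon s t) * bs (mk w f) : Omega k s t)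
      = bs (mk (w + Pi.single (.inl i) N) f) := by
  rw [bs_mul_bs]
  have e1 : mulCoef k s t (Pi.single i N, fun _ => false, fun _ => false, 0) (mk w f) = 1 := by
    simp [mulCoef, parA, invCount]
  rw [e1, one_smul]
  congr 1
  unfold merge mk
  simp only [Prod.mk.injEq]
  refine ⟨?_, ?_, ?_, ?_⟩
  · funext i'
    have := h (.inl i')
    by_cases hi : i' = i
    · subst hi; simp; omega
    · simp [hi]
  · simp
  · simp
  · funext j; simp

theorem inv_single {u : ℕ} (i : Fin u) (b : Fin u → Bool) :
    invCount (fun i' => decide (i' = i)) b = (univ.filter fun i' => b i' = true ∧ i' < i).card := by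
  unfold invCount
  refine Finset.card_bij (fun q _ => q.2) ?_ ?_ ?_
  · rintro ⟨a, b'⟩ h
    simp at h ⊢
    obtain ⟨rfl, h1, h2⟩ := h
    exact ⟨h1, h2⟩
  · rintro ⟨a, b'⟩ h ⟨a', b''⟩ h' e
    simp at h h' e ⊢
    exact ⟨h.1.trans h'.1.symm, e⟩
  · intro c hc
    simp at hc ⊢
    exact hc

theorem mul_XAN (i : Fin s) (N : ℕ) {w : Fin s ⊕ Fin t → ℕ} {f} (h : Val w f) :
    (bs ((Pi.single i N, fun _ => false, fun i' => decide (i' = i), 0) : Mon s t) * bs (mk w f) : Omega k s t)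
      = if f (.inl i) = true then 0 else
        (-1 : k) ^ ((univ.filter fun i' => f (.inl i') = true ∧ i' < i).card) •
        bs (mk (w + Pi.single (.inl i) (N + 1)) (Function.update f (.inl i) true)) := by
  rw [bs_mul_bs]
  split_ifs with hf
  · have e1 : mulCoef k s t (Pi.single i N, fun _ => false, fun i' => decide (i' = i), 0) (mk w f) = 0 := by
      simp [mulCoef, mk, hf]
    rw [e1, zero_smul]
  have e1 : mulCoef k s t (Pi.single i N, fun _ => false, fun i' => decide (i' = i), 0) (mk w f) =
      (-1 : k) ^ ((univ.filter fun i' => f (.inl i') = true ∧ i' < i).card) := by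
    unfold mulCoef
    rw [if_neg (by simpa [mk] using hf)]
    simp only [inv_single]
    simp [parA, mk, invCount]
    congr!
  rw [e1]
  congr 2
  unfold merge mk
  simp only [Prod.mk.injEq]
  refine ⟨?_, ?_, ?_, ?_⟩
  · funext i'
    have := h (.inl i')
    by_cases hi : i' = i
    · subst hi; simp [hf]; omega
    · simp [hi]
  · simp
  · funext i'
    by_cases hi : i' = i
    · subst hi; simp
    · simp [hi]
  · funext j; simp

theorem mul_UN (j : Fin t) (N : ℕ) {w : Fin s ⊕ Fin t → ℕ} {f} (h : Val w f) :
    (bs ((0, fun j' => decide (j' = j), fun _ => false, Pi.single j N) : Mon s t) * bs (mk w f) : Omega k s t)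
      = if f (.inr j) = true then 0 else
        ((-1 : k) ^ (N * cnt (fun j' => f (.inr j')) + N * cnt (fun i => f (.inl i)) +
          (univ.filter fun j' => f (.inr j') = true ∧ j' < j).card) * ((N + w (.inr j)).choose N : k)) •
        bs (mk (w + Pi.single (.inr j) (N + 1)) (Function.update f (.inr j) true)) := by
  rw [bs_mul_bs]
  split_ifs with hf
  · have e1 : mulCoef k s t (0, fun j' => decide (j' = j), fun _ => false, Pi.single j N) (mk w f) = 0 := by
      simp [mulCoef, mk, hf]
    rw [e1, zero_smul]
  have e1 : mulCoef k s t (0, fun j' => decide (j' = j), fun _ => false, Pi.single j N) (mk w f) =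
      ((-1 : k) ^ (N * cnt (fun j' => f (.inr j')) + N * cnt (fun i => f (.inl i)) +
          (univ.filter fun j' => f (.inr j') = true ∧ j' < j).card) * ((N + w (.inr j)).choose N : k)) := by
    unfold mulCoef
    rw [if_neg (by simpa [mk] using hf)]
    simp only [inv_single]
    congr 1
    · congr 1
      simp [parA, parS, mk, invCount, Finset.sum_pi_single']
      ring_nf
      congr!
    · rw [Finset.prod_eq_single j]
      · simp [mk, hf]
      · intro j' _ hj
        simp [hj]
      · simp
  rw [e1]
  congr 2
  unfold merge mk
  simp only [Prod.mk.injEq]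
  refine ⟨?_, ?_, ?_, ?_⟩
  · funext i'; simp
  · funext i'
    by_cases hi : i' = j
    · subst hi; simp
    · simp [hi]
  · simp
  · funext i'
    have := h (.inr i')
    by_cases hi : i' = j
    · subst hi; simp [hf]; omega
    · simp [hi]

theorem mul_GN (j : Fin t) (N : ℕ) {w : Fin s ⊕ Fin t → ℕ} {f} (h : Val w f) :
    (bs (GA s t j N) * bs (mk w f) : Omega k s t)
      = ((-1 : k) ^ (N * cnt (fun j' => f (.inr j')) + N * cnt (fun i => f (.inl i))) *
          ((N + (w (.inr j) - (f (.inr j)).toNat)).choose N : k)) •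
        bs (mk (w + Pi.single (.inr j) N) f) := by
  rw [bs_mul_bs]
  have e1 : mulCoef k s t (GA s t j N) (mk w f) =
      ((-1 : k) ^ (N * cnt (fun j' => f (.inr j')) + N * cnt (fun i => f (.inl i))) *
          ((N + (w (.inr j) - (f (.inr j)).toNat)).choose N : k)) := by
    unfold mulCoef
    rw [if_neg (by simp [mk, GA])]
    congr 1
    · congr 1
      simp [parA, parS, mk, invCount, GA, Finset.sum_pi_single']
    · rw [Finset.prod_eq_single j]
      · simp [mk, GA]
      · intro j' _ hj
        simp [hj, GA]
      · simp
  rw [e1]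
  congr 2
  unfold merge mk GA
  simp only [Prod.mk.injEq]
  refine ⟨?_, ?_, ?_, ?_⟩
  · funext i'; simp
  · simp
  · simp
  · funext i'
    have := h (.inr i')
    by_cases hi : i' = j
    · subst hi; simp; omega
    · simp [hi]

theorem A_mk (l v) {w : Fin s ⊕ Fin t → ℕ} {f} (h : Val w f) :
    A l v (bs (mk w f) : Omega k s t) =
      if 0 < w l ∧ f l = v then sgn k f l • bs (mk w (Function.update f l (!v))) else 0 := by
  rw [A_bs, tog, wt_mk h, fl_mk]
  by_cases h1 : 0 < w l ∧ f l = v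
  · rw [if_pos h1, if_pos h1, h1.2]
  · rw [if_neg h1, if_neg h1]

theorem dR_mk {w : Fin s ⊕ Fin t → ℕ} {f} (h : Val w f) :
    dR (bs (mk w f) : Omega k s t) = ∑ l, (w l : k) • A l (!dnv l) (bs (mk w f)) := by
  rw [dR_bs, wt_mk h]

theorem pow_card {u : ℕ} (P : Fin u → Prop) [DecidablePred P] :
    (-1 : k) ^ ((univ.filter P).card) = ∏ i, if P i then -1 else 1 := by
  rw [Finset.prod_ite]; simp

theorem sgn_inl (f : Fin s ⊕ Fin t → Bool) (i) :
    sgn k f (.inl i) = (-1 : k) ^ ((univ.filter fun i' => f (.inl i') = true ∧ i' < i).card) := by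
  unfold sgn
  rw [Fintype.prod_sum_type, pow_card]
  simp [bef, and_comm]
  refine Finset.prod_congr rfl fun x _ => ?_
  by_cases hx : x < i ∧ f (.inl x) = true
  · exact (if_pos hx).trans (if_pos hx).symm
  · exact (if_neg hx).trans (if_neg hx).symm

theorem sgn_inr (f : Fin s ⊕ Fin t → Bool) (j) (h : ∀ j' ≤ j, f (.inr j') = false) :
    sgn k f (.inr j) = (-1 : k) ^ (cnt (fun j' => f (.inr j')) + cnt (fun i => f (.inl i))) := by
  unfold sgn cnt
  rw [Fintype.prod_sum_type, pow_add, pow_card, pow_card, mul_comm]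
  congr 1
  · apply Finset.prod_congr rfl
    intro j' _
    by_cases hj : j' ≤ j
    · simp [h j' hj]
    · simp [bef, not_le.1 hj]
  · simp [bef]

theorem mon_ind {P : Mon s t → Prop} (h1 : P (mk 0 (fun _ => false)))
    (hX : ∀ i w f, Val w f → P (mk w f) → P (mk (w + Pi.single (.inl i) 1) f))
    (hU : ∀ j w f, Val w f → (∀ i, w (.inl i) = (f (.inl i)).toNat) → (∀ j' ≤ j, f (.inr j') = false) →
      P (mk w f) → P (mk (w + Pi.single (.inr j) 1) (Function.update f (.inr j) true)))
    (hXA : ∀ i w f, Val w f → (∀ i, w (.inl i) = (f (.inl i)).toNat) → (∀ j, f (.inr j) = false) →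
      (∀ i' ≤ i, f (.inl i') = false) →
      P (mk w f) → P (mk (w + Pi.single (.inl i) 1) (Function.update f (.inl i) true)))
    (hG : ∀ j N w, 0 < N → (∀ i, w (.inl i) = 0) → w (.inr j) = 0 →
      P (mk w (fun _ => false)) → P (mk (w + Pi.single (.inr j) N) (fun _ => false))) (m : Mon s t) : P m := by
  suffices H : ∀ n, ∀ w f, Val w f → ∑ l, w l = n → P (mk w f) by
    have := H _ (wt m) (fl m) (val_wt m) rfl
    rwa [mk_wt] at this
  intro n
  induction n using Nat.strong_induction_on with
  | _ n ih =>
  intro w f hv hn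
  -- removing from a coordinate
  have key : ∀ l N, 0 < N → N ≤ w l → ∃ w' : Fin s ⊕ Fin t → ℕ, w = w' + Pi.single l N ∧ ∑ l, w' l < n ∧ (∀ l', l' ≠ l → w' l' = w l') ∧
      w' l = w l - N := by
    intro l N hN hle
    have e : w = Function.update w l (w l - N) + Pi.single l N := by
      funext l'
      by_cases h : l' = l
      · subst h; simp; omega
      · simp [h]
    refine ⟨Function.update w l (w l - N), e, ?_, fun l' h => by simp [h], by simp⟩
    have : ∑ l', w l' = ∑ l', Function.update w l (w l - N) l' + N := by
      conv_lhs => rw [e]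
      simp [Finset.sum_add_distrib, Finset.sum_pi_single']
    omega
  by_cases c1 : ∃ i, (f (.inl i)).toNat < w (.inl i)
  · obtain ⟨i, hi⟩ := c1
    obtain ⟨w', rfl, hlt, hw1, hw2⟩ := key (.inl i) 1 one_pos (by omega)
    have hv' : Val w' f := by
      intro l
      by_cases h : l = .inl i
      · subst h; omega
      · rw [hw1 l h]; exact hv l
    exact hX i w' f hv' (ih _ hlt w' f hv' rfl)
  have c1' : ∀ i, w (.inl i) = (f (.inl i)).toNat := by
    intro i
    have := hv (.inl i)
    push Not at c1
    have := c1 i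
    omega
  by_cases c2 : ∃ j, f (.inr j) = true
  · obtain ⟨j, hj, hmin⟩ : ∃ j, f (.inr j) = true ∧ ∀ j' < j, f (.inr j') = false := by
      classical
      refine ⟨_, wellFounded_lt.min_mem {j | f (.inr j) = true} c2, ?_⟩
      intro j' h
      have := fun h' => wellFounded_lt.not_lt_min {j | f (.inr j) = true} (x := j') h' h
      simpa using this
    have := hv (.inr j)
    rw [hj] at this
    obtain ⟨w', rfl, hlt, hw1, hw2⟩ := key (.inr j) 1 one_pos (by simpa using this)
    have ef : f = Function.update (Function.update f (.inr j) false) (.inr j) true := by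
      rw [Function.update_idem, ← hj, Function.update_eq_self]
    have hv' : Val w' (Function.update f (.inr j) false) := by
      intro l
      by_cases h : l = .inr j
      · subst h; simp
      · rw [Function.update_of_ne h, hw1 l h]; exact hv l
    rw [ef]
    refine hU j w' _ hv' ?_ ?_ (ih _ hlt w' _ hv' rfl)
    · intro i
      rw [hw1 _ (by simp), c1']
      simp
    · intro j' hj'
      rcases hj'.lt_or_eq with h | h
      · simp [h.ne, hmin j' h]
      · simp [h]
  have c2' : ∀ j, f (.inr j) = false := by simpa using c2
  by_cases c3 : ∃ i, f (.inl i) = true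
  · obtain ⟨j, hj, hmin⟩ : ∃ j, f (.inl j) = true ∧ ∀ j' < j, f (.inl j') = false := by
      classical
      refine ⟨_, wellFounded_lt.min_mem {j | f (.inl j) = true} c3, ?_⟩
      intro j' h
      have := fun h' => wellFounded_lt.not_lt_min {j | f (.inl j) = true} (x := j') h' h
      simpa using this
    have := hv (.inl j)
    rw [hj] at this
    obtain ⟨w', rfl, hlt, hw1, hw2⟩ := key (.inl j) 1 one_pos (by simpa using this)
    have ef : f = Function.update (Function.update f (.inl j) false) (.inl j) true := by
      rw [Function.update_idem, ← hj, Function.update_eq_self]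
    have hv' : Val w' (Function.update f (.inl j) false) := by
      intro l
      by_cases h : l = .inl j
      · subst h; simp
      · rw [Function.update_of_ne h, hw1 l h]; exact hv l
    rw [ef]
    refine hXA j w' _ hv' ?_ ?_ ?_ (ih _ hlt w' _ hv' rfl)
    · intro i
      by_cases h : i = j
      · subst h; rw [hw2, c1', hj]; simp
      · rw [hw1 _ (by simp [h]), c1']; simp [h]
    · intro j'; simp [c2']
    · intro j' hj'
      rcases hj'.lt_or_eq with h | h
      · simp [h.ne, hmin j' h]
      · simp [h]
  have c3' : ∀ j, f (.inl j) = false := by simpa using c3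
  have hf : f = fun _ => false := by
    funext l
    rcases l with l | l
    · exact c3' l
    · exact c2' l
  subst hf
  by_cases c4 : ∃ j, 0 < w (.inr j)
  · obtain ⟨j, hj⟩ := c4
    obtain ⟨w', hw, hlt, hw1, hw2⟩ := key (.inr j) (w (.inr j)) hj le_rfl
    rw [hw]
    refine hG j (w (.inr j)) w' hj ?_ ?_ (ih _ hlt w' _ (fun l => by simp) rfl)
    · intro i
      rw [hw1 _ (by simp), c1']; simp
    · rw [hw2]; simp
  · have : w = 0 := by
      funext l
      rcases l with l | l
      · simpa using c1' l
      · push Not at c4; have := c4 l; simp; omega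
    rw [this]; exact h1

theorem sum_split {F G : Fin s ⊕ Fin t → Omega k s t} {x} (l0) (h0 : x + F l0 = G l0)
    (h : ∀ l, l ≠ l0 → F l = G l) : x + ∑ l, F l = ∑ l, G l := by
  rw [← Finset.add_sum_erase _ _ (Finset.mem_univ l0), ← Finset.add_sum_erase _ G (Finset.mem_univ l0), ← add_assoc, h0]
  congr 1
  exact Finset.sum_congr rfl fun l hl => h l (Finset.ne_of_mem_erase hl)

theorem val_add {w : Fin s ⊕ Fin t → ℕ} {f} (h : Val w f) (l N) : Val (w + Pi.single l N) f := by
  intro l'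
  have := h l'
  simp only [Pi.add_apply]
  omega

theorem val_add_upd {w : Fin s ⊕ Fin t → ℕ} {f} (h : Val w f) (l v) :
    Val (w + Pi.single l 1) (Function.update f l v) :=
  val_upd (val_add h _ _) (by simp) _

theorem coh_mem (m : Mon s t) : (bs m : Omega k s t) ∈ OmegaCoh k s t (cdeg s t m) :=
  Finsupp.single_mem_supported k 1 (by simp)

theorem vS_eq (v0 v1) : vS k s t v0 v1 =
    ((∑ i, v0 i • bs (XS s t i)) + ∑ j, v1 j • bs (US s t j) : Omega k s t) := by
  have h1 : (∑ i, v0 i • bs (XS s t i) : Omega k s t) = ∑ i, (Finsupp.single (XS s t i) (v0 i) : Omega k s t) :=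
    Finset.sum_congr rfl fun i _ => (single_eq _ _).symm
  have h2 : (∑ i, v1 i • bs (US s t i) : Omega k s t) = ∑ i, (Finsupp.single (US s t i) (v1 i) : Omega k s t) :=
    Finset.sum_congr rfl fun i _ => (single_eq _ _).symm
  rw [h1, h2]; rfl

theorem vA_eq (v0 v1) : vA k s t v0 v1 =
    ((∑ i, v0 i • bs (XA s t i)) + ∑ j, v1 j • bs (GA s t j 1) : Omega k s t) := by
  have h1 : (∑ i, v0 i • bs (XA s t i) : Omega k s t) = ∑ i, (Finsupp.single (XA s t i) (v0 i) : Omega k s t) :=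
    Finset.sum_congr rfl fun i _ => (single_eq _ _).symm
  have h2 : (∑ i, v1 i • bs (GA s t i 1) : Omega k s t) = ∑ i, (Finsupp.single (GA s t i 1) (v1 i) : Omega k s t) :=
    Finset.sum_congr rfl fun i _ => (single_eq _ _).symm
  rw [h1, h2]; rfl

theorem vS_inl (i : Fin s) : vS k s t (Pi.single i 1) 0 = bs (XS s t i) := by
  rw [vS_eq]
  simp [Pi.single_apply]

theorem vS_inr (i : Fin t) : vS k s t 0 (Pi.single i 1) = bs (US s t i) := by
  rw [vS_eq]
  simp [Pi.single_apply]

theorem vA_inl (i : Fin s) : vA k s t (Pi.single i 1) 0 = bs (XA s t i) := by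
  rw [vA_eq]
  simp [Pi.single_apply]

theorem vA_inr (i : Fin t) : vA k s t 0 (Pi.single i 1) = bs (GA s t i 1) := by
  rw [vA_eq]
  simp [Pi.single_apply]

theorem gammaA_single (j : Fin t) (N : ℕ) : gammaA k s t (Pi.single j 1) N = bs (GA s t j N) := by
  unfold gammaA
  simp only [single_eq]
  rw [Finset.sum_eq_single (Pi.single j N)]
  · have : ∏ j', (Pi.single j 1 : Fin t → k) j' ^ (Pi.single j N : Fin t → ℕ) j' = 1 := by
      apply Finset.prod_eq_one
      intro j' _
      by_cases h : j' = j
      · subst h; simp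
      · simp [h]
    rw [this, one_smul]; rfl
  · intro e he hne
    rw [Finset.Nat.mem_antidiagonalTuple] at he
    obtain ⟨j', hj', h0⟩ : ∃ j', j' ≠ j ∧ e j' ≠ 0 := by
      by_contra! hcon
      apply hne
      have h1 : ∑ i, e i = e j := Finset.sum_eq_single j (fun b _ hb => hcon b hb) (by simp)
      funext j'
      by_cases h : j' = j
      · subst h; simp; omega
      · simp [h, hcon j' h]
    rw [Finset.prod_eq_zero (Finset.mem_univ j'), zero_smul]
    simp [hj', h0]
  · intro h
    exfalso
    apply h
    rw [Finset.Nat.mem_antidiagonalTuple]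
    simp [Finset.sum_pi_single']

theorem XA_eq (i : Fin s) : XA s t i = (Pi.single i 0, fun _ => false, fun i' => decide (i' = i), 0) := by
  simp [XA]
theorem US_eq (i : Fin t) : US s t i = (0, fun i' => decide (i' = i), fun _ => false, Pi.single i 0) := by
  simp [US]

theorem mul_XS (i : Fin s) {w : Fin s ⊕ Fin t → ℕ} {f} (h : Val w f) :
    (bs (XS s t i) * bs (mk w f) : Omega k s t) = bs (mk (w + Pi.single (.inl i) 1) f) := mul_XN i 1 h

theorem mul_XA (i : Fin s) {w : Fin s ⊕ Fin t → ℕ} {f} (h : Val w f) :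
    (bs (XA s t i) * bs (mk w f) : Omega k s t) = if f (.inl i) = true then 0 else
        sgn k f (.inl i) • bs (mk (w + Pi.single (.inl i) 1) (Function.update f (.inl i) true)) := by
  rw [XA_eq, mul_XAN i 0 h, sgn_inl]

theorem mul_US (j : Fin t) {w : Fin s ⊕ Fin t → ℕ} {f} (h : Val w f) :
    (bs (US s t j) * bs (mk w f) : Omega k s t) = if f (.inr j) = true then 0 else
        (-1 : k) ^ ((univ.filter fun j' => f (.inr j') = true ∧ j' < j).card) •
          bs (mk (w + Pi.single (.inr j) 1) (Function.update f (.inr j) true)) := by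
  rw [US_eq, mul_UN j 0 h]; simp

theorem mul_US_pos (j : Fin t) {w : Fin s ⊕ Fin t → ℕ} {f} (h : Val w f) (hj : ∀ j' ≤ j, f (.inr j') = false) :
    (bs (US s t j) * bs (mk w f) : Omega k s t) =
          bs (mk (w + Pi.single (.inr j) 1) (Function.update f (.inr j) true)) := by
  rw [mul_US j h, if_neg (by simp [hj j le_rfl]), Finset.card_eq_zero.2, pow_zero, one_smul]
  rw [Finset.filter_eq_empty_iff]
  rintro j' - ⟨h1, h2⟩
  rw [hj j' h2.le] at h1
  exact absurd h1 (by simp)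

theorem sgn_inl_one {f : Fin s ⊕ Fin t → Bool} {i} (h : ∀ i' < i, f (.inl i') = false) : sgn k f (.inl i) = 1 := by
  rw [sgn_inl, Finset.card_eq_zero.2, pow_zero]
  rw [Finset.filter_eq_empty_iff]
  rintro j' - ⟨h1, h2⟩
  rw [h j' h2] at h1
  exact absurd h1 (by simp)

theorem d_formula {d : Omega k s t →ₗ[k] Omega k s t} (hd : IsDeRham k s t d) (m : Mon s t) :
    d (bs m) = dR (bs m) := by
  obtain ⟨-, hv, hA, hL, -⟩ := hd
  have dXS : ∀ i, d (bs (XS s t i)) = bs (XA s t i) := by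
    intro i; rw [← vS_inl, hv, vA_inl]
  have dUS : ∀ i, d (bs (US s t i)) = bs (GA s t i 1) := by
    intro i; rw [← vS_inr, hv, vA_inr]
  have apart : ∀ w f, Val w f → (∀ i, w (.inl i) = (f (.inl i)).toNat) → (∀ j, f (.inr j) = false) →
      d (bs (mk w f)) = dR (bs (mk w f)) := by
    intro w f h h1 h2
    rw [hA, dR_mk h]
    · symm
      apply Finset.sum_eq_zero
      rintro (l | l) _
      · rw [A_mk _ _ h, if_neg, smul_zero]
        rw [h1]; rintro ⟨h3, h4⟩
        rw [h4] at h3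
        simp [dnv] at h3
      · rw [A_mk _ _ h, if_neg, smul_zero]
        rw [h2]; simp [dnv]
    · refine Finsupp.single_mem_supported k 1 ?_
      change (fun i => w (.inl i) - (f (.inl i)).toNat) = 0 ∧ (fun j => f (.inr j)) = fun _ => false
      refine ⟨?_, ?_⟩
      · funext i; simp [h1]
      · funext j; simp [h2]
  induction m using mon_ind with
  | h1 => exact apart _ _ (fun l => by simp) (by simp) (by simp)
  | hG j N w hN h1 h2 _ =>
    exact apart _ _ (fun l => by simp) (by simp [h1]) (by simp)
  | hXA i w f h h1 h2 h3 _ =>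
    refine apart _ _ (val_add_upd h _ _) ?_ ?_
    · intro i'
      by_cases hi : i' = i
      · subst hi; simp [h1, h3]
      · simp [hi, h1]
    · intro j; simp [h2]
  | hX i w f h ih =>
    rw [← mul_XS i h, hL _ _ (coh_mem _), dXS, ih]
    have e0 : cdeg s t (XS s t i) = 0 := by simp [cdeg, XS, cnt]
    rw [e0, pow_zero, one_smul, mul_XS i h, dR_mk h, dR_mk (val_add h _ _), bs_mul_sum]
    apply sum_split (.inl i)
    · rw [bs_mul_smul, mul_XA i h, A_mk _ _ h, A_mk _ _ (val_add h _ _)]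
      cases hf : f (.inl i)
      · simp only [dnv, Sum.elim_inl, Bool.not_true, Bool.false_eq_true, if_false, Pi.add_apply, Pi.single_eq_same,
          and_true, Nat.succ_pos, if_true]
        by_cases hw : 0 < w (.inl i)
        · rw [if_pos hw, bs_mul_smul, mul_XS i (val_upd h hw _)]
          push_cast
          rw [add_smul, one_smul, add_comm]; rfl
        · have : w (.inl i) = 0 := by omega
          rw [if_neg hw, this, bs_mul_zero]; simp
      · simp [dnv, bs_mul_zero]
    · intro l hl
      rw [bs_mul_smul, A_mk _ _ h, A_mk _ _ (val_add h _ _)]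
      simp only [Pi.add_apply, Pi.single_eq_of_ne hl, add_zero]
      split_ifs with hw
      · rw [bs_mul_smul, mul_XS i (val_upd h hw.1 _)]
      · rw [bs_mul_zero]
  | hU j w f h h1 h2 ih =>
    rw [← mul_US_pos j h h2, hL _ _ (coh_mem _), dUS, ih]
    have e0 : cdeg s t (US s t j) = 0 := by simp [cdeg, US, cnt]
    rw [e0, pow_zero, one_smul, mul_US_pos j h h2, dR_mk h, dR_mk (val_add_upd h _ _), bs_mul_sum]
    apply sum_split (.inr j)
    · rw [bs_mul_smul, mul_GN j 1 h, A_mk _ _ h, A_mk _ _ (val_add_upd h _ _), sgn_upd_not (bef_irrefl _), sgn_inr f j h2]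
      simp [dnv, h2 j le_rfl, bs_mul_zero, smul_smul]
      congr 1
      · ring
      · congr 2
        rw [← h2 j le_rfl, Function.update_eq_self]
    · intro l hl
      rw [bs_mul_smul, A_mk _ _ h, A_mk _ _ (val_add_upd h _ _)]
      simp only [Pi.add_apply, Pi.single_eq_of_ne hl, add_zero, Function.update_of_ne hl]
      split_ifs with hw
      · rcases l with i' | j'
        · exfalso
          rw [h1] at hw
          rw [hw.2] at hw
          simp [dnv] at hw
        · have hjj : j < j' := by
            by_contra hc
            have := h2 j' (not_lt.1 hc)
            rw [hw.2] at this
            simp [dnv] at this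
          rw [bs_mul_smul, mul_US_pos j (val_upd h hw.1 _), sgn_upd_not, Function.update_comm hl]
          · simp [bef]; exact hjj.le
          · intro j'' hj''
            rw [Function.update_of_ne]
            · exact h2 j'' hj''
            · intro e
              have e := Sum.inr_injective e
              omega
      · rw [bs_mul_zero]

theorem sgn_false {f : Fin s ⊕ Fin t → Bool} (h : ∀ l, f l = false) (l) : sgn k f l = 1 := by
  unfold sgn
  apply Finset.prod_eq_one
  intro l' _
  simp [h]

theorem k_formula {κ : Omega k s t →ₗ[k] Omega k s t} (hκ : IsKoszul k s t κ) (m : Mon s t) :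
    κ (bs m) = kap (bs m) := by
  obtain ⟨-, -, hS, hv, hG, hL, -⟩ := hκ
  have kXS : ∀ i, κ (bs (XS s t i)) = 0 := by
    intro i
    apply hS
    refine Finsupp.single_mem_supported k 1 ?_
    exact ⟨rfl, rfl⟩
  have kUS : ∀ i, κ (bs (US s t i)) = 0 := by
    intro i
    apply hS
    refine Finsupp.single_mem_supported k 1 ?_
    exact ⟨rfl, rfl⟩
  have kXA : ∀ i, κ (bs (XA s t i)) = bs (XS s t i) := by
    intro i; rw [← vS_inl, ← hv, vA_inl]
  have kGA : ∀ j N, 0 < N → κ (bs (GA s t j N)) = bs (US s t j) * bs (GA s t j (N - 1)) := by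
    intro j N hN
    rw [← gammaA_single, hG _ _ hN, vS_inr, gammaA_single]
  have zmul : ∀ y : Omega k s t, (0 : Omega k s t) * y = 0 := by
    intro y
    change Finsupp.sum (N := Omega k s t) (0 : Mon s t →₀ k)
      (fun m₁ c₁ => Finsupp.sum (N := Omega k s t) y fun m₂ c₂ =>
        Finsupp.single (merge s t m₁ m₂) (c₁ * c₂ * mulCoef k s t m₁ m₂)) = 0
    exact Finsupp.sum_zero_index
  induction m using mon_ind with
  | h1 =>
    rw [hS]
    · rw [kap_apply]
      symm
      apply Finset.sum_eq_zero
      intro l _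
      rw [A_mk _ _ (fun l => by simp), if_neg (by simp)]
    · refine Finsupp.single_mem_supported k 1 ?_
      constructor
      · rfl
      · funext j; simp [mk]
  | hX i w f h ih =>
    rw [← mul_XS i h, hL _ _ (coh_mem _), kXS, ih, zmul]
    have e0 : cdeg s t (XS s t i) = 0 := by simp [cdeg, XS, cnt]
    rw [e0, pow_zero, one_smul, mul_XS i h, zero_add, kap_apply, kap_apply, bs_mul_sum]
    apply Finset.sum_congr rfl
    intro l _
    rw [A_mk _ _ h, A_mk _ _ (val_add h _ _)]
    by_cases hw : 0 < w l ∧ f l = dnv l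
    · rw [if_pos hw, if_pos ⟨by simp only [Pi.add_apply]; omega, hw.2⟩, bs_mul_smul, mul_XS i (val_upd h hw.1 _)]
    · rw [if_neg hw, if_neg, bs_mul_zero]
      rintro ⟨h3, h4⟩
      refine hw ⟨?_, h4⟩
      by_cases hl : l = .inl i
      · subst hl
        have := h (.inl i)
        rw [h4] at this
        have hh : 1 ≤ w (.inl i) := by simpa [dnv] using this
        exact hh
      · simpa [hl] using h3
  | hU j w f h h1 h2 ih =>
    rw [← mul_US_pos j h h2, hL _ _ (coh_mem _), kUS, ih, zmul]
    have e0 : cdeg s t (US s t j) = 0 := by simp [cdeg, US, cnt]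
    rw [e0, pow_zero, one_smul, mul_US_pos j h h2, zero_add, kap_apply, kap_apply, bs_mul_sum]
    apply Finset.sum_congr rfl
    intro l _
    rw [A_mk _ _ h, A_mk _ _ (val_add_upd h _ _)]
    by_cases hl : l = .inr j
    · subst hl
      have z : ¬(0 < (w + Pi.single (.inr j) 1 : Fin s ⊕ Fin t → ℕ) (.inr j) ∧
          Function.update f (.inr j) true (.inr j) = dnv (.inr j : Fin s ⊕ Fin t)) := by simp [dnv]
      rw [if_neg z]
      split_ifs with hw
      · rw [bs_mul_smul, mul_US j (val_upd h hw.1 _), if_pos (by simp [dnv]), smul_zero]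
      · exact bs_mul_zero _
    · simp only [Pi.add_apply, Pi.single_eq_of_ne hl, add_zero, Function.update_of_ne hl]
      split_ifs with hw
      · rw [bs_mul_smul]
        by_cases hb : bef (.inr j) l
        · obtain ⟨j', rfl⟩ : ∃ j', l = .inr j' := by
            rcases l with l | l
            · simp [bef] at hb
            · exact ⟨l, rfl⟩
          have hjj : j' < j := by simpa [bef] using hb
          rw [sgn_upd hb _ (by simp [h2]), mul_US j (val_upd h hw.1 _), if_neg, Finset.card_eq_one.2 ⟨j', ?_⟩,
            Function.update_comm hl]
          · simp
          · ext j''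
            simp only [Finset.mem_filter, Finset.mem_univ, true_and, Finset.mem_singleton]
            by_cases hj : j'' = j'
            · subst hj; simp [dnv, hjj]
            · simp [hj]
              intro h3
              by_contra hc
              have := h2 j'' (not_le.1 hc).le
              simp [this] at h3
          · rw [Function.update_of_ne (Ne.symm hl), h2 j le_rfl]; simp
        · rw [sgn_upd_not hb, mul_US_pos j (val_upd h hw.1 _), Function.update_comm hl]
          intro j' hj'
          rw [Function.update_of_ne]
          · exact h2 j' hj'
          · rintro rfl
            have : j' ≠ j := fun e => hl (by rw [e])
            exact hb (by simp [bef]; omega)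
      · exact bs_mul_zero _
  | hXA i w f h h1 h2 h3 ih =>
    have e1 : (bs (XA s t i) * bs (mk w f) : Omega k s t) =
        bs (mk (w + Pi.single (.inl i) 1) (Function.update f (.inl i) true)) := by
      rw [mul_XA i h, if_neg (by simp [h3]), sgn_inl_one (fun i' hi' => h3 i' hi'.le), one_smul]
    rw [← e1, hL _ _ (coh_mem _), kXA, ih]
    have e0 : cdeg s t (XA s t i) = 1 := by simp [cdeg, XA, cnt, Finset.filter_eq']
    rw [e0, pow_one, neg_smul, one_smul, mul_XS i h, e1, kap_apply, kap_apply, bs_mul_sum, ← Finset.sum_neg_distrib]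
    apply sum_split (.inl i)
    · rw [A_mk _ _ h, A_mk _ _ (val_add_upd h _ _), if_neg (by simp [h3, dnv]), if_pos (by simp [dnv]),
        sgn_upd_not (bef_irrefl _), sgn_inl_one (fun i' hi' => h3 i' hi'.le), bs_mul_zero]
      simp only [neg_zero, add_zero, one_smul, Function.update_idem]
      have : (!dnv (Sum.inl i : Fin s ⊕ Fin t)) = f (.inl i) := by simp [dnv, h3]
      rw [this, Function.update_eq_self]
    · intro l hl
      rw [A_mk _ _ h, A_mk _ _ (val_add_upd h _ _)]
      simp only [Pi.add_apply, Pi.single_eq_of_ne hl, add_zero, Function.update_of_ne hl]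
      split_ifs with hw
      · have hb : bef (.inl i) l := by
          rcases l with i' | j'
          · simp only [bef]
            by_contra hc
            have := h3 i' (not_lt.1 hc)
            rw [hw.2] at this
            simp [dnv] at this
          · simp [bef]
        rw [sgn_upd hb _ (by simp [h3]), bs_mul_smul, mul_XA i (val_upd h hw.1 _), if_neg, sgn_inl_one, one_smul,
          Function.update_comm hl, neg_smul]
        · intro i' hi'
          rw [Function.update_of_ne]
          · exact h3 i' hi'.le
          · rintro rfl
            simp [bef] at hb
            omega
        · rw [Function.update_of_ne (Ne.symm hl), h3 i le_rfl]; simp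
      · rw [bs_mul_zero, neg_zero]
  | hG j N w hN h1 h2 ih =>
    have hv0 : ∀ w : Fin s ⊕ Fin t → ℕ, Val w (fun _ => false) := fun w l => by simp
    have e1 : (bs (GA s t j N) * bs (mk w (fun _ => false)) : Omega k s t) =
        bs (mk (w + Pi.single (.inr j) N) (fun _ => false)) := by
      rw [mul_GN j N (hv0 w)]; simp [cnt, h2]
    have eG : GA s t j (N - 1) = mk (Pi.single (.inr j) (N - 1)) (fun _ => false) := by
      simp only [GA, mk, Prod.mk.injEq]
      refine ⟨?_, trivial, trivial, ?_⟩
      · funext i; simp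
      · funext j'
        by_cases hj : j' = j
        · subst hj; simp
        · simp [hj]
    have eU : mk (Pi.single (.inr j) (N - 1) + Pi.single (.inr j) 1) (Function.update (fun _ => false) (.inr j) true) =
        ((0, fun j' => decide (j' = j), fun _ => false, Pi.single j (N - 1)) : Mon s t) := by
      simp only [mk, Prod.mk.injEq]
      refine ⟨?_, ?_, ?_, ?_⟩
      · funext i; simp
      · funext j'
        by_cases hj : j' = j
        · subst hj; simp
        · simp [hj]
      · funext i; simp
      · funext j'
        by_cases hj : j' = j
        · subst hj; simp
        · simp [hj]
    rw [← e1, hL _ _ (coh_mem _), kGA j N hN, ih]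
    have e0 : cdeg s t (GA s t j N) = N := by simp [cdeg, GA, cnt, Finset.sum_pi_single']
    rw [e0, e1, kap_apply, kap_apply, eG, mul_US_pos j (hv0 _) (by simp), eU, mul_UN j (N - 1) (hv0 w), bs_mul_sum,
      Finset.smul_sum]
    apply sum_split (.inr j)
    · have z1 : ¬(0 < w (.inr j) ∧ false = dnv (.inr j : Fin s ⊕ Fin t)) := by simp [h2]
      have z2 : 0 < (w + Pi.single (.inr j) N : Fin s ⊕ Fin t → ℕ) (.inr j) ∧
          false = dnv (.inr j : Fin s ⊕ Fin t) := by simp [h2, dnv, hN]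
      rw [A_mk _ _ (hv0 _), A_mk _ _ (hv0 _), if_neg z1, if_pos z2, sgn_false (by simp),
        bs_mul_zero]
      have hN1 : N - 1 + 1 = N := by omega
      simp [cnt, h2, dnv, hN1]
    · intro l hl
      rw [A_mk _ _ (hv0 _), A_mk _ _ (hv0 _)]
      simp only [Pi.add_apply, Pi.single_eq_of_ne hl, add_zero, sgn_false (k := k) (f := fun _ : Fin s ⊕ Fin t => false) (fun _ => rfl)]
      split_ifs with hw
      · obtain ⟨j', rfl⟩ : ∃ j', l = .inr j' := by
          rcases l with l | l
          · simp [dnv] at hw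
          · exact ⟨l, rfl⟩
        have hjj : j ≠ j' := fun e => hl (by rw [e])
        rw [one_smul, one_smul, mul_GN j N (val_upd (hv0 _) hw.1 _), smul_smul]
        have c1 : cnt (fun j'' => Function.update (fun _ => false) (Sum.inr j' : Fin s ⊕ Fin t) (!dnv (Sum.inr j' : Fin s ⊕ Fin t)) (.inr j'')) = 1 := by
          simp only [cnt]
          rw [Finset.card_eq_one]
          refine ⟨j', ?_⟩
          ext x
          by_cases hx : x = j'
          · subst hx; simp [dnv]
          · simp [hx]
        have c2 : cnt (fun i'' => Function.update (fun _ => false) (Sum.inr j' : Fin s ⊕ Fin t) (!dnv (Sum.inr j' : Fin s ⊕ Fin t)) (.inl i'')) = 0 := by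
          simp [cnt]
        rw [c1, c2]
        have c3 : (-1 : k) ^ N * (-1) ^ N = 1 := by rw [← mul_pow]; simp
        simp [hjj, h2, c3]
      · rw [bs_mul_zero, smul_zero]

theorem cdeg_le (m : Mon s t) : cdeg s t m ≤ tdeg s t m := by unfold tdeg; omega

theorem bs_memNI (m : Mon s t) : (bs m : Omega k s t) ∈ OmegaNI k s t (tdeg s t m) (cdeg s t m) :=
  Finsupp.single_mem_supported k 1 ⟨rfl, rfl⟩

/-- projection to cohomological degree `i` -/
noncomputable def qq (k : Type) [Field k] (s t i : ℕ) : Omega k s t →ₗ[k] Omega k s t :=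
  lin fun m => if cdeg s t m = i then bs m else 0

theorem qq_bs (i : ℕ) (m : Mon s t) : qq k s t i (bs m) = if cdeg s t m = i then bs m else 0 := lin_bs _ _

theorem qq_self (i n j : ℕ) {x : Omega k s t} (hx : x ∈ OmegaNI k s t n i) :
    qq k s t j x = if i = j then x else 0 := by
  have hsp : OmegaNI k s t n i = Submodule.span k (bs '' {m | tdeg s t m = n ∧ cdeg s t m = i}) :=
    Finsupp.supported_eq_span_single k {m | tdeg s t m = n ∧ cdeg s t m = i}
  rw [hsp] at hx
  have := LinearMap.eqOn_span (f := qq k s t j) (g := if i = j then LinearMap.id else 0) (s := bs '' {m | tdeg s t m = n ∧ cdeg s t m = i}) ?_ hx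
  · rw [this]; split_ifs <;> simp
  · rintro _ ⟨m, hm, rfl⟩
    rw [qq_bs, hm.2]
    split_ifs <;> simp

theorem Ksub_iff {κ : Omega k s t →ₗ[k] Omega k s t} (hκ : IsKoszul k s t κ) (n : ℕ) (x : Omega k s t) :
    x ∈ Ksub k s t κ n ↔ x ∈ OmegaTot k s t n ∧ κ x = 0 := by
  constructor
  · intro hx
    have : Ksub k s t κ n ≤ OmegaTot k s t n ⊓ LinearMap.ker κ := by
      refine iSup_le fun i => inf_le_inf_right _ ?_
      exact Finsupp.supported_mono fun m hm => hm.1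
    exact this hx
  · rintro ⟨hx, hk⟩
    have hTs : OmegaTot k s t n = Submodule.span k (bs '' {m | tdeg s t m = n}) :=
      Finsupp.supported_eq_span_single k {m | tdeg s t m = n}
    have e1 : ∀ i, κ ∘ₗ qq k s t (i + 1) = qq k s t i ∘ₗ κ := by
      intro i
      apply lin_ext
      intro m
      rw [LinearMap.comp_apply, LinearMap.comp_apply, qq_bs]
      rcases hc : cdeg s t m with _ | c
      · have h0 : κ (bs m) = 0 := hκ.2.1 (tdeg s t m) _ (hc ▸ bs_memNI m)
        rw [h0]; simp
      · have h0 : κ (bs m) ∈ _ := hκ.1 (tdeg s t m) c _ (hc ▸ bs_memNI m)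
        rw [qq_self _ _ _ h0]
        by_cases h : c = i
        · simp [h]
        · simp [h]
    have e2 : κ ∘ₗ qq k s t 0 = 0 := by
      apply lin_ext
      intro m
      rw [LinearMap.comp_apply, qq_bs]
      split_ifs with hc
      · exact hκ.2.1 (tdeg s t m) _ (hc ▸ bs_memNI m)
      · simp
    have e3 : ∀ i, κ (qq k s t i x) = 0 := by
      rintro (_ | i)
      · exact LinearMap.congr_fun e2 x
      · have := LinearMap.congr_fun (e1 i) x
        rw [LinearMap.comp_apply, LinearMap.comp_apply, hk, map_zero] at this
        exact this
    rw [hTs] at hx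
    have e4 : ∀ i, qq k s t i x ∈ OmegaNI k s t n i := by
      intro i
      have : Submodule.span k (bs '' {m | tdeg s t m = n}) ≤ (OmegaNI k s t n i).comap (qq k s t i) := by
        rw [Submodule.span_le]
        rintro _ ⟨m, hm, rfl⟩
        simp only [SetLike.mem_coe, Submodule.mem_comap, qq_bs]
        split_ifs with hc
        · have := bs_memNI (k := k) m
          rw [hc, (show tdeg s t m = n from hm)] at this
          exact this
        · exact zero_mem _
      exact this hx
    have e5 : x = ∑ i ∈ Finset.range (n + 1), qq k s t i x := by
      have := LinearMap.eqOn_span (f := LinearMap.id) (g := ∑ i ∈ Finset.range (n + 1), qq k s t i)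
        (s := bs '' {m | tdeg s t m = n}) ?_ hx
      · simpa [LinearMap.sum_apply] using this
      · rintro _ ⟨m, hm, rfl⟩
        have h1 := cdeg_le m
        rw [(show tdeg s t m = n from hm)] at h1
        simp only [LinearMap.id_apply, LinearMap.sum_apply, qq_bs]
        rw [Finset.sum_ite_eq, if_pos (by simp; omega)]
    rw [e5]
    refine Submodule.sum_mem _ fun i _ => ?_
    exact Submodule.mem_iSup_of_mem i ⟨e4 i, e3 i⟩

theorem Ph_mk {p : ℕ} {w : Fin s ⊕ Fin t → ℕ} {f} (h : Val w f) : Ph p (mk w f) = mk (fun l => p * w l) f := by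
  rw [Ph, wt_mk h, fl_mk]

theorem val_p {p : ℕ} (hp : 0 < p) {w : Fin s ⊕ Fin t → ℕ} {f} (h : Val w f) : Val (fun l => p * w l) f := by
  intro l
  have := h l
  nlinarith

theorem p_add (p : ℕ) (w : Fin s ⊕ Fin t → ℕ) (l N) :
    (fun l' => p * (w + Pi.single l N : Fin s ⊕ Fin t → ℕ) l') = (fun l => p * w l) + Pi.single l (p * N) := by
  funext l'
  by_cases h : l' = l
  · subst h; simp [mul_add]
  · simp [h]

theorem GA_mk (j : Fin t) (N : ℕ) : GA s t j N = mk (Pi.single (.inr j) N) (fun _ => false) := by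
  simp only [GA, mk, Prod.mk.injEq]
  refine ⟨?_, trivial, trivial, ?_⟩
  · funext i; simp
  · funext j'
    by_cases hj : j' = j
    · subst hj; simp
    · simp [hj]

theorem GA_mul (j : Fin t) (a b : ℕ) :
    (bs (GA s t j a) * bs (GA s t j b) : Omega k s t) = ((a + b).choose a : k) • bs (GA s t j (a + b)) := by
  rw [GA_mk j b, mul_GN j a (fun l => by simp), ← Pi.single_add, GA_mk, add_comm b a]
  simp [cnt]

theorem choose_p (p : ℕ) [Fact p.Prime] [CharP k p] (n m : ℕ) :
    (((p * n).choose (p * m) : ℕ) : k) = (n.choose m : ℕ) := by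
  have h := Choose.choose_modEq_choose_mod_mul_choose_div_nat (p := p) (n := p * n) (k := p * m)
  have hp : 0 < p := (Fact.out : p.Prime).pos
  rw [Nat.mul_mod_right, Nat.mul_mod_right, Nat.mul_div_cancel_left _ hp, Nat.mul_div_cancel_left _ hp,
    Nat.choose_zero_right, one_mul] at h
  exact (CharP.natCast_eq_natCast k p).2 h

theorem choose_p1 (p : ℕ) [Fact p.Prime] [CharP k p] (n : ℕ) :
    (((p - 1 + p * n).choose (p - 1) : ℕ) : k) = 1 := by
  have h := Choose.choose_modEq_choose_mod_mul_choose_div_nat (p := p) (n := p - 1 + p * n) (k := p - 1)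
  have hp : 0 < p := (Fact.out : p.Prime).pos
  rw [Nat.add_mul_mod_self_left, Nat.mod_eq_of_lt (by omega : p - 1 < p), Nat.div_eq_of_lt (by omega : p - 1 < p),
    Nat.choose_self, Nat.choose_zero_right] at h
  have := (CharP.natCast_eq_natCast k p).2 h
  simpa using this

theorem choose_pe (p : ℕ) [Fact p.Prime] [CharP k p] (e r : ℕ) (hr : ¬ p ∣ r) :
    (((p ^ e * r).choose (p ^ e) : ℕ) : k) ≠ 0 := by
  induction e with
  | zero =>
    simp only [pow_zero, one_mul, Nat.choose_one_right]
    rwa [Ne, CharP.cast_eq_zero_iff k p]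
  | succ e ih =>
    rw [pow_succ', mul_assoc, choose_p]
    exact ih

theorem th_GA {p : ℕ} [Fact p.Prime] [CharP k p] {θ : Omega k s t → Omega k s t} (hθ : IsTheta k s t p θ)
    (j : Fin t) (N : ℕ) : θ (bs (GA s t j N)) = bs (GA s t j (p * N)) := by
  obtain ⟨ha, hs, hm, h1, hXS, hXA, hUS, hGA⟩ := hθ
  have hp : 0 < p := (Fact.out : p.Prime).pos
  induction N using Nat.strong_induction_on with
  | _ N ih =>
  rcases Nat.eq_zero_or_pos N with rfl | hN
  · have e : (bs (GA s t j 0) : Omega k s t) = 1 := by simp [GA]; rfl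
    rw [mul_zero, e, h1]
  obtain ⟨e, r, hr, hNr⟩ := Nat.exists_eq_pow_mul_and_not_dvd hN.ne' p (Fact.out : p.Prime).ne_one
  have hr0 : 0 < r := Nat.pos_of_ne_zero (by rintro rfl; simp at hr)
  have hle : p ^ e ≤ N := by rw [hNr]; exact Nat.le_mul_of_pos_right _ hr0
  have hpe : 0 < p ^ e := by positivity
  have hmul := GA_mul (k := k) (s := s) j (p ^ e) (N - p ^ e)
  rw [Nat.add_sub_cancel' hle] at hmul
  have h2 := congrArg θ hmul
  have h3 : θ (bs (GA s t j (p ^ e))) = bs (GA s t j (p ^ (e + 1))) := hGA j e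
  rw [hm, hs, ih (N - p ^ e) (by omega), h3, pow_succ', GA_mul, ← mul_add, Nat.add_sub_cancel' hle, choose_p] at h2
  have hc : ((N.choose (p ^ e) : ℕ) : k) ≠ 0 := by
    have := choose_pe (k := k) p e r hr
    rwa [← hNr] at this
  have hf : ((N.choose (p ^ e) : ℕ) : k) ^ p = ((N.choose (p ^ e) : ℕ) : k) := by
    have := map_natCast (frobenius k p) (N.choose (p ^ e))
    rwa [frobenius_def] at this
  rw [hf] at h2
  exact (smul_right_injective _ hc h2).symm

theorem th_bs {p : ℕ} [Fact p.Prime] [CharP k p] (hp2 : 2 < p) {θ : Omega k s t → Omega k s t}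
    (hθ : IsTheta k s t p θ) (m : Mon s t) : θ (bs m) = bs (Ph p m) := by
  have hG := th_GA hθ
  obtain ⟨ha, hs, hm, h1, hXS, hXA, hUS, hGA⟩ := hθ
  have hp : 0 < p := (Fact.out : p.Prime).pos
  have hp1 : p - 1 + 1 = p := by omega
  induction m using mon_ind with
  | h1 =>
    have e : (mk 0 (fun _ => false) : Mon s t) = unitMon s t := by
      simp [mk, unitMon]; constructor <;> rfl
    have e' : Ph p (mk 0 (fun _ => false) : Mon s t) = unitMon s t := by
      rw [Ph_mk (fun l => by simp), ← e]; simp; rfl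
    rw [e', e]; exact h1
  | hX i w f h ih =>
    have hx : θ (bs (XS s t i)) = _ := hXS i
    rw [← mul_XS i h, hm, ih, hx, Ph_mk h, Ph_mk (val_add h _ _), p_add, mul_one]
    exact mul_XN i p (val_p hp h)
  | hU j w f h h0 h2 ih =>
    have hx : θ (bs (US s t j)) = _ := hUS j
    rw [← mul_US_pos j h h2, hm, ih, hx, Ph_mk h, Ph_mk (val_add_upd h _ _), p_add, mul_one]
    refine (mul_UN j (p - 1) (val_p hp h)).trans ?_
    have he : Even (p - 1) := (Nat.Prime.even_sub_one (Fact.out : p.Prime) (by omega))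
    rw [if_neg (by simp [h2 j le_rfl]), choose_p1, Finset.card_eq_zero.2, hp1, ← mul_add, add_zero,
      pow_mul, he.neg_one_pow, one_pow, mul_one, one_smul]
    rw [Finset.filter_eq_empty_iff]
    rintro j' - ⟨h4, h5⟩
    rw [h2 j' h5.le] at h4
    exact absurd h4 (by simp)
  | hXA i w f h h0 h2 h3 ih =>
    have hx : θ (bs (XA s t i)) = _ := hXA i
    have e1 : (bs (XA s t i) * bs (mk w f) : Omega k s t) =
        bs (mk (w + Pi.single (.inl i) 1) (Function.update f (.inl i) true)) := by
      rw [mul_XA i h, if_neg (by simp [h3]), sgn_inl_one (fun i' hi' => h3 i' hi'.le), one_smul]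
    rw [← e1, hm, ih, hx, Ph_mk h, Ph_mk (val_add_upd h _ _), p_add, mul_one]
    refine (mul_XAN i (p - 1) (val_p hp h)).trans ?_
    rw [if_neg (by simp [h3 i le_rfl]), Finset.card_eq_zero.2, hp1, pow_zero, one_smul]
    rw [Finset.filter_eq_empty_iff]
    rintro j' - ⟨h4, h5⟩
    rw [h3 j' h5.le] at h4
    exact absurd h4 (by simp)
  | hG j N w hN h0 h2 ih =>
    have hv0 : ∀ w : Fin s ⊕ Fin t → ℕ, Val w (fun _ => false) := fun w l => by simp
    have e1 : ∀ (N : ℕ) (w : Fin s ⊕ Fin t → ℕ), w (.inr j) = 0 →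
        (bs (GA s t j N) * bs (mk w (fun _ => false)) : Omega k s t) =
        bs (mk (w + Pi.single (.inr j) N) (fun _ => false)) := by
      intro N w h2
      rw [mul_GN j N (hv0 w)]; simp [cnt, h2]
    rw [← e1 N w h2, hm, hG, ih, Ph_mk (hv0 _), e1 _ _ (by simp [h2]), ← p_add, Ph_mk (hv0 _)]

end aux

/-- the super Cartier isomorphism for the Koszul kernel subcomplex. -/
theorem statement9 (k : Type) [Field k] (p : ℕ) [Fact p.Prime] [CharP k p] [ExpChar k p]
    [PerfectRing k p] (hp2 : 2 < p) (s t : ℕ)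
    (d κ : Omega k s t →ₗ[k] Omega k s t)
    (hd : IsDeRham k s t d) (hκ : IsKoszul k s t κ)
    (θ : Omega k s t → Omega k s t) (hθ : IsTheta k s t p θ) :
    ∀ n : ℕ,
      -- the de Rham differential restricts to a differential on `K_{pn}(V)`
      (∀ x ∈ Ksub k s t κ (p * n), d x ∈ Ksub k s t κ (p * n)) ∧
      -- `θ` maps `K_n(V)` into `ker d ∩ K_{pn}(V)`
      (∀ z ∈ Ksub k s t κ n, θ z ∈ Ksub k s t κ (p * n) ∧ d (θ z) = 0) ∧
      -- the induced map `K_n(V) → H^•(K_{pn}(V), d)` is injective …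
      (∀ z ∈ Ksub k s t κ n, ∀ w ∈ Ksub k s t κ n,
        (∃ y ∈ Ksub k s t κ (p * n), θ z - θ w = d y) → z = w) ∧
      -- … and surjective
      (∀ u ∈ Ksub k s t κ (p * n), d u = 0 →
        ∃ z ∈ Ksub k s t κ n, ∃ y ∈ Ksub k s t κ (p * n), θ z - u = d y) ∧
      -- the inclusion `K_{pn}(V) ⊆ Ω_{pn}(V)` induces an injection
      -- `H^•(K_{pn}(V), d) → H^•(Ω_{pn}(V), d)`
      (∀ u ∈ Ksub k s t κ (p * n), d u = 0 → u ∈ LinearMap.range d →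
        ∃ y ∈ Ksub k s t κ (p * n), u = d y) := by
  have e1 : d = dR := lin_ext (d_formula hd)
  have e2 : κ = kap := lin_ext (k_formula hκ)
  subst e1 e2
  exact main_aux hθ.1 hθ.2.1 (th_bs hp2 hθ) (Ksub k s t kap) (Ksub_iff hκ)

end Stmt9
end
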